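/- arXiv:1206.1996 — 11 statements merged into one kernel-verified Lean document; each statement's English description precedes it below -/
import Mathlib

section
/- Let k ≥ 7 and 3 ≤ r ≤ k - 1 - ⌈log₂ k⌉. Then there exists n₀ (depending only on r) such that for all n > n₀, m(n, r, k) ≤ n^(r - 1/2^(r-1)). -/
/-!
A batch code cannot contain many edges on few vertices, whereas a dense `r`-uniform hypergraph
contains the complete `r`-partite hypergraph `K(2,…,2)` by a theorem of Erdős.

Write `q = r - 1`. `exists_box` is Erdős's theorem for a set `A` of `r`-tuples over a set of `n`
vertices: if `|A| ≥ 2 n^(r - 1/2^q)`, there are tuples `x, y` that differ in every coordinate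
such that all `2^r` mixtures of `x` and `y` lie in `A`. It is proved by induction on `r`: by
Cauchy–Schwarz and averaging, some two distinct vertices `a ≠ b` have at least
`|A|² / (2 n^(r+1))` common completions to a tuple of `A`, and the induction hypothesis applies to
these completions. To stay in `ℕ`, the density assumption is raised to the power `2^q`.
Applied to the orderings of the edges (at least two per edge, which supplies the factor `2`), it
shows that `|F| > n^(r - 1/2^q)` forces a copy of `K(2,…,2)` in `F`.

Doubling only `t ≤ r` of the `r` classes gives `2^t` edges on `r + t` vertices. For
`t = min r ⌈log₂ k⌉` one has `r + t < 2^t` and `r + t + 1 ≤ k`, so that `r + t + 1` of these edges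
violate the batch code property.
-/

open Finset

/-- The combinatorial-batch-code property: `F` is a simple `r`-uniform hypergraph on
vertex set `Fin n` in which every collection of `i` distinct edges spans at least `i`
vertices, for all `1 ≤ i ≤ k`. -/
def IsBatchCode (n r k : ℕ) (F : Finset (Finset (Fin n))) : Prop :=
  (∀ e ∈ F, e.card = r) ∧
    ∀ i : ℕ, 1 ≤ i → i ≤ k → ∀ S ⊆ F, S.card = i → i ≤ (S.sup id).card

/-- `m n r k` is the maximum number of edges of a simple `r`-uniform hypergraph on `n`
vertices in which every collection of `i` distinct edges spans at least `i` vertices,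
for all `1 ≤ i ≤ k`. -/
noncomputable def m (n r k : ℕ) : ℕ :=
  sSup {c : ℕ | ∃ F : Finset (Finset (Fin n)), IsBatchCode n r k F ∧ F.card = c}

/-- Cauchy–Schwarz and averaging: in a bipartite incidence relation between `Y` and `V` with at
least `2|Y|` incidences, two distinct elements of `V` have many common neighbours in `Y`. -/
lemma exists_pair {Y V : Type*} [Fintype Y] [Fintype V] [DecidableEq Y] [DecidableEq V]
    (B : Finset (V × Y)) (hpos : 0 < B.card) (hB : 2 * Fintype.card Y ≤ B.card) :
    ∃ a b : V, a ≠ b ∧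
      B.card ^ 2 ≤ 2 * Fintype.card Y * Fintype.card V ^ 2 *
        (univ.filter fun y => (a, y) ∈ B ∧ (b, y) ∈ B).card := by
  classical
  by_contra hcon
  push Not at hcon
  set N := B.card with hN
  set D : Y → Finset V := fun y => univ.filter fun v => (v, y) ∈ B with hD
  have hsum : ∑ y, (D y).card = N := by
    rw [hN, Finset.card_eq_sum_card_fiberwise (f := Prod.snd) (t := univ) (by simp)]
    refine Finset.sum_congr rfl fun y _ => ?_
    refine Finset.card_bij (fun v _ => (v, y)) ?_ ?_ ?_
    · simp [hD]
    · simp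
    · rintro ⟨v, y'⟩ h
      simp only [mem_filter] at h
      obtain ⟨h, rfl⟩ := h
      exact ⟨v, by simpa [hD] using h, rfl⟩
  have hcs : N ^ 2 ≤ Fintype.card Y * ∑ y, (D y).card ^ 2 := by
    rw [← hsum]
    simpa using sq_sum_le_card_mul_sum_sq (s := (univ : Finset Y)) (f := fun y => (D y).card)
  -- Ordered pairs of distinct elements, counted over each `y`, and then over each pair.
  have hdc : ∑ y, (D y).offDiag.card =
      ∑ p ∈ (univ : Finset V).offDiag,
        (univ.filter fun y => (p.1, y) ∈ B ∧ (p.2, y) ∈ B).card := by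
    have := Finset.sum_card_bipartiteAbove_eq_sum_card_bipartiteBelow
      (s := (univ : Finset Y)) (t := (univ : Finset V).offDiag)
      (fun y p => (p.1, y) ∈ B ∧ (p.2, y) ∈ B)
    simp only [Finset.bipartiteAbove, Finset.bipartiteBelow] at this
    rw [← this]
    refine Finset.sum_congr rfl fun y _ => congrArg _ ?_
    ext p
    simp [hD, mem_offDiag]
    tauto
  have hsq : ∑ y, (D y).card ^ 2 = ∑ y, (D y).offDiag.card + N := by
    rw [← hsum, ← Finset.sum_add_distrib]
    refine Finset.sum_congr rfl fun y _ => ?_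
    rw [offDiag_card, sq]
    have := Nat.le_mul_self (D y).card
    omega
  set O := ∑ y, (D y).offDiag.card with hO
  have h1 : N ^ 2 ≤ 2 * Fintype.card Y * O := by
    rw [hsq] at hcs
    nlinarith [Nat.mul_le_mul_right N hB]
  have h2 : 2 * Fintype.card Y * Fintype.card V ^ 2 * O ≤
      (univ : Finset V).offDiag.card * (N ^ 2 - 1) := by
    rw [hdc, Finset.mul_sum, ← smul_eq_mul (a := (univ : Finset V).offDiag.card)]
    refine Finset.sum_le_card_nsmul _ _ _ fun p hp => ?_
    have := hcon p.1 p.2 (by simpa using hp)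
    omega
  have h3 : (univ : Finset V).offDiag.card ≤ Fintype.card V ^ 2 := by
    rw [offDiag_card, sq]; simp
  obtain ⟨⟨v, -⟩, -⟩ := Finset.card_pos.mp hpos
  have hV : 0 < Fintype.card V ^ 2 := pow_pos (Fintype.card_pos_iff.mpr ⟨v⟩) 2
  have h4 : Fintype.card V ^ 2 * N ^ 2 ≤ Fintype.card V ^ 2 * (N ^ 2 - 1) :=
    calc Fintype.card V ^ 2 * N ^ 2
        ≤ Fintype.card V ^ 2 * (2 * Fintype.card Y * O) := Nat.mul_le_mul_left _ h1
      _ = 2 * Fintype.card Y * Fintype.card V ^ 2 * O := by ring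
      _ ≤ _ := h2.trans (Nat.mul_le_mul_right _ h3)
  have h5 := Nat.le_of_mul_le_mul_left h4 hV
  have : 0 < N ^ 2 := pow_pos hpos 2
  omega

/-- Erdős's theorem for sets of `(q+1)`-tuples: the hypothesis says
`|A| ≥ 2 n^(q + 1 - 1/2^q)`, with `n = |V|`. -/
lemma exists_box {V : Type*} [Fintype V] [DecidableEq V] [Nonempty V] (q : ℕ) :
    ∀ A : Finset (Fin (q + 1) → V),
      (2 * Fintype.card V ^ (q + 1)) ^ 2 ^ q ≤ A.card ^ 2 ^ q * Fintype.card V →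
      ∃ x y : Fin (q + 1) → V, (∀ i, x i ≠ y i) ∧
        ∀ s : Finset (Fin (q + 1)), s.piecewise y x ∈ A := by
  have hn : 0 < Fintype.card V := Fintype.card_pos
  set n := Fintype.card V with hnV
  induction q with
  | zero =>
    intro A hA
    have : Subsingleton (Fin (0 + 1)) := inferInstanceAs (Subsingleton (Fin 1))
    have h2 : 1 < A.card := by
      simp only [zero_add, pow_one, pow_zero] at hA
      exact Nat.le_of_mul_le_mul_right hA hn
    obtain ⟨x, hx, y, hy, hxy⟩ := Finset.one_lt_card.mp h2
    refine ⟨x, y, fun i hi => hxy (funext fun j => ?_), fun s => ?_⟩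
    · rwa [Subsingleton.elim j i]
    · by_cases h : (0 : Fin 1) ∈ s
      · convert hy using 1
        funext j
        rw [Subsingleton.elim j 0, piecewise_eq_of_mem _ _ _ h]
      · convert hx using 1
        funext j
        rw [Subsingleton.elim j 0, piecewise_eq_of_notMem _ _ _ h]
  | succ q ih =>
    intro A hA
    set e := Fin.consEquiv (fun _ : Fin (q + 2) => V) with he
    set B : Finset (V × (Fin (q + 1) → V)) := univ.filter fun p => Fin.cons p.1 p.2 ∈ A with hBdef
    have hBA : B.card = A.card := by
      refine Finset.card_bij (fun p _ => e p) ?_ (fun _ _ _ _ h => e.injective h) ?_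
      · rintro ⟨v, y⟩ h
        exact (mem_filter.mp h).2
      · intro z hz
        refine ⟨e.symm z, ?_, e.apply_symm_apply z⟩
        have : e (e.symm z) ∈ A := by rwa [e.apply_symm_apply]
        exact mem_filter.mpr ⟨mem_univ _, this⟩
    have hcardY : Fintype.card (Fin (q + 1) → V) = n ^ (q + 1) := by simp [hnV]
    -- Otherwise `|A|` is too small for `hA`, since `n ≤ n ^ 2 ^ (q + 1)`.
    have hbig : 2 * n ^ (q + 1) ≤ A.card := by
      by_contra hlt
      push Not at hlt
      have hne : 2 ^ (q + 1) ≠ 0 := by positivity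
      have h1 : A.card ^ 2 ^ (q + 1) * n < (2 * n ^ (q + 1)) ^ 2 ^ (q + 1) * n :=
        Nat.mul_lt_mul_of_pos_right (Nat.pow_lt_pow_left hlt hne) hn
      have h2 : (2 * n ^ (q + 1)) ^ 2 ^ (q + 1) * n ≤ (2 * n ^ (q + 1 + 1)) ^ 2 ^ (q + 1) := by
        rw [pow_succ n (q + 1), ← mul_assoc, mul_pow _ n]
        exact Nat.mul_le_mul_left _ (Nat.le_self_pow hne n)
      omega
    have hApos : 0 < A.card := lt_of_lt_of_le (by positivity) hbig
    obtain ⟨a, b, hab, hM⟩ := exists_pair B (by omega) (by rw [hcardY, hBA]; exact hbig)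
    rw [hcardY, hBA, ← hnV] at hM
    set A' := univ.filter fun y => (a, y) ∈ B ∧ (b, y) ∈ B with hA'
    have key : (2 * n ^ (q + 1)) ^ 2 ^ q ≤ A'.card ^ 2 ^ q * n := by
      have hp : 0 < (2 * n ^ (q + 1) * n ^ 2) ^ 2 ^ q := by positivity
      refine Nat.le_of_mul_le_mul_left ?_ hp
      calc (2 * n ^ (q + 1) * n ^ 2) ^ 2 ^ q * (2 * n ^ (q + 1)) ^ 2 ^ q
          = (2 * n ^ (q + 1 + 1)) ^ 2 ^ (q + 1) := by
            rw [pow_succ 2 q, mul_comm (2 ^ q) 2, pow_mul _ 2, ← mul_pow]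
            ring_nf
        _ ≤ A.card ^ 2 ^ (q + 1) * n := hA
        _ = (A.card ^ 2) ^ 2 ^ q * n := by
            rw [pow_succ 2 q, mul_comm (2 ^ q) 2, pow_mul _ 2]
        _ ≤ (2 * n ^ (q + 1) * n ^ 2 * A'.card) ^ 2 ^ q * n :=
            Nat.mul_le_mul_right _ (Nat.pow_le_pow_left hM _)
        _ = _ := by rw [mul_pow _ A'.card, mul_assoc]
    obtain ⟨x, y, hxy, hbox⟩ := ih A' key
    refine ⟨Fin.cons a x, Fin.cons b y, fun i => ?_, fun s => ?_⟩
    · refine Fin.cases ?_ (fun j => ?_) i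
      · simpa using hab
      · simpa using hxy j
    · have hs := hbox (univ.filter fun j => j.succ ∈ s)
      simp only [hA', hBdef, mem_filter, mem_univ, true_and] at hs
      by_cases h0 : (0 : Fin (q + 2)) ∈ s
      · convert hs.2 using 1
        funext i
        refine Fin.cases ?_ (fun j => ?_) i
        · simp [h0]
        · simp [Finset.piecewise]
      · convert hs.1 using 1
        funext i
        refine Fin.cases ?_ (fun j => ?_) i
        · simp [h0]
        · simp [Finset.piecewise]

/-- An edge set with all edges of size `r ≥ 2` has at least two orderings per edge. -/
lemma two_mul_card_le {n r : ℕ} (hr : 2 ≤ r) (F : Finset (Finset (Fin n)))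
    (hF : ∀ e ∈ F, e.card = r) :
    2 * F.card ≤ (univ.filter fun x : Fin r → Fin n => univ.image x ∈ F).card := by
  classical
  -- The increasing and the decreasing ordering of an edge.
  have him : ∀ e : Finset (Fin n), ∀ h : e.card = r, univ.image (e.orderEmbOfFin h) = e := by
    intro e h
    exact Finset.image_orderEmbOfFin_univ e h
  have hrev : ∀ e : Finset (Fin n), ∀ h : e.card = r,
      univ.image (fun i : Fin r => e.orderEmbOfFin h i.rev) = e := by
    intro e h
    conv_rhs => rw [← him e h]
    ext v
    simp only [mem_image, mem_univ, true_and]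
    exact ⟨fun ⟨i, hi⟩ => ⟨i.rev, hi⟩, fun ⟨i, hi⟩ => ⟨i.rev, by rwa [Fin.rev_rev]⟩⟩
  set A := univ.filter fun x : Fin r → Fin n => univ.image x ∈ F with hA
  rw [mul_comm, Finset.card_eq_sum_card_fiberwise (s := A) (f := fun x => univ.image x) (t := F)
    (fun x hx => by simpa [hA] using hx), ← smul_eq_mul]
  refine Finset.card_nsmul_le_sum _ _ _ fun e he => ?_
  have h := hF e he
  refine Finset.one_lt_card.mpr ⟨e.orderEmbOfFin h, ?_, fun i : Fin r => e.orderEmbOfFin h i.rev, ?_, ?_⟩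
  · simp only [hA, mem_filter, mem_univ, him e h, he, and_self]
  · simp only [hA, mem_filter, mem_univ, hrev e h, he, and_self]
  · intro heq
    have h0 := (e.orderEmbOfFin h).injective (congrFun heq ⟨0, by omega⟩)
    have := congrArg Fin.val h0
    simp only [Fin.val_rev] at this
    omega

/-- A copy of `K(2,…,2)` in a uniform hypergraph yields, by doubling only `t` classes, `2^t`
edges on at most `r + t` vertices. -/
lemma dense_subgraph {n r t : ℕ} (ht : t ≤ r) (F : Finset (Finset (Fin n)))
    (hF : ∀ e ∈ F, e.card = r) (x y : Fin r → Fin n) (hxy : ∀ i, x i ≠ y i)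
    (hbox : ∀ s : Finset (Fin r), univ.image (s.piecewise y x) ∈ F) :
    ∃ E ⊆ F, E.card = 2 ^ t ∧ (E.sup id).card ≤ r + t := by
  classical
  obtain ⟨T, -, hT⟩ := Finset.exists_subset_card_eq (s := (univ : Finset (Fin r))) (n := t)
    (by simpa using ht)
  have hinj : ∀ s : Finset (Fin r), Function.Injective (s.piecewise y x) := by
    intro s
    have := hF _ (hbox s)
    have h := (Finset.card_image_iff (s := univ) (f := s.piecewise y x)).mp (by simpa using this)
    exact fun i j hij => h (by simp) (by simp) hij
  -- An edge that contained both `x i` and `y i` would become too small on exchanging them.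
  have hsep : ∀ s s' : Finset (Fin r), ∀ i ∈ s, i ∉ s' →
      univ.image (s.piecewise y x) ≠ univ.image (s'.piecewise y x) := by
    intro s s' i hi hi' h
    have hy : y i ∈ univ.image (s'.piecewise y x) := by
      rw [← h]
      exact Finset.mem_image.mpr ⟨i, mem_univ _, piecewise_eq_of_mem _ _ _ hi⟩
    obtain ⟨j, -, hj⟩ := Finset.mem_image.mp hy
    have hji : j ≠ i := by
      rintro rfl
      rw [piecewise_eq_of_notMem _ _ _ hi'] at hj
      exact hxy _ hj
    refine hji (hinj (insert i s') ?_)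
    rw [piecewise_eq_of_mem _ _ _ (mem_insert_self i s'), piecewise_insert_of_ne _ _ _ hji, hj]
  refine ⟨T.powerset.image fun s => univ.image (s.piecewise y x), ?_, ?_, ?_⟩
  · intro e he
    obtain ⟨s, -, rfl⟩ := Finset.mem_image.mp he
    exact hbox s
  · rw [Finset.card_image_of_injective, card_powerset, hT]
    intro s s' h
    ext i
    by_contra hne
    by_cases hi : i ∈ s
    · exact hsep s s' i hi (by tauto) h
    · exact hsep s' s i (by tauto) hi h.symm
  · have hsub : (T.powerset.image fun s => univ.image (s.piecewise y x)).sup id ⊆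
        univ.image x ∪ T.image y := by
      refine Finset.sup_le fun e he => ?_
      obtain ⟨s, hs, rfl⟩ := Finset.mem_image.mp he
      intro v hv
      obtain ⟨i, -, rfl⟩ := Finset.mem_image.mp hv
      by_cases hi : i ∈ s
      · rw [piecewise_eq_of_mem _ _ _ hi]
        exact mem_union_right _ (mem_image_of_mem _ (mem_powerset.mp hs hi))
      · rw [piecewise_eq_of_notMem _ _ _ hi]
        exact mem_union_left _ (mem_image_of_mem _ (mem_univ _))
    calc _ ≤ _ := card_le_card hsub
      _ ≤ _ := card_union_le _ _
      _ ≤ r + t := by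
        refine add_le_add (card_image_le.trans (by simp)) (card_image_le.trans hT.le)

/-- The choice `t = min r ⌈log₂ k⌉` of the number of doubled classes. -/
lemma exists_doubling {r k : ℕ} (hr : 3 ≤ r) (hrk : r ≤ k - 1 - Nat.clog 2 k) :
    ∃ t ≤ r, r + t + 1 ≤ 2 ^ t ∧ r + t + 1 ≤ k := by
  by_cases h : Nat.clog 2 k ≤ r
  · refine ⟨Nat.clog 2 k, h, ?_, by omega⟩
    have := Nat.le_pow_clog (b := 2) (by norm_num) k
    omega
  · refine ⟨r, le_rfl, ?_, by omega⟩
    clear h hrk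
    induction r, hr using Nat.le_induction with
    | base => norm_num
    | succ r hr ih => rw [pow_succ]; omega

/-- For `k ≥ 7` and `3 ≤ r ≤ k - 1 - ⌈log₂ k⌉`, there exists `n₀` (depending only on `r`)
such that for all `n > n₀`, `m(n, r, k) ≤ n ^ (r - 1/2^(r-1))`. -/
theorem statement0 (r : ℕ) (hr : 3 ≤ r) :
    ∃ n₀ : ℕ, ∀ k : ℕ, 7 ≤ k → r ≤ k - 1 - Nat.clog 2 k →
      ∀ n : ℕ, n₀ < n →
        (m n r k : ℝ) ≤ (n : ℝ) ^ ((r : ℝ) - 1 / 2 ^ (r - 1)) := by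
  refine ⟨0, fun k _ hrk n hn => ?_⟩
  set R : ℝ := (n : ℝ) ^ ((r : ℝ) - 1 / 2 ^ (r - 1)) with hR
  have hR0 : 0 ≤ R := by positivity
  have hnR : (0 : ℝ) < n := by exact_mod_cast hn
  rw [← Nat.le_floor_iff hR0]
  refine csSup_le' ?_
  rintro c ⟨F, ⟨hF, hcode⟩, rfl⟩
  rw [Nat.le_floor_iff hR0]
  by_contra hlt
  push Not at hlt
  obtain ⟨q, rfl⟩ : ∃ q, r = q + 1 := ⟨r - 1, by omega⟩
  have : Nonempty (Fin n) := ⟨⟨0, hn⟩⟩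
  set A := univ.filter fun x : Fin (q + 1) → Fin n => univ.image x ∈ F with hA
  have hFA : 2 * F.card ≤ A.card := two_mul_card_le (by omega) F hF
  have hRpow : R ^ 2 ^ q * n = ((n : ℝ) ^ (q + 1)) ^ 2 ^ q := by
    have hexp : (((q + 1 : ℕ) : ℝ) - 1 / 2 ^ (q + 1 - 1)) * ((2 ^ q : ℕ) : ℝ) + 1
        = (((q + 1) * 2 ^ q : ℕ) : ℝ) := by
      rw [Nat.add_sub_cancel]
      push_cast
      field_simp
      ring
    rw [hR, ← Real.rpow_natCast _ (2 ^ q), ← Real.rpow_mul hnR.le, ← pow_mul,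
      ← Real.rpow_natCast _ ((q + 1) * 2 ^ q), ← hexp, Real.rpow_add hnR, Real.rpow_one]
  have hdense : (2 * Fintype.card (Fin n) ^ (q + 1)) ^ 2 ^ q ≤
      A.card ^ 2 ^ q * Fintype.card (Fin n) := by
    rw [Fintype.card_fin]
    have hle : 2 * R ≤ (A.card : ℝ) := by
      have : (2 * F.card : ℝ) ≤ A.card := by exact_mod_cast hFA
      linarith
    have : (2 * (n : ℝ) ^ (q + 1)) ^ 2 ^ q ≤ (A.card : ℝ) ^ 2 ^ q * n :=
      calc (2 * (n : ℝ) ^ (q + 1)) ^ 2 ^ q = (2 * R) ^ 2 ^ q * n := by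
            rw [mul_pow, mul_pow, ← hRpow, mul_assoc]
        _ ≤ _ := by gcongr
    exact_mod_cast this
  obtain ⟨x, y, hxy, hbox⟩ := exists_box q A hdense
  obtain ⟨t, ht, h2t, htk⟩ := exists_doubling hr hrk
  obtain ⟨E, hEF, hEc, hEs⟩ := dense_subgraph ht F hF x y hxy
    (fun s => by simpa [hA] using hbox s)
  obtain ⟨S, hSE, hSc⟩ := Finset.exists_subset_card_eq (s := E) (n := q + 1 + t + 1) (by omega)
  have h1 := hcode _ (by omega) htk S (hSE.trans hEF) hSc
  have h2 : (S.sup id).card ≤ (E.sup id).card := card_le_card (Finset.sup_mono hSE)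
  omega
end

section
/- Let k ≥ 7 and 3 ≤ r ≤ k - 1 - ⌈log₂ k⌉. Then m(n, r, k) = o(n^r) as n → ∞; that is, for every ε > 0 there exists n₀ such that for all n > n₀, m(n, r, k) ≤ ε · n^r. -/
/-!
A dense `r`-uniform hypergraph contains every fixed complete `r`-partite `r`-uniform hypergraph
(Erdős), and a suitable one of these has at least `k` edges on at most `k - 1` vertices, so a batch
code cannot be dense.

`exists_box` is the density theorem for sets of `r`-tuples: for fixed sizes `a i`, a set of at least
`ε n ^ r` tuples contains a box `∏ S i` with `#(S i) = a i` once `n` is large. The proof is by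
induction on `r`: many first coordinates have a dense link; among a large constant number `L` of
them, a positive proportion of the tails lie in at least `a 0` links, and by pigeonhole over
the subsets of these `L` vertices a positive proportion of the tails lie in the same `a 0` links
(`exists_common`).

`exists_sizes` provides sizes with `∏ a i ≥ k` and `∑ a i ≤ k - 1`. With `s = ⌈log₂ k⌉`, if `s ≤ r`
one takes `s` parts of size `2` and `r - s` parts of size `1`; otherwise one part of size
`⌈k / 4⌉` and all others of size `2`.

An edge is represented by its increasing enumeration, so distinct tuples in a box give distinct
edges, and all of these edges lie in the union of the `S i`.
-/

open Finset

/-- Among sufficiently many sets `B v`, `v ∈ H`, of density at least `δ`, some `t` have an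
intersection of density at least `δ / 2 / 2 ^ #H`. -/
lemma exists_common {α β : Type*} [DecidableEq α] [Fintype β] [DecidableEq β]
    (H : Finset α) (B : α → Finset β) (t : ℕ) (δ : ℝ)
    (hδ : ∀ v ∈ H, δ * Fintype.card β ≤ #(B v)) (hL : (t : ℝ) ≤ #H * (δ / 2)) (ht : t ≤ #H)
    (hH : 0 < #H) :
    ∃ T ⊆ H, ∃ W : Finset β, #T = t ∧
      δ / 2 / 2 ^ #H * Fintype.card β ≤ #W ∧ ∀ x ∈ W, ∀ v ∈ T, x ∈ B v := by
  classical
  set N : ℝ := ((Fintype.card β : ℕ) : ℝ) with hN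
  have hN0 : 0 ≤ N := by positivity
  have hHr : (0 : ℝ) < #H := by exact_mod_cast hH
  set Y : Finset β := {x | t ≤ #{v ∈ H | x ∈ B v}} with hY
  -- Double counting of the incidences `x ∈ B v`.
  have h1 : (#H : ℝ) * (δ * N) ≤ ∑ v ∈ H, (#(B v) : ℝ) := by
    rw [← nsmul_eq_mul]
    exact Finset.card_nsmul_le_sum _ _ _ hδ
  have h2 : ∑ v ∈ H, (#(B v) : ℝ) = ∑ x : β, (#{v ∈ H | x ∈ B v} : ℝ) := by
    have := Finset.sum_card_bipartiteAbove_eq_sum_card_bipartiteBelow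
      (s := H) (t := (univ : Finset β)) (fun v x => x ∈ B v)
    simp only [bipartiteAbove, bipartiteBelow, filter_univ_mem] at this
    exact_mod_cast this
  have h3 : ∑ x : β, (#{v ∈ H | x ∈ B v} : ℝ)
      ≤ ∑ x : β, ((t : ℝ) + if x ∈ Y then (#H : ℝ) else 0) := by
    refine Finset.sum_le_sum fun x _ => ?_
    split_ifs with hx
    · have : (#{v ∈ H | x ∈ B v} : ℝ) ≤ #H := by exact_mod_cast Finset.card_filter_le _ _
      have : (0 : ℝ) ≤ t := by positivity
      linarith
    · have hx' : #{v ∈ H | x ∈ B v} < t := by simpa [hY] using hx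
      have : (#{v ∈ H | x ∈ B v} : ℝ) ≤ t := by exact_mod_cast hx'.le
      linarith
  have h4 : ∑ x : β, ((t : ℝ) + if x ∈ Y then (#H : ℝ) else 0) = N * t + #Y * #H := by
    rw [Finset.sum_add_distrib, Finset.sum_ite_mem]
    simp [hN]
  have h5 : δ / 2 * N ≤ #Y := by
    have : #H * (δ / 2 * N) ≤ #H * (#Y : ℝ) := by nlinarith
    exact le_of_mul_le_mul_left this hHr
  -- Each `x ∈ Y` selects `t` of its sets; the most popular choice is the required `T`.
  have h6 : Y ⊆ (H.powersetCard t).biUnion fun T => ({x : β | ∀ v ∈ T, x ∈ B v} : Finset β) := by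
    intro x hx
    have hx' : t ≤ #{v ∈ H | x ∈ B v} := by simpa [hY] using hx
    obtain ⟨T, hT, hTt⟩ := Finset.exists_subset_card_eq hx'
    simp only [mem_biUnion, mem_powersetCard, mem_filter, mem_univ, true_and]
    exact ⟨T, ⟨hT.trans (filter_subset _ _), hTt⟩, fun v hv => (mem_filter.1 (hT hv)).2⟩
  by_contra hno
  set c : ℝ := δ / 2 / 2 ^ #H * N with hc
  have hcon : ∀ T ⊆ H, #T = t → (#{x : β | ∀ v ∈ T, x ∈ B v} : ℝ) < c := by
    intro T hTH hTt
    by_contra! hle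
    exact hno ⟨T, hTH, _, hTt, hle, fun x hx => (mem_filter.1 hx).2⟩
  have hne : (H.powersetCard t).Nonempty := Finset.powersetCard_nonempty.2 ht
  have h7 : (#Y : ℝ) ≤ ∑ T ∈ H.powersetCard t, (#{x : β | ∀ v ∈ T, x ∈ B v} : ℝ) := by
    exact_mod_cast (Finset.card_le_card h6).trans Finset.card_biUnion_le
  have h8 : ∑ T ∈ H.powersetCard t, (#{x : β | ∀ v ∈ T, x ∈ B v} : ℝ)
      < ∑ _T ∈ H.powersetCard t, c := by
    refine Finset.sum_lt_sum_of_nonempty hne fun T hT => ?_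
    rw [mem_powersetCard] at hT
    exact hcon T hT.1 hT.2
  have hc0 : 0 ≤ c := by
    obtain ⟨T, hT⟩ := hne
    rw [mem_powersetCard] at hT
    exact (Nat.cast_nonneg _).trans (hcon T hT.1 hT.2).le
  have h9 : ∑ _T ∈ H.powersetCard t, c ≤ 2 ^ #H * c := by
    rw [Finset.sum_const, nsmul_eq_mul]
    refine mul_le_mul_of_nonneg_right ?_ hc0
    have : #(H.powersetCard t) ≤ 2 ^ #H := by
      rw [Finset.card_powersetCard]
      exact Nat.choose_le_two_pow _ _
    exact_mod_cast this
  have h10 : 2 ^ #H * c = δ / 2 * N := by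
    rw [hc]
    field_simp
  linarith

/-- A dense set of `r`-tuples contains a box with prescribed side lengths. -/
lemma exists_box_s1 (r : ℕ) : ∀ (a : Fin r → ℕ) (ε : ℝ), 0 < ε → ∃ n₀ : ℕ, ∀ n : ℕ, n₀ < n →
    ∀ A : Finset (Fin r → Fin n), ε * (n : ℝ) ^ r ≤ #A →
      ∃ S : Fin r → Finset (Fin n), (∀ i, #(S i) = a i) ∧ Fintype.piFinset S ⊆ A := by
  induction r with
  | zero =>
    intro a ε hε
    refine ⟨0, fun n _ A hA => ⟨fun i => i.elim0, fun i => i.elim0, fun x _ => ?_⟩⟩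
    have hpos : 0 < #A := by
      have : (0 : ℝ) < #A := by
        rw [pow_zero, mul_one] at hA
        exact hε.trans_le hA
      exact_mod_cast this
    obtain ⟨y, hy⟩ := Finset.card_pos.1 hpos
    rwa [Subsingleton.elim x y]
  | succ r ih =>
    intro a ε hε
    -- `L` dense links suffice for `exists_common` with `δ = ε / 2`.
    obtain ⟨L, hL1, hL2, hL0⟩ : ∃ L : ℕ, (a 0 : ℝ) ≤ L * (ε / 2 / 2) ∧ a 0 ≤ L ∧ 0 < L := by
      obtain ⟨M, hM⟩ := exists_nat_ge ((a 0 : ℝ) / (ε / 2 / 2))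
      refine ⟨M + a 0 + 1, ?_, by omega, by omega⟩
      rw [← div_le_iff₀ (by positivity)]
      push_cast
      have : (0 : ℝ) ≤ a 0 := by positivity
      linarith
    obtain ⟨n₁, hn₁⟩ := ih (fun i => a i.succ) (ε / 2 / 2 / 2 ^ L) (by positivity)
    obtain ⟨n₂, hn₂⟩ := exists_nat_ge ((L : ℝ) / (ε / 2))
    refine ⟨max n₁ n₂, fun n hn A hA => ?_⟩
    have hnn₁ : n₁ < n := (le_max_left _ _).trans_lt hn
    have hnn₂ : n₂ < n := (le_max_right _ _).trans_lt hn
    have hn0 : (0 : ℝ) < n := by exact_mod_cast (Nat.zero_le _).trans_lt hn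
    let B : Fin n → Finset (Fin r → Fin n) := fun v => {x | (Fin.cons v x : Fin (r + 1) → Fin n) ∈ A}
    have hcard : (Fintype.card (Fin r → Fin n) : ℝ) = (n : ℝ) ^ r := by simp
    have hsum : #A ≤ ∑ v, #(B v) := by
      have hsub : A ⊆ univ.biUnion fun v => (B v).image fun x => (Fin.cons v x : Fin (r + 1) → Fin n) := by
        intro y hy
        simp only [mem_biUnion, mem_univ, true_and, mem_image, B, mem_filter]
        exact ⟨y 0, Fin.tail y, by rwa [Fin.cons_self_tail], Fin.cons_self_tail y⟩
      refine (Finset.card_le_card hsub).trans (Finset.card_biUnion_le.trans ?_)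
      exact Finset.sum_le_sum fun v _ => Finset.card_image_le
    let H : Finset (Fin n) := {v | ε / 2 * (n : ℝ) ^ r ≤ #(B v)}
    have hup : ∑ v, (#(B v) : ℝ)
        ≤ ∑ v : Fin n, (ε / 2 * (n : ℝ) ^ r + if v ∈ H then (n : ℝ) ^ r else 0) := by
      refine Finset.sum_le_sum fun v _ => ?_
      split_ifs with hv
      · have : (#(B v) : ℝ) ≤ (n : ℝ) ^ r := by
          rw [← hcard]
          exact_mod_cast Finset.card_le_univ _
        have : 0 ≤ ε / 2 * (n : ℝ) ^ r := by positivity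
        linarith
      · have : ¬ ε / 2 * (n : ℝ) ^ r ≤ #(B v) := by simpa [H] using hv
        linarith
    have hH : (L : ℝ) ≤ #H := by
      rw [Finset.sum_add_distrib, Finset.sum_ite_mem] at hup
      simp only [sum_const, card_univ, Fintype.card_fin, nsmul_eq_mul, univ_inter] at hup
      have hsum' : (#A : ℝ) ≤ ∑ v, (#(B v) : ℝ) := by exact_mod_cast hsum
      have hp : (0 : ℝ) < (n : ℝ) ^ r := by positivity
      have h1 : (n * (ε / 2)) * (n : ℝ) ^ r ≤ #H * (n : ℝ) ^ r := by
        rw [pow_succ] at hA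
        nlinarith
      have h2 := le_of_mul_le_mul_right h1 hp
      have h3 : (L : ℝ) / (ε / 2) ≤ n := hn₂.trans (by exact_mod_cast hnn₂.le)
      rw [div_le_iff₀ (by positivity)] at h3
      linarith
    obtain ⟨H', hH', hH'L⟩ := Finset.exists_subset_card_eq (by exact_mod_cast hH : L ≤ #H)
    obtain ⟨T, -, W, hTc, hT, hW⟩ := exists_common H' B (a 0) (ε / 2)
      (fun v hv => by
        rw [hcard]
        exact (mem_filter.1 (hH' hv)).2)
      (by rw [hH'L]; exact hL1) (by rw [hH'L]; exact hL2) (by rw [hH'L]; exact hL0)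
    rw [hH'L, hcard] at hT
    obtain ⟨S, hSc, hS⟩ := hn₁ n hnn₁ _ hT
    refine ⟨Fin.cons T S, fun i => ?_, fun y hy => ?_⟩
    · refine Fin.cases ?_ (fun j => ?_) i
      · simpa using hTc
      · simpa using hSc j
    · rw [Fintype.mem_piFinset] at hy
      have hy0 : y 0 ∈ T := by simpa using hy 0
      have hyt : Fin.tail y ∈ Fintype.piFinset S := by
        rw [Fintype.mem_piFinset]
        intro j
        simpa [Fin.tail] using hy j.succ
      have h := hW _ (hS hyt) (y 0) hy0
      have h' := (mem_filter.1 h).2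
      rwa [Fin.cons_self_tail] at h'

/-- Part sizes of a complete `r`-partite hypergraph with at least `k` edges on fewer than `k`
vertices. -/
lemma exists_sizes (k r : ℕ) (hk : 7 ≤ k) (hr : 3 ≤ r) (hrk : r ≤ k - 1 - Nat.clog 2 k) :
    ∃ a : Fin r → ℕ, k ≤ ∏ i, a i ∧ ∑ i, a i < k := by
  rcases le_or_gt (Nat.clog 2 k) r with hs | hs
  · obtain ⟨d, hd⟩ := Nat.exists_eq_add_of_le hs
    have hk2 : k ≤ 2 ^ Nat.clog 2 k := Nat.le_pow_clog (by norm_num) k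
    generalize Nat.clog 2 k = s at *
    subst hd
    refine ⟨Fin.append (fun _ => 2) (fun _ => 1), ?_, ?_⟩
    · simpa [Fin.prod_univ_add] using hk2
    · simp only [Fin.sum_univ_add, Fin.append_left, Fin.append_right, sum_const, card_univ,
        Fintype.card_fin, smul_eq_mul]
      omega
  · obtain ⟨d, rfl⟩ := Nat.exists_eq_add_of_le hr
    have hk2 : 2 ^ (3 + d) < k := (Nat.lt_clog_iff_pow_lt (by norm_num)).1 hs
    have hd : d < 2 ^ d := Nat.lt_two_pow_self
    rw [pow_add] at hk2
    -- Here `(k + 3) / 4 = ⌈k / 4⌉`.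
    obtain ⟨q, hq1, hq2⟩ : ∃ q, k ≤ 4 * q ∧ 4 * q ≤ k + 3 := ⟨(k + 3) / 4, by omega, by omega⟩
    rw [show 3 + d = d + 2 + 1 by omega]
    refine ⟨Fin.cons q fun _ => 2, ?_, ?_⟩
    · simp only [Fin.prod_univ_succ, Fin.cons_zero, Fin.cons_succ, prod_const, card_univ,
        Fintype.card_fin]
      have : 1 ≤ 2 ^ d := Nat.one_le_two_pow
      calc k ≤ q * 4 * 1 := by omega
        _ ≤ q * 4 * 2 ^ d := by gcongr
        _ = q * 2 ^ (d + 2) := by ring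
    · simp only [Fin.sum_univ_succ, Fin.cons_zero, Fin.cons_succ, sum_const, card_univ,
        Fintype.card_fin, smul_eq_mul]
      omega

/-- For `k ≥ 7` and `3 ≤ r ≤ k - 1 - ⌈log₂ k⌉`, `m(n, r, k) = o(n^r)`:
for every `ε > 0` there is `n₀` such that `m(n, r, k) ≤ ε · n^r` for all `n > n₀`. -/
theorem statement1 (k r : ℕ) (hk : 7 ≤ k) (hr : 3 ≤ r) (hrk : r ≤ k - 1 - Nat.clog 2 k) :
    ∀ ε : ℝ, 0 < ε → ∃ n₀ : ℕ, ∀ n : ℕ, n₀ < n →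
      (m n r k : ℝ) ≤ ε * (n : ℝ) ^ r := by
  classical
  intro ε hε
  obtain ⟨a, hprod, hsum⟩ := exists_sizes k r hk hr hrk
  obtain ⟨n₀, hn₀⟩ := exists_box_s1 r a ε hε
  refine ⟨n₀, fun n hn => ?_⟩
  -- The maximum defining `m` is attained.
  have hmem : m n r k ∈
      {c : ℕ | ∃ F : Finset (Finset (Fin n)), IsBatchCode n r k F ∧ F.card = c} := by
    refine Nat.sSup_mem ⟨0, ∅, ⟨by simp, ?_⟩, rfl⟩ ⟨Fintype.card (Finset (Fin n)), ?_⟩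
    · intro i hi _ S hS hSi
      rw [Finset.subset_empty.1 hS, Finset.card_empty] at hSi
      omega
    · rintro c ⟨F, -, rfl⟩
      exact Finset.card_le_univ F
  obtain ⟨F, ⟨hunif, hbatch⟩, hFc⟩ := hmem
  by_contra! hcon
  rw [← hFc] at hcon
  -- Edges are encoded by their increasing enumerations.
  let img : (Fin r → Fin n) → Finset (Fin n) := fun x => univ.image x
  let A : Finset (Fin r → Fin n) := {x | StrictMono x ∧ img x ∈ F}
  have hFA : #F ≤ #A := by
    refine (Finset.card_le_card (t := A.image img) fun e he => ?_).trans Finset.card_image_le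
    have himg : img (e.orderEmbOfFin (hunif e he)) = e := by
      simp [img]
    refine mem_image.2 ⟨e.orderEmbOfFin (hunif e he), ?_, himg⟩
    simp only [A, mem_filter, mem_univ, true_and]
    exact ⟨(e.orderEmbOfFin (hunif e he)).strictMono, by rwa [himg]⟩
  have hinj : Set.InjOn img A := by
    intro x hx y hy hxy
    have hx' : StrictMono x ∧ img x ∈ F := by simpa [A] using hx
    have hy' : StrictMono y ∧ img y ∈ F := by simpa [A] using hy
    refine (StrictMono.range_inj hx'.1 hy'.1).1 ?_
    have := congrArg (fun s : Finset (Fin n) => (s : Set (Fin n))) hxy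
    simpa [img] using this
  obtain ⟨S, hSc, hSA⟩ := hn₀ n hn A (hcon.le.trans (by exact_mod_cast hFA))
  have hE : k ≤ #((Fintype.piFinset S).image img) := by
    rw [Finset.card_image_of_injOn (hinj.mono (by exact_mod_cast hSA)), Fintype.card_piFinset]
    simpa [hSc] using hprod
  obtain ⟨E, hEsub, hEk⟩ := Finset.exists_subset_card_eq hE
  have hEF : E ⊆ F := by
    intro e he
    obtain ⟨x, hx, rfl⟩ := mem_image.1 (hEsub he)
    exact (mem_filter.1 (hSA hx)).2.2
  have hspan : E.sup id ⊆ univ.biUnion S := by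
    refine Finset.sup_le fun e he => ?_
    obtain ⟨x, hx, rfl⟩ := mem_image.1 (hEsub he)
    intro v hv
    obtain ⟨i, -, rfl⟩ := mem_image.1 hv
    exact mem_biUnion.2 ⟨i, mem_univ i, Fintype.mem_piFinset.1 hx i⟩
  have h1 := hbatch k (by omega) le_rfl E hEF hEk
  have h2 : #(E.sup id) ≤ ∑ i, a i := by
    refine (Finset.card_le_card hspan).trans (Finset.card_biUnion_le.trans ?_)
    simp [hSc]
  omega
end

section
/- Let k ≥ 6 and k - ⌈log₂ k⌉ ≤ r ≤ k - 1. Then m(n, r, k) = Ω(n^r); that is, there exist a constant c > 0 and n₀ such that for all n ≥ n₀, m(n, r, k) ≥ c · n^r. -/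
/-!
The complete `r`-partite `r`-graph with `r` parts of size `n / r` already has the required
property, and it has `(n / r) ^ r = Ω(n ^ r)` edges.

If `i` of its edges span a set `V` which meets the parts in `a₁, …, a_r` vertices, then
`i ≤ ∏ aⱼ`, and since `2 * a ≤ 2 ^ a` for every natural number `a`, this gives
`i * 2 ^ r ≤ 2 ^ |V|` (`card_mul_two_pow_le`). On the other hand `2 ^ (v - r) ≤ v` for all
`r ≤ v ≤ k - 1`: for `v = k - 1` this is `2 ^ (⌈log₂ k⌉ - 1) < k`, and the inequality passes to
smaller `v` (`two_pow_le_add`). Hence `|V| < i ≤ k` is impossible.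
-/

open Finset

/-- The edge of the complete multipartite hypergraph that picks, in part `j`, the vertex number
`f j`. The injection `φ` places the `r` parts of size `q` inside the vertex set `Fin n`. -/
def partiteEdge {r q n : ℕ} (φ : Fin r × Fin q ↪ Fin n) (f : Fin r → Fin q) : Finset (Fin n) :=
  univ.image fun j => φ (j, f j)

lemma mem_partiteEdge {r q n : ℕ} (φ : Fin r × Fin q ↪ Fin n) (f : Fin r → Fin q)
    (j : Fin r) (a : Fin q) : φ (j, a) ∈ partiteEdge φ f ↔ f j = a := by
  simp only [partiteEdge, mem_image, mem_univ, true_and, φ.injective.eq_iff, Prod.mk.injEq]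
  constructor
  · rintro ⟨_, rfl, h⟩
    exact h
  · exact fun h => ⟨j, rfl, h⟩

lemma partiteEdge_injective {r q n : ℕ} (φ : Fin r × Fin q ↪ Fin n) :
    Function.Injective (partiteEdge φ) := by
  intro f g h
  funext j
  exact ((mem_partiteEdge φ g j (f j)).1 (h ▸ (mem_partiteEdge φ f j (f j)).2 rfl)).symm

lemma card_partiteEdge {r q n : ℕ} (φ : Fin r × Fin q ↪ Fin n) (f : Fin r → Fin q) :
    (partiteEdge φ f).card = r := by
  rw [partiteEdge, card_image_of_injective, card_univ, Fintype.card_fin]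
  intro i j h
  exact congrArg Prod.fst (φ.injective h)

lemma two_mul_le_two_pow (a : ℕ) : 2 * a ≤ 2 ^ a := by
  cases a with
  | zero => simp
  | succ b =>
    have := Nat.lt_two_pow_self (n := b)
    rw [pow_succ]
    omega

/-- A vertex set `V` contains at most `2 ^ (|V| - r)` edges of the complete `r`-partite
hypergraph. -/
lemma card_mul_two_pow_le {r q n : ℕ} (φ : Fin r × Fin q ↪ Fin n)
    (T : Finset (Fin r → Fin q)) (V : Finset (Fin n)) (hV : ∀ f ∈ T, partiteEdge φ f ⊆ V) :
    T.card * 2 ^ r ≤ 2 ^ V.card := by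
  -- `W j` is the trace of `V` on part `j`.
  let W : Fin r → Finset (Fin q) := fun j => univ.filter fun a => φ (j, a) ∈ V
  have hT : T ⊆ Fintype.piFinset W := by
    intro f hf
    simp only [Fintype.mem_piFinset, W, mem_filter, mem_univ, true_and]
    exact fun j => hV f hf ((mem_partiteEdge φ f j _).2 rfl)
  have hTc : T.card ≤ ∏ j, (W j).card := by
    simpa [Fintype.card_piFinset] using card_le_card hT
  have hsum : ∑ j, (W j).card ≤ V.card := by
    rw [← card_sigma]
    refine card_le_card_of_injOn (fun p => φ (p.1, p.2)) ?_ ?_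
    · intro p hp
      simpa [W] using hp
    · rintro ⟨i, a⟩ _ ⟨j, b⟩ _ h
      have := φ.injective h
      simp only [Prod.mk.injEq] at this
      obtain ⟨rfl, rfl⟩ := this
      rfl
  calc T.card * 2 ^ r ≤ (∏ j, (W j).card) * 2 ^ r := Nat.mul_le_mul_right _ hTc
    _ = ∏ j, (2 * (W j).card) := by rw [prod_mul_distrib]; simp [mul_comm]
    _ ≤ ∏ j, 2 ^ (W j).card := prod_le_prod' fun j _ => two_mul_le_two_pow _
    _ = 2 ^ ∑ j, (W j).card := prod_pow_eq_pow_sum _ _ _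
    _ ≤ 2 ^ V.card := Nat.pow_le_pow_right (by norm_num) hsum

lemma two_pow_le_add {r t d : ℕ} (hr : 1 ≤ r) (ht : 2 ^ t ≤ r + t) (hd : d ≤ t) :
    2 ^ d ≤ r + d := by
  induction t, hd using Nat.le_induction with
  | base => exact ht
  | succ t _ ih =>
    rw [pow_succ] at ht
    exact ih (by omega)

lemma isBatchCode_partite {k r q n : ℕ} (hr : 1 ≤ r)
    (hk : 2 ^ (k - 1 - r) ≤ k - 1) (φ : Fin r × Fin q ↪ Fin n) :
    IsBatchCode n r k (univ.image (partiteEdge φ)) := by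
  refine ⟨?_, ?_⟩
  · intro e he
    obtain ⟨f, -, rfl⟩ := mem_image.1 he
    exact card_partiteEdge φ f
  · intro i hi hik S hS hSi
    obtain ⟨T, -, rfl⟩ := subset_image_iff.1 hS
    rw [card_image_of_injective _ (partiteEdge_injective φ)] at hSi
    have hV : ∀ f ∈ T, partiteEdge φ f ⊆ (T.image (partiteEdge φ)).sup id := fun f hf =>
      le_sup (f := id) (mem_image_of_mem _ hf)
    have hmain := card_mul_two_pow_le φ T _ hV
    obtain ⟨f, hf⟩ : T.Nonempty := card_pos.1 (by omega)
    have hrV := card_le_card (hV f hf)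
    rw [card_partiteEdge] at hrV
    generalize ((T.image (partiteEdge φ)).sup id).card = v at hmain hrV ⊢
    by_contra! hlt
    obtain ⟨d, rfl⟩ := Nat.exists_eq_add_of_le hrV
    rw [hSi, pow_add, mul_comm] at hmain
    have h1 : i ≤ 2 ^ d := Nat.le_of_mul_le_mul_left hmain (by positivity)
    have h2 : 2 ^ d ≤ r + d :=
      two_pow_le_add (t := k - 1 - r) hr (by omega) (by omega)
    omega

lemma le_m {n r k : ℕ} {F : Finset (Finset (Fin n))} (hF : IsBatchCode n r k F) :
    F.card ≤ m n r k := by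
  refine le_csSup ⟨Fintype.card (Finset (Fin n)), ?_⟩ ⟨F, hF, rfl⟩
  rintro _ ⟨G, -, rfl⟩
  exact card_le_univ G

/-- The number of edges of the complete `r`-partite hypergraph with parts of size `n / r`. -/
lemma div_pow_le_m {k r : ℕ} (n : ℕ) (hr : 1 ≤ r)
    (hk : 2 ^ (k - 1 - r) ≤ k - 1) : (n / r) ^ r ≤ m n r k := by
  let φ : Fin r × Fin (n / r) ↪ Fin n :=
    finProdFinEquiv.toEmbedding.trans (Fin.castLEEmb (Nat.mul_div_le n r))
  have h := le_m (isBatchCode_partite hr hk φ)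
  rw [card_image_of_injective _ (partiteEdge_injective φ)] at h
  simpa using h

/-- For `k ≥ 6` and `k - ⌈log₂ k⌉ ≤ r ≤ k - 1`, `m(n, r, k) = Ω(n^r)`. -/
theorem statement2 (k r : ℕ) (hk : 6 ≤ k) (hr₁ : k - Nat.clog 2 k ≤ r) (hr₂ : r ≤ k - 1) :
    ∃ c : ℝ, 0 < c ∧ ∃ n₀ : ℕ, ∀ n : ℕ, n₀ ≤ n →
      c * (n : ℝ) ^ r ≤ (m n r k : ℝ) := by
  have hlog : 2 ^ (Nat.clog 2 k - 1) < k :=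
    Nat.pow_pred_clog_lt_self (by norm_num) (by omega)
  have hlt : Nat.clog 2 k - 1 < 2 ^ (Nat.clog 2 k - 1) := Nat.lt_two_pow_self
  have hr : 1 ≤ r := by omega
  have hle : 2 ^ (k - 1 - r) ≤ 2 ^ (Nat.clog 2 k - 1) :=
    Nat.pow_le_pow_right (by norm_num) (by omega)
  have hk' : 2 ^ (k - 1 - r) ≤ k - 1 := by omega
  -- For `n ≥ r` the floor `n / r` is at least `n / (2 r)`.
  refine ⟨(1 / (2 * r : ℝ)) ^ r, by positivity, r, fun n hn => ?_⟩
  have hq : n ≤ 2 * r * (n / r) := by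
    have h1 : 1 ≤ n / r := Nat.div_pos hn hr
    have h2 := Nat.div_add_mod n r
    have h3 := Nat.mod_lt n hr
    nlinarith
  have hq' : 1 / (2 * r : ℝ) * n ≤ ((n / r : ℕ) : ℝ) := by
    rw [one_div, inv_mul_le_iff₀ (by positivity)]
    exact_mod_cast hq
  calc (1 / (2 * r : ℝ)) ^ r * (n : ℝ) ^ r = (1 / (2 * r : ℝ) * n) ^ r := (mul_pow _ _ _).symm
    _ ≤ ((n / r : ℕ) : ℝ) ^ r := by gcongr
    _ ≤ (m n r k : ℝ) := by exact_mod_cast div_pow_le_m n hr hk'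
end

section
/- For all n ≥ 5, m(n, 2, 5) = ⌊n²/4⌋; that is, the maximum number of edges of a simple graph on n vertices in which every collection of i distinct edges spans at least i vertices for all 1 ≤ i ≤ 5 equals ⌊n²/4⌋. -/
/-!
The batch-code condition for `r = 2`, `k = 5` forbids exactly the diamond (`K₄` minus an edge),
since `i ≤ 4` distinct edges always span at least `i` vertices.

*Lower bound.* In the balanced complete bipartite graph, edges spanning `a` vertices on one side
and `b` on the other number at most `a * b`, and `a * b ≤ a + b` as soon as `a + b ≤ 4`
(`isBatchCode_bip`).

*Upper bound.* Let `E s` count ordered adjacent pairs inside a vertex set `s`. If every vertex of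
`s \ T` has at most one neighbour in `T ⊆ s`, then removing `T` costs at most
`2 * |s \ T| + |T| * (|T| - 1)` (`pairs_le_sdiff`). In a triangle-free graph this applies to the two
ends of an edge, giving Mantel's theorem by induction (`mantel`). In a diamond-free graph it applies
to the vertices of a triangle, and induction gives `2 * E s ≤ |s|²` for `|s| ≠ 3`
(`diamond_free`); the exceptional size `3` occurs after one removal only for `|s| = 6`, where
the trivial bound for three vertices still suffices.
-/

open Finset

section Graph

variable {V : Type*}

/-- The number of ordered pairs in `s ×ˢ t` that are related by `r`. -/
def pairs (r : V → V → Prop) [DecidableRel r] (s t : Finset V) : ℕ :=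
  ∑ x ∈ s, ∑ y ∈ t, if r x y then 1 else 0

variable (r : V → V → Prop) [DecidableRel r]

lemma pairs_self_le [DecidableEq V] (hirr : ∀ x, ¬ r x x) (T : Finset V) :
    pairs r T T ≤ T.card * (T.card - 1) := by
  unfold pairs
  rw [← smul_eq_mul]
  refine Finset.sum_le_card_nsmul _ _ _ fun x hx => ?_
  rw [← Finset.card_filter, ← Finset.card_erase_of_mem hx]
  refine Finset.card_le_card fun y hy => ?_
  rw [Finset.mem_filter] at hy
  refine Finset.mem_erase.2 ⟨?_, hy.1⟩
  rintro rfl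
  exact hirr _ hy.2

lemma pairs_comm (hsymm : ∀ x y, r x y → r y x) (s t : Finset V) :
    pairs r s t = pairs r t s := by
  unfold pairs
  rw [Finset.sum_comm]
  refine Finset.sum_congr rfl fun x _ => Finset.sum_congr rfl fun y _ => ?_
  simp only [show r y x ↔ r x y from ⟨hsymm _ _, hsymm _ _⟩]

lemma pairs_le_sdiff [DecidableEq V] (hirr : ∀ x, ¬ r x x) (hsymm : ∀ x y, r x y → r y x)
    {s T : Finset V} (hT : T ⊆ s)
    (h1 : ∀ v ∈ s \ T, ∀ x ∈ T, ∀ y ∈ T, r v x → r v y → x = y) :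
    pairs r s s ≤ pairs r (s \ T) (s \ T) + 2 * (s \ T).card + T.card * (T.card - 1) := by
  have hcross : pairs r (s \ T) T ≤ (s \ T).card := by
    unfold pairs
    rw [Finset.card_eq_sum_ones]
    refine Finset.sum_le_sum fun v hv => ?_
    rw [← Finset.card_filter, Finset.card_le_one]
    intro x hx y hy
    rw [Finset.mem_filter] at hx hy
    exact h1 v hv x hx.1 y hy.1 hx.2 hy.2
  have hsplit : pairs r s s = pairs r (s \ T) (s \ T) + pairs r (s \ T) T
      + (pairs r T (s \ T) + pairs r T T) := by
    unfold pairs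
    simp only [← Finset.sum_add_distrib, Finset.sum_sdiff hT]
  have hTT := pairs_self_le r hirr T
  have hc := pairs_comm r hsymm T (s \ T)
  omega

lemma mantel [DecidableEq V] (hirr : ∀ x, ¬ r x x) (hsymm : ∀ x y, r x y → r y x) (s : Finset V)
    (htri : ∀ x ∈ s, ∀ y ∈ s, ∀ z ∈ s, r x y → r x z → r y z → False) :
    2 * pairs r s s ≤ s.card ^ 2 := by
  induction s using Finset.strongInduction with
  | H s ih =>
  by_cases hE : ∃ x ∈ s, ∃ y ∈ s, r x y
  · obtain ⟨x, hx, y, hy, hxy⟩ := hE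
    have hne : x ≠ y := by rintro rfl; exact hirr _ hxy
    have hT : ({x, y} : Finset V) ⊆ s := by
      intro a; simp only [Finset.mem_insert, Finset.mem_singleton]; rintro (rfl | rfl) <;> assumption
    have hTc : ({x, y} : Finset V).card = 2 := Finset.card_pair hne
    have hss : s \ {x, y} ⊂ s := Finset.sdiff_ssubset hT ⟨x, by simp⟩
    have hrec := ih _ hss fun a ha b hb c hc => htri a (hss.1 ha) b (hss.1 hb) c (hss.1 hc)
    have hstep := pairs_le_sdiff r hirr hsymm hT (by
      intro v hv a ha b hb hva hvb
      have hvs := (Finset.mem_sdiff.1 hv).1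
      simp only [Finset.mem_insert, Finset.mem_singleton] at ha hb
      rcases ha with rfl | rfl <;> rcases hb with rfl | rfl
      · rfl
      · exact (htri v hvs _ hx _ hy hva hvb hxy).elim
      · exact (htri v hvs _ hx _ hy hvb hva hxy).elim
      · rfl)
    have hcard := Finset.card_sdiff_add_card_eq_card hT
    rw [hTc] at hcard hstep
    rw [← hcard]
    nlinarith
  · have : pairs r s s = 0 := by
      unfold pairs
      refine Finset.sum_eq_zero fun x hx => Finset.sum_eq_zero fun y hy => ?_
      exact if_neg fun h => hE ⟨x, hx, y, hy, h⟩
    simp [this]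

lemma diamond_free [DecidableEq V] (hirr : ∀ x, ¬ r x x) (hsymm : ∀ x y, r x y → r y x)
    (hD : ∀ x y z v, z ≠ v → r x y → r x z → r y z → r v x → r v y → False)
    (s : Finset V) (h3 : s.card ≠ 3) :
    2 * pairs r s s ≤ s.card ^ 2 := by
  induction s using Finset.strongInduction with
  | H s ih =>
  by_cases htri : ∀ x ∈ s, ∀ y ∈ s, ∀ z ∈ s, r x y → r x z → r y z → False
  · exact mantel r hirr hsymm s htri
  push Not at htri
  obtain ⟨x, hx, y, hy, z, hz, hxy, hxz, hyz, -⟩ := htri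
  have hne : ∀ {a b}, r a b → a ≠ b := by rintro a b h rfl; exact hirr _ h
  have hT : ({x, y, z} : Finset V) ⊆ s := by
    intro a; simp only [Finset.mem_insert, Finset.mem_singleton]
    rintro (rfl | rfl | rfl) <;> assumption
  have hTc : ({x, y, z} : Finset V).card = 3 :=
    Finset.card_eq_three.2 ⟨x, y, z, hne hxy, hne hxz, hne hyz, rfl⟩
  have hss : s \ {x, y, z} ⊂ s := Finset.sdiff_ssubset hT ⟨x, by simp⟩
  have hstep := pairs_le_sdiff r hirr hsymm hT (by
    intro v hv a ha b hb hva hvb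
    have hvT := (Finset.mem_sdiff.1 hv).2
    simp only [Finset.mem_insert, Finset.mem_singleton, not_or] at ha hb hvT
    obtain ⟨hvx, hvy, hvz⟩ := hvT
    have hyx := hsymm _ _ hxy
    have hzx := hsymm _ _ hxz
    have hzy := hsymm _ _ hyz
    have e1 : r v x → r v y → False := hD x y z v (Ne.symm hvz) hxy hxz hyz
    have e2 : r v x → r v z → False := hD x z y v (Ne.symm hvy) hxz hxy hzy
    have e3 : r v y → r v z → False := hD y z x v (Ne.symm hvx) hyz hyx hzx
    rcases ha with rfl | rfl | rfl <;> rcases hb with rfl | rfl | rfl <;> tauto)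
  have hcard := Finset.card_sdiff_add_card_eq_card hT
  rw [hTc] at hcard hstep
  by_cases h6 : (s \ {x, y, z}).card = 3
  · have hle := pairs_self_le r hirr (s \ {x, y, z})
    rw [h6] at hle hstep hcard
    rw [← hcard]
    omega
  · have hrec := ih _ hss h6
    have hpos : 1 ≤ (s \ {x, y, z}).card := by omega
    rw [← hcard]
    -- For one remaining vertex the quadratic bound on it is too weak; it carries no pair at all.
    rcases Nat.eq_or_lt_of_le hpos with h1 | h1
    · have hle := pairs_self_le r hirr (s \ {x, y, z})
      rw [← h1] at hle hstep ⊢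
      omega
    · nlinarith

end Graph

/-- Diamond-freeness of the graph of a batch code: five edges on four vertices are forbidden. -/
lemma IsBatchCode.no_diamond {n : ℕ} {F : Finset (Finset (Fin n))} (hF : IsBatchCode n 2 5 F)
    (x y z v : Fin n) (hzv : z ≠ v) (hxy : {x, y} ∈ F) (hxz : {x, z} ∈ F) (hyz : {y, z} ∈ F)
    (hvx : {v, x} ∈ F) (hvy : {v, y} ∈ F) : False := by
  have hne : ∀ {a b : Fin n}, {a, b} ∈ F → a ≠ b := by
    rintro a b h rfl
    have := hF.1 _ h
    simp at this
  have nxy := hne hxy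
  have nxz := hne hxz
  have nyz := hne hyz
  have nvx := hne hvx
  have nvy := hne hvy
  let S : Finset (Finset (Fin n)) := {{x, y}, {x, z}, {y, z}, {v, x}, {v, y}}
  have hS : S ⊆ F := by
    intro e he
    simp only [S, Finset.mem_insert, Finset.mem_singleton] at he
    rcases he with rfl | rfl | rfl | rfl | rfl <;> assumption
  have hcard : S.card = 5 := by
    have key : ∀ {a b c d e : Fin n}, (e = a ∨ e = b) → e ≠ c → e ≠ d →
        ({a, b} : Finset (Fin n)) ≠ {c, d} := by
      intro a b c d e h1 h2 h3 h
      have : e ∈ ({c, d} : Finset (Fin n)) := by rw [← h]; simpa using h1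
      simp [h2, h3] at this
    have a1 : ({x, y} : Finset (Fin n)) ≠ {x, z} := key (e := y) (by simp) nxy.symm nyz
    have a2 : ({x, y} : Finset (Fin n)) ≠ {y, z} := key (e := x) (by simp) nxy nxz
    have a3 : ({x, y} : Finset (Fin n)) ≠ {v, x} := key (e := y) (by simp) nvy.symm nxy.symm
    have a4 : ({x, y} : Finset (Fin n)) ≠ {v, y} := key (e := x) (by simp) nvx.symm nxy
    have a5 : ({x, z} : Finset (Fin n)) ≠ {y, z} := key (e := x) (by simp) nxy nxz
    have a6 : ({x, z} : Finset (Fin n)) ≠ {v, x} := key (e := z) (by simp) hzv nxz.symm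
    have a7 : ({x, z} : Finset (Fin n)) ≠ {v, y} := key (e := x) (by simp) nvx.symm nxy
    have a8 : ({y, z} : Finset (Fin n)) ≠ {v, x} := key (e := y) (by simp) nvy.symm nxy.symm
    have a9 : ({y, z} : Finset (Fin n)) ≠ {v, y} := key (e := z) (by simp) hzv nyz.symm
    have a10 : ({v, x} : Finset (Fin n)) ≠ {v, y} := key (e := x) (by simp) nvx.symm nxy
    simp only [S]
    rw [Finset.card_insert_of_notMem, Finset.card_insert_of_notMem,
      Finset.card_insert_of_notMem, Finset.card_pair a10] <;>
      simp only [Finset.mem_insert, Finset.mem_singleton] <;> tauto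
  have h5 := hF.2 5 (by norm_num) le_rfl S hS hcard
  have hsub : S.sup id ⊆ {x, y, z, v} := by
    refine Finset.sup_le fun e he a ha => ?_
    simp only [S, Finset.mem_insert, Finset.mem_singleton] at he
    rcases he with rfl | rfl | rfl | rfl | rfl <;>
      simp only [id, Finset.mem_insert, Finset.mem_singleton] at ha <;>
      rcases ha with h | h <;> simp [h]
  have := (Finset.card_le_card hsub).trans Finset.card_le_four
  omega

lemma IsBatchCode.card_le {n : ℕ} (hn : 5 ≤ n) {F : Finset (Finset (Fin n))}
    (hF : IsBatchCode n 2 5 F) : F.card ≤ n ^ 2 / 4 := by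
  have hirr : ∀ x : Fin n, ¬ ({x, x} : Finset (Fin n)) ∈ F := by
    intro x h
    have := hF.1 _ h
    simp at this
  have hmain := diamond_free (fun x y : Fin n => ({x, y} : Finset (Fin n)) ∈ F) hirr
    (fun x y h => by rwa [Finset.pair_comm])
    (fun x y z v => hF.no_diamond x y z v) Finset.univ (by simp; omega)
  have hpairs : pairs (fun x y : Fin n => ({x, y} : Finset (Fin n)) ∈ F) Finset.univ Finset.univ
      = (Finset.univ.filter fun p : Fin n × Fin n => ({p.1, p.2} : Finset (Fin n)) ∈ F).card := by
    unfold pairs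
    rw [Finset.card_filter, ← Finset.univ_product_univ, Finset.sum_product]
  -- Each edge is hit by at least its two orderings.
  have htwo : F.card * 2 ≤
      (Finset.univ.filter fun p : Fin n × Fin n => ({p.1, p.2} : Finset (Fin n)) ∈ F).card := by
    have hmaps : ∀ p ∈ Finset.univ.filter
        fun p : Fin n × Fin n => ({p.1, p.2} : Finset (Fin n)) ∈ F,
        (fun p : Fin n × Fin n => ({p.1, p.2} : Finset (Fin n))) p ∈ F :=
      fun p hp => (Finset.mem_filter.1 hp).2
    rw [Finset.card_eq_sum_card_fiberwise hmaps, ← smul_eq_mul]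
    refine Finset.card_nsmul_le_sum _ _ _ fun e he => ?_
    obtain ⟨x, y, hxy, rfl⟩ := Finset.card_eq_two.1 (hF.1 e he)
    have hne : (x, y) ≠ (y, x) := by simp [hxy]
    rw [← Finset.card_pair hne]
    refine Finset.card_le_card fun p hp => ?_
    simp only [Finset.mem_insert, Finset.mem_singleton] at hp
    rcases hp with rfl | rfl
    · simpa using he
    · simpa [Finset.pair_comm y x] using he
  rw [hpairs, Finset.card_univ, Fintype.card_fin] at hmain
  rw [Nat.le_div_iff_mul_le (by norm_num)]
  omega

/-- The edge set of the complete bipartite graph with sides `A` and `B`. -/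
def bip {n : ℕ} (A B : Finset (Fin n)) : Finset (Finset (Fin n)) :=
  (A ×ˢ B).image fun p => {p.1, p.2}

lemma card_bip {n : ℕ} {A B : Finset (Fin n)} (h : Disjoint A B) :
    (bip A B).card = A.card * B.card := by
  unfold bip
  rw [Finset.card_image_of_injOn, Finset.card_product]
  rintro ⟨a, b⟩ hab ⟨c, d⟩ hcd heq
  simp only [Finset.coe_product, Set.mem_prod, Finset.mem_coe] at hab hcd
  replace heq : ({a, b} : Finset (Fin n)) = {c, d} := heq
  have hd : ∀ {u w}, u ∈ A → w ∈ B → u ≠ w := fun hu hw => Finset.disjoint_iff_ne.1 h _ hu _ hw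
  have ha : a ∈ ({c, d} : Finset (Fin n)) := by
    have : a ∈ ({a, b} : Finset (Fin n)) := by simp
    exact heq ▸ this
  have hb : b ∈ ({c, d} : Finset (Fin n)) := by
    have : b ∈ ({a, b} : Finset (Fin n)) := by simp
    exact heq ▸ this
  simp only [Finset.mem_insert, Finset.mem_singleton] at ha hb
  have h1 := hd hab.1 hcd.2
  have h2 := hd hcd.1 hab.2
  have ha' : a = c := ha.resolve_right h1
  have hb' : b = d := hb.resolve_left h2.symm
  rw [ha', hb']

lemma isBatchCode_bip {n : ℕ} {A B : Finset (Fin n)} (h : Disjoint A B) :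
    IsBatchCode n 2 5 (bip A B) := by
  refine ⟨fun e he => ?_, fun i _ hi S hS hSi => ?_⟩
  · obtain ⟨⟨a, b⟩, hab, rfl⟩ := Finset.mem_image.1 he
    rw [Finset.mem_product] at hab
    exact Finset.card_pair (Finset.disjoint_iff_ne.1 h _ hab.1 _ hab.2)
  set W := S.sup id with hW
  have hdisj : Disjoint (W ∩ A) (W ∩ B) :=
    h.mono Finset.inter_subset_right Finset.inter_subset_right
  have hsub : S ⊆ bip (W ∩ A) (W ∩ B) := by
    intro e he
    obtain ⟨⟨a, b⟩, hab, rfl⟩ := Finset.mem_image.1 (hS he)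
    rw [Finset.mem_product] at hab
    have hle : ({a, b} : Finset (Fin n)) ⊆ W := Finset.le_sup (f := id) he
    refine Finset.mem_image.2 ⟨(a, b), ?_, rfl⟩
    simp only [Finset.mem_product, Finset.mem_inter]
    exact ⟨⟨hle (by simp), hab.1⟩, ⟨hle (by simp), hab.2⟩⟩
  have h1 := Finset.card_le_card hsub
  rw [card_bip hdisj, hSi] at h1
  have h2 : (W ∩ A).card + (W ∩ B).card ≤ W.card := by
    rw [← Finset.card_union_of_disjoint hdisj]
    exact Finset.card_le_card (Finset.union_subset Finset.inter_subset_left Finset.inter_subset_left)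
  generalize (W ∩ A).card = a at h1 h2
  generalize (W ∩ B).card = b at h1 h2
  by_contra hlt
  have ha : a ≤ 4 := by omega
  have hb : b ≤ 4 := by omega
  interval_cases a <;> interval_cases b <;> omega

/-- For all `n ≥ 5`, `m(n, 2, 5) = ⌊n²/4⌋`. -/
theorem statement6 (n : ℕ) (hn : 5 ≤ n) : m n 2 5 = n ^ 2 / 4 := by
  refine IsGreatest.csSup_eq ⟨?_, ?_⟩
  · let A : Finset (Fin n) := Finset.univ.filter fun i => i.val < n / 2
    have hA : A.card = n / 2 := by
      simp only [A, Fin.card_filter_val_lt]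
      omega
    refine ⟨bip A Aᶜ, isBatchCode_bip disjoint_compl_right, ?_⟩
    rw [card_bip disjoint_compl_right, Finset.card_compl, Fintype.card_fin, hA]
    obtain ⟨k, rfl | rfl⟩ := Nat.even_or_odd' n
    · rw [show 2 * k / 2 = k by omega, show 2 * k - k = k by omega,
        show (2 * k) ^ 2 = 4 * (k * k) by ring]
      omega
    · rw [show (2 * k + 1) / 2 = k by omega, show 2 * k + 1 - k = k + 1 by omega,
        show (2 * k + 1) ^ 2 = 4 * (k * (k + 1)) + 1 by ring]
      omega
  · rintro c ⟨F, hF, rfl⟩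
    exact hF.card_le hn
end

section
/- Every simple graph on n ≥ 4 vertices with at least ⌊n²/4⌋ + 1 edges contains 5 distinct edges spanning at most 4 vertices; equivalently, it contains a subgraph on 4 vertices with at least 5 edges. -/
open Finset

/-!
The proof is by induction on the number of vertices, deleting a vertex of low degree. One may
discard edges and assume there are exactly `⌊n²/4⌋ + 1` of them. For `n = 4` these are `5` edges
on `4` vertices. For `n ≥ 5` the degree sum `2⌊n²/4⌋ + 2` is less than `n(⌊n/2⌋ + 1)`, so some
vertex has degree at most `⌊n/2⌋` (`exists_low_degree`). As `⌊n²/4⌋ - ⌊n/2⌋ = ⌊(n-1)²/4⌋`, deleting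
it leaves enough edges on `n - 1` vertices (`exists_five_edges`).
-/

/-- The extremal function satisfies `⌊(k+1)²/4⌋ = ⌊k²/4⌋ + ⌊(k+1)/2⌋`. -/
theorem sq_div_four_succ (k : ℕ) : (k + 1) ^ 2 / 4 = k ^ 2 / 4 + (k + 1) / 2 := by
  obtain ⟨m, rfl | rfl⟩ := Nat.even_or_odd' k
  · have h1 : (2 * m + 1) ^ 2 = 4 * (m ^ 2 + m) + 1 := by ring
    have h2 : (2 * m) ^ 2 = 4 * m ^ 2 := by ring
    omega
  · have h1 : (2 * m + 1 + 1) ^ 2 = 4 * (m ^ 2 + 2 * m + 1) := by ring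
    have h2 : (2 * m + 1) ^ 2 = 4 * (m ^ 2 + m) + 1 := by ring
    omega

theorem degree_sum_lt (n : ℕ) (hn : 5 ≤ n) : 2 * (n ^ 2 / 4 + 1) < n * (n / 2 + 1) := by
  obtain ⟨m, rfl | rfl⟩ := Nat.even_or_odd' n
  · have h1 : (2 * m) ^ 2 / 4 = m ^ 2 := by
      have : (2 * m) ^ 2 = 4 * m ^ 2 := by ring
      omega
    have h2 : 2 * m / 2 = m := by omega
    rw [h1, h2]
    nlinarith
  · have h1 : (2 * m + 1) ^ 2 / 4 = m ^ 2 + m := by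
      have : (2 * m + 1) ^ 2 = 4 * (m ^ 2 + m) + 1 := by ring
      omega
    have h2 : (2 * m + 1) / 2 = m := by omega
    rw [h1, h2]
    nlinarith

/-- By double counting incidences, the average degree is below `⌊n/2⌋ + 1`. -/
theorem exists_low_degree {α : Type*} [DecidableEq α] (V : Finset α) (F : Finset (Finset α))
    (hV : 5 ≤ #V) (hF : ∀ e ∈ F, #e = 2 ∧ e ⊆ V) (hcard : #F = #V ^ 2 / 4 + 1) :
    ∃ v ∈ V, #{e ∈ F | v ∈ e} ≤ #V / 2 := by
  by_contra! h
  have hsum : ∑ v ∈ V, #{e ∈ F | v ∈ e} = ∑ e ∈ F, #{v ∈ V | v ∈ e} :=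
    sum_card_bipartiteAbove_eq_sum_card_bipartiteBelow (fun v e => v ∈ e)
  have hedge : ∑ e ∈ F, #{v ∈ V | v ∈ e} = #F * 2 := by
    refine sum_const_nat fun e he => ?_
    rw [filter_mem_eq_inter, inter_eq_right.2 (hF e he).2, (hF e he).1]
  have hlow : #V * (#V / 2 + 1) ≤ ∑ v ∈ V, #{e ∈ F | v ∈ e} := by
    simpa using card_nsmul_le_sum V _ (#V / 2 + 1) h
  have := degree_sum_lt #V hV
  omega

/-- The theorem for a graph with an arbitrary finite vertex set `V`, which is the form needed to
delete vertices. -/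
theorem exists_five_edges {α : Type*} [DecidableEq α] (n : ℕ) (hn : 4 ≤ n) :
    ∀ (V : Finset α) (F : Finset (Finset α)), #V = n → (∀ e ∈ F, #e = 2 ∧ e ⊆ V) →
      n ^ 2 / 4 + 1 ≤ #F → ∃ S ⊆ F, #S = 5 ∧ #(S.sup id) ≤ 4 := by
  induction n, hn using Nat.le_induction with
  | base =>
    intro V F hV hF hcard
    obtain ⟨S, hS, hS5⟩ := exists_subset_card_eq (show 5 ≤ #F by omega)
    refine ⟨S, hS, hS5, ?_⟩
    rw [← hV]
    exact card_le_card (Finset.sup_le fun e he => (hF e (hS he)).2)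
  | succ k hk ih =>
    intro V F hV hF hcard
    -- Discarding surplus edges bounds the degree sum from above.
    obtain ⟨G, hG, hGcard⟩ := exists_subset_card_eq hcard
    obtain ⟨v, hv, hdeg⟩ := exists_low_degree V G (by omega) (fun e he => hF e (hG he))
      (by rw [hGcard, hV])
    have hsplit := card_filter_add_card_filter_not (s := G) (fun e => v ∈ e)
    have hrec := sq_div_four_succ k
    obtain ⟨S, hS, h⟩ := ih (V.erase v) {e ∈ G | v ∉ e}
      (by rw [card_erase_of_mem hv]; omega)
      (fun e he => by
        obtain ⟨he, hve⟩ := mem_filter.1 he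
        exact ⟨(hF e (hG he)).1, subset_erase.2 ⟨(hF e (hG he)).2, hve⟩⟩)
      (by rw [hV] at hdeg; omega)
    exact ⟨S, hS.trans ((filter_subset _ _).trans hG), h⟩

/-- Every simple graph on `n ≥ 4` vertices (viewed as a family `F` of distinct
`2`-element subsets of `Fin n`) with at least `⌊n²/4⌋ + 1` edges contains `5` distinct
edges spanning at most `4` vertices. -/
theorem statement7 (n : ℕ) (hn : 4 ≤ n) (F : Finset (Finset (Fin n)))
    (huniform : ∀ e ∈ F, e.card = 2) (hsize : n ^ 2 / 4 + 1 ≤ F.card) :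
    ∃ S ⊆ F, S.card = 5 ∧ (S.sup id).card ≤ 4 :=
  exists_five_edges n hn univ F (by simp) (fun e he => ⟨huniform e he, subset_univ e⟩) hsize
end

section
/- For every integer k ≥ 6 divisible by 3, there exists a simple graph with exactly k edges and exactly k - 1 vertices whose girth is exactly 2k/3. (Such a graph is given by two vertices joined by three pairwise internally vertex-disjoint paths, each of length k/3.) -/
open Finset

/-!
The extremal graph is the theta graph `Θ(m, m, m)` with `m = k / 3`: two branch vertices joined by
three internally disjoint paths of length `m`. Walking along one path, back along the second and
out along the third shows that it has a Hamiltonian path, so it can be encoded on `{0, …, 3m - 2}`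
as the path `0, 1, …, 3m - 2` together with the two chords `{0, 2m - 1}` and `{m - 1, 3m - 2}`.
The branch vertices are `m - 1` and `2m - 1`, and the interiors of the three paths are the blocks
`[0, m - 2]`, `[m, 2m - 2]` and `[2m, 3m - 2]`, each of size `m - 1`.

The edge count is immediate from this encoding, and `0, 1, …, 2m - 1` is a cycle of length `2m`.
Conversely, every vertex of a cycle has two neighbours on the cycle. As interior vertices have
degree two, a cycle meeting a block contains the whole block and both branch vertices; two of the
three neighbours of the branch vertex `2m - 1` then lie on the cycle, and hence so do two blocks
(`blocks_of_two_neighbours`). Only one block can be missed, which leaves at least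
`(3m - 1) - (m - 1) = 2m` vertices.
-/

/-- Adjacency in the theta graph `Θ(m, m, m)` on `{0, …, 3m - 2}`: consecutive numbers, and the
chords `{0, 2m - 1}` and `{m - 1, 3m - 2}`. -/
def ThetaRel (m i j : ℕ) : Prop :=
  j = i + 1 ∨ i = j + 1 ∨ (i = 0 ∧ j = 2 * m - 1) ∨ (j = 0 ∧ i = 2 * m - 1) ∨
    (i = m - 1 ∧ j = 3 * m - 2) ∨ (j = m - 1 ∧ i = 3 * m - 2)

/-- The theta graph `Θ(m, m, m)`; the bound `2 ≤ m` keeps the chords from being loops. -/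
def thetaGraph (m : ℕ) (hm : 2 ≤ m) : SimpleGraph (Fin (3 * m - 1)) where
  Adj i j := ThetaRel m i j
  symm := ⟨fun i j h => by unfold ThetaRel at *; omega⟩
  loopless := ⟨fun i h => by unfold ThetaRel at h; omega⟩

/-- A nonempty vertex set in which every vertex has two neighbours contains everything outside
a set of `m - 1` consecutive numbers (one of the three blocks). -/
lemma blocks_of_two_neighbours (m : ℕ) (hm : 2 ≤ m) (P : ℕ → Prop) (hne : ∃ i, P i)
    (hP : ∀ i, P i → i < 3 * m - 1 ∧ ∃ x y, x ≠ y ∧ P x ∧ P y ∧ ThetaRel m i x ∧ ThetaRel m i y) :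
    ∃ c, ∀ i < 3 * m - 1, (i < c ∨ c + (m - 1) ≤ i) → P i := by
  have up : ∀ i, P i → i ≠ m - 1 → i ≠ 2 * m - 1 → i ≠ 3 * m - 2 → P (i + 1) := by
    intro i hi h1 h2 h3
    obtain ⟨hlt, x, y, hxy, hx, hy, rx, ry⟩ := hP i hi
    unfold ThetaRel at rx ry
    have bx := (hP x hx).1
    have hby := (hP y hy).1
    have : x = i + 1 ∨ y = i + 1 := by omega
    rcases this with rfl | rfl <;> assumption
  have down : ∀ i, P (i + 1) → i + 1 ≠ m - 1 → i + 1 ≠ 2 * m - 1 → P i := by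
    intro i hi h1 h2
    obtain ⟨hlt, x, y, hxy, hx, hy, rx, ry⟩ := hP _ hi
    unfold ThetaRel at rx ry
    have bx := (hP x hx).1
    have hby := (hP y hy).1
    have : x = i ∨ y = i := by omega
    rcases this with rfl | rfl <;> assumption
  have chord0 : P 0 → P (2 * m - 1) := by
    intro hi
    obtain ⟨hlt, x, y, hxy, hx, hy, rx, ry⟩ := hP _ hi
    unfold ThetaRel at rx ry
    have bx := (hP x hx).1
    have hby := (hP y hy).1
    have : x = 2 * m - 1 ∨ y = 2 * m - 1 := by omega
    rcases this with rfl | rfl <;> assumption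
  have chord1 : P (3 * m - 2) → P (m - 1) := by
    intro hi
    obtain ⟨hlt, x, y, hxy, hx, hy, rx, ry⟩ := hP _ hi
    unfold ThetaRel at rx ry
    have bx := (hP x hx).1
    have hby := (hP y hy).1
    have : x = m - 1 ∨ y = m - 1 := by omega
    rcases this with rfl | rfl <;> assumption
  have ups : ∀ d i, P i → (∀ j, i ≤ j → j < i + d → j ≠ m - 1 ∧ j ≠ 2 * m - 1 ∧ j ≠ 3 * m - 2) →
      P (i + d) := by
    intro d i hi
    induction d with
    | zero => intro _; exact hi
    | succ d ih =>
      intro h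
      have := h (i + d) (by omega) (by omega)
      exact up _ (ih fun j h1 h2 => h j h1 (by omega)) this.1 this.2.1 this.2.2
  have downs : ∀ d i, P (i + d) → (∀ j, i < j → j ≤ i + d → j ≠ m - 1 ∧ j ≠ 2 * m - 1) → P i := by
    intro d i
    induction d with
    | zero => intro hi _; exact hi
    | succ d ih =>
      intro hi h
      have := h (i + d + 1) (by omega) (by omega)
      exact ih (down _ hi this.1 this.2) fun j h1 h2 => h j h1 (by omega)
  have mono : ∀ i j, P i → i ≤ j →
      (∀ l, i ≤ l → l < j → l ≠ m - 1 ∧ l ≠ 2 * m - 1 ∧ l ≠ 3 * m - 2) → P j := by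
    intro i j hi hij h
    obtain ⟨d, rfl⟩ := Nat.exists_eq_add_of_le hij
    exact ups d i hi h
  have anti : ∀ i j, P j → i ≤ j → (∀ l, i < l → l ≤ j → l ≠ m - 1 ∧ l ≠ 2 * m - 1) → P i := by
    intro i j hj hij h
    obtain ⟨d, rfl⟩ := Nat.exists_eq_add_of_le hij
    exact downs d i hj h
  -- An interior vertex forces its whole block, both branch vertices included.
  have blockA : ∀ i, i < m - 1 → P i → (∀ j < m, P j) ∧ P (2 * m - 1) := by
    intro i hi h
    have h0 : P 0 := anti 0 i h (by omega) (by intros; omega)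
    exact ⟨fun j hj => mono 0 j h0 (by omega) (by intros; omega), chord0 h0⟩
  have blockB : ∀ i, m ≤ i → i < 2 * m - 1 → P i → ∀ j, m - 1 ≤ j → j < 2 * m → P j := by
    intro i hi hi' h j hj hj'
    have h0 : P (m - 1) := anti _ i h (by omega) (by intros; omega)
    have h1 : P m := anti _ i h (by omega) (by intros; omega)
    rcases hj.eq_or_lt with rfl | hlt
    · exact h0
    · exact mono m j h1 (by omega) (by intros; omega)
  have blockC : ∀ i, 2 * m ≤ i → i < 3 * m - 1 → P i →
      (∀ j, 2 * m - 1 ≤ j → j < 3 * m - 1 → P j) ∧ P (m - 1) := by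
    intro i hi hi' h
    have h0 : P (3 * m - 2) := mono i _ h (by omega) (by intros; omega)
    exact ⟨fun j hj hj' => anti j _ h0 (by omega) (by intros; omega), chord1 h0⟩
  -- The branch vertices are not adjacent, so some interior vertex is present.
  have hint : ∃ i, P i ∧ i ≠ m - 1 ∧ i ≠ 2 * m - 1 := by
    obtain ⟨i, hi⟩ := hne
    by_cases h : i ≠ m - 1 ∧ i ≠ 2 * m - 1
    · exact ⟨i, hi, h⟩
    · obtain ⟨hlt, x, y, hxy, hx, hy, rx, ry⟩ := hP i hi
      unfold ThetaRel at rx ry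
      exact ⟨x, hx, by omega, by omega⟩
  have hbranch : P (m - 1) ∧ P (2 * m - 1) := by
    obtain ⟨i, hi, h1, h2⟩ := hint
    have hlt := (hP i hi).1
    rcases lt_or_ge i (m - 1) with h | h
    · have := blockA i h hi
      exact ⟨this.1 _ (by omega), this.2⟩
    rcases lt_or_ge i (2 * m - 1) with h' | h'
    · have := blockB i (by omega) h' hi
      exact ⟨this _ (by omega) (by omega), this _ (by omega) (by omega)⟩
    · have := blockC i (by omega) hlt hi
      exact ⟨this.2, this.1 _ (by omega) (by omega)⟩
  obtain ⟨hlt, x, y, hxy, hx, hy, rx, ry⟩ := hP _ hbranch.2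
  unfold ThetaRel at rx ry
  -- The neighbours of the branch vertex `2 * m - 1` are `0`, `2 * m - 2` and `2 * m`.
  have key : (P 0 ∧ P (2 * m - 2)) ∨ (P 0 ∧ P (2 * m)) ∨ (P (2 * m - 2) ∧ P (2 * m)) := by
    have hx' : x = 0 ∨ x = 2 * m - 2 ∨ x = 2 * m := by omega
    have hy' : y = 0 ∨ y = 2 * m - 2 ∨ y = 2 * m := by omega
    rcases hx' with rfl | rfl | rfl <;> rcases hy' with rfl | rfl | rfl <;>
      first
      | exact absurd rfl hxy
      | exact Or.inl ⟨hx, hy⟩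
      | exact Or.inl ⟨hy, hx⟩
      | exact Or.inr (Or.inl ⟨hx, hy⟩)
      | exact Or.inr (Or.inl ⟨hy, hx⟩)
      | exact Or.inr (Or.inr ⟨hx, hy⟩)
      | exact Or.inr (Or.inr ⟨hy, hx⟩)
  rcases key with ⟨h1, h2⟩ | ⟨h1, h2⟩ | ⟨h1, h2⟩
  · have hA := blockA 0 (by omega) h1
    have hB := blockB _ (by omega) (by omega) h2
    refine ⟨2 * m, fun i hi h => ?_⟩
    rcases lt_or_ge i m with h' | h'
    · exact hA.1 i h'
    · exact hB i (by omega) (by omega)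
  · have hA := blockA 0 (by omega) h1
    have hC := blockC _ le_rfl (by omega) h2
    refine ⟨m, fun i hi h => ?_⟩
    rcases lt_or_ge i m with h' | h'
    · exact hA.1 i h'
    · exact hC.1 i (by omega) hi
  · have hB := blockB _ (by omega) (by omega) h1
    have hC := blockC _ le_rfl (by omega) h2
    refine ⟨0, fun i hi h => ?_⟩
    rcases lt_or_ge i (2 * m) with h' | h'
    · exact hB i (by omega) h'
    · exact hC.1 i (by omega) hi

lemma thetaGraph_le_length (m : ℕ) (hm : 2 ≤ m) {a : Fin (3 * m - 1)}
    (w : (thetaGraph m hm).Walk a a) (hw : w.IsCycle) : 2 * m ≤ w.length := by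
  obtain ⟨c, hc⟩ := blocks_of_two_neighbours m hm
    (fun i => ∃ v ∈ w.support, v.val = i) ⟨a, a, w.start_mem_support, rfl⟩ (by
      rintro i ⟨v, hv, rfl⟩
      refine ⟨v.isLt, ?_⟩
      obtain ⟨x, y, hxy, hs⟩ := Set.ncard_eq_two.1 (hw.ncard_neighborSet_toSubgraph_eq_two hv)
      have hx : w.toSubgraph.Adj v x := by
        rw [← SimpleGraph.Subgraph.mem_neighborSet, hs]; simp
      have hy : w.toSubgraph.Adj v y := by
        rw [← SimpleGraph.Subgraph.mem_neighborSet, hs]; simp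
      exact ⟨x, y, fun h => hxy (Fin.ext h),
        ⟨x, w.mem_verts_toSubgraph.1 hx.snd_mem, rfl⟩,
        ⟨y, w.mem_verts_toSubgraph.1 hy.snd_mem, rfl⟩, hx.adj_sub, hy.adj_sub⟩)
  have hsub : range (3 * m - 1) \ Ico c (c + (m - 1)) ⊆
      w.support.tail.toFinset.image Fin.val := by
    intro i hi
    simp only [mem_sdiff, mem_range, mem_Ico, not_and, not_lt] at hi
    obtain ⟨v, hv, rfl⟩ := hc i hi.1 (by omega)
    refine mem_image_of_mem _ (List.mem_toFinset.2 ?_)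
    -- The base point, dropped from the head of the support, is still its last entry.
    rcases w.mem_support_iff.1 hv with rfl | h
    · exact w.end_mem_tail_support hw.not_nil
    · exact h
  have h1 := card_le_card hsub
  have h2 := le_card_sdiff (Ico c (c + (m - 1))) (range (3 * m - 1))
  have h3 : (w.support.tail.toFinset.image Fin.val).card ≤ w.length := by
    refine card_image_le.trans ((List.toFinset_card_le _).trans ?_)
    simp
  simp only [card_range, Nat.card_Ico] at h2
  omega

lemma thetaGraph_exists_cycle (m : ℕ) (hm : 2 ≤ m) :
    ∃ (a : Fin (3 * m - 1)) (w : (thetaGraph m hm).Walk a a), w.IsCycle ∧ w.length = 2 * m := by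
  refine (SimpleGraph.cycleGraph_isContained_iff (by omega)).1 ?_
  have hmn : 2 * m ≤ 3 * m - 1 := by omega
  refine ⟨⟨⟨Fin.castLE hmn, ?_⟩, Fin.castLE_injective hmn⟩⟩
  intro i j h
  rw [SimpleGraph.cycleGraph_adj'] at h
  have hi := i.isLt
  have hj := j.isLt
  change ThetaRel m i j
  unfold ThetaRel
  simp only [Fin.sub_def] at h
  -- As `0 < 2 * m - q + p < 4 * m`, residue `1` modulo `2 * m` means that the number is `1` or `2 * m + 1`.
  have aux : ∀ p q : ℕ, p < 2 * m → q < 2 * m → (2 * m - q + p) % (2 * m) = 1 →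
      p = q + 1 ∨ (p = 0 ∧ q = 2 * m - 1) := by
    intro p q hp hq hpq
    rcases lt_or_ge (2 * m - q + p) (2 * m) with h' | h'
    · rw [Nat.mod_eq_of_lt h'] at hpq; omega
    · rw [Nat.mod_eq_sub_mod h', Nat.mod_eq_of_lt (by omega)] at hpq; omega
  rcases h with h | h
  · have := aux _ _ hi hj h; omega
  · have := aux _ _ hj hi h; omega

/-- The path contributes `3m - 2` edges and the two chords are numbered `3m - 2` and `3m - 1`. -/
lemma thetaGraph_ncard_edgeSet (m : ℕ) (hm : 2 ≤ m) : (thetaGraph m hm).edgeSet.ncard = 3 * m := by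
  refine Set.ncard_eq_of_bijective (fun i _ =>
    if h : i < 3 * m - 2 then s(⟨i, by omega⟩, ⟨i + 1, by omega⟩)
    else if i = 3 * m - 2 then s(⟨0, by omega⟩, ⟨2 * m - 1, by omega⟩)
    else s(⟨m - 1, by omega⟩, ⟨3 * m - 2, by omega⟩)) ?_ ?_ ?_
  · intro e
    induction e with | _ x y
    intro h
    obtain ⟨x, hx⟩ := x
    obtain ⟨y, hy⟩ := y
    change ThetaRel m x y at h
    rcases h with h | h | h | h | h | h
    · refine ⟨x, by omega, ?_⟩
      rw [dif_pos (by omega)]; simp [h]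
    · refine ⟨y, by omega, ?_⟩
      rw [dif_pos (by omega)]; simp [h]
    · refine ⟨3 * m - 2, by omega, ?_⟩
      rw [dif_neg (by omega), if_pos rfl]; simp [h]
    · refine ⟨3 * m - 2, by omega, ?_⟩
      rw [dif_neg (by omega), if_pos rfl]; simp [h]
    · refine ⟨3 * m - 1, by omega, ?_⟩
      rw [dif_neg (by omega), if_neg (by omega)]; simp [h]
    · refine ⟨3 * m - 1, by omega, ?_⟩
      rw [dif_neg (by omega), if_neg (by omega)]; simp [h]
  · intro i hi
    split_ifs <;> rw [SimpleGraph.mem_edgeSet] <;> simp [thetaGraph, ThetaRel]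
  · intro i j hi hj h
    split_ifs at h <;> simp only [Sym2.eq_iff, Fin.mk.injEq] at h <;> omega

/-- For every `k ≥ 6` divisible by `3`, there is a simple graph with exactly `k` edges on
exactly `k - 1` vertices whose girth is exactly `2k/3`. -/
theorem statement10 (k : ℕ) (hk : 6 ≤ k) (h3 : 3 ∣ k) :
    ∃ G : SimpleGraph (Fin (k - 1)), G.edgeSet.ncard = k ∧ G.girth = ((2 * k / 3 : ℕ) : ℕ∞) := by
  obtain ⟨m, rfl⟩ := h3
  have hm : 2 ≤ m := by omega
  refine ⟨thetaGraph m hm, thetaGraph_ncard_edgeSet m hm, ?_⟩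
  obtain ⟨a, w, hw, hl⟩ := thetaGraph_exists_cycle m hm
  have hle := SimpleGraph.girth_le_length hw
  -- The girth is attained by a cycle, as the graph is not acyclic.
  obtain ⟨b, w', hw', hl'⟩ := SimpleGraph.exists_girth_eq_length.2 fun h => h w hw
  have hge := thetaGraph_le_length m hm w' hw'
  have : (thetaGraph m hm).girth = 2 * (3 * m) / 3 := by omega
  rw [this]
end

section
/- Let k ≥ 6 be an integer and let G be a simple graph whose girth is strictly greater than ⌊2k/3⌋. Then for every 1 ≤ i ≤ k, every collection of i distinct edges of G spans at least i vertices. -/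
open Finset

/-!
Suppose `S` has at most `k` edges and spans fewer than `#S` vertices. Stripping leaves shows that a
nonempty edge set spanning at most as many vertices as it has edges contains a cycle. This yields a
cycle `C₁ ⊆ S`, and, after deleting an edge `f` of `C₁`, a second cycle `C₂ ⊆ S \ {f}`. The symmetric
difference `C₁ ∆ C₂` contains `f` and has even degree everywhere, so it has no leaf and contains a
cycle as well. All three sets therefore have at least `g = girth G` edges, whence
`3 g ≤ |C₁| + |C₂| + |C₁ ∆ C₂| = 2 |C₁ ∪ C₂| ≤ 2 k`, contradicting `g > ⌊2k/3⌋`.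
-/

/-- An end of a longest path in a forest is a leaf. -/
lemma exists_leaf_of_isAcyclic {V : Type*} [Fintype V] (H : SimpleGraph V)
    (hH : H.IsAcyclic) {a b : V} (hab : H.Adj a b) :
    ∃ v w, H.Adj v w ∧ ∀ x, H.Adj v x → x = w := by
  classical
  have : Nonempty V := ⟨a⟩
  obtain ⟨u, v, p, hp, hmax⟩ := SimpleGraph.Walk.exists_isPath_forall_isPath_length_le_length H
  have hnil : ¬ p.Nil := by
    intro h
    have h1 := hmax _ _ (SimpleGraph.Walk.cons hab SimpleGraph.Walk.nil) (by simp [hab.ne])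
    rw [← SimpleGraph.Walk.length_eq_zero_iff] at h
    simp [h] at h1
  refine ⟨u, p.snd, p.adj_snd hnil, fun x hx => ?_⟩
  refine hH.eq_snd_of_adj_start hp hx ?_
  by_contra hxs
  have h1 := hmax _ _ (SimpleGraph.Walk.cons hx.symm p) (by simp [hp, hxs])
  simp at h1

/-- A nonempty edge set without leaves contains the edge set `C` of a cycle, recorded through the
two properties needed later: it has at least `girth G` edges and all its degrees are even. -/
lemma exists_cycle_of_no_leaf {V : Type*} [Fintype V] [DecidableEq V] (G : SimpleGraph V)
    [DecidableRel G.Adj] (T : Finset (Sym2 V)) (hT : T ⊆ G.edgeFinset) (hne : T.Nonempty)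
    (hdeg : ∀ v, #{e ∈ T | v ∈ e} ≠ 1) :
    ∃ C ⊆ T, C.Nonempty ∧ G.girth ≤ #C ∧ ∀ v, Even #{e ∈ C | v ∈ e} := by
  set H := SimpleGraph.fromEdgeSet (T : Set (Sym2 V)) with hHdef
  have hadj : ∀ v w, H.Adj v w ↔ s(v, w) ∈ T := by
    intro v w
    simp only [hHdef, SimpleGraph.fromEdgeSet_adj, mem_coe, and_iff_left_iff_imp]
    intro h
    have := hT h
    rw [SimpleGraph.mem_edgeFinset, SimpleGraph.mem_edgeSet] at this
    exact this.ne
  have hHG : H ≤ G := by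
    intro v w h
    simpa using hT ((hadj v w).1 h)
  by_cases hac : H.IsAcyclic
  · exfalso
    obtain ⟨e, he⟩ := hne
    induction e with | _ a b
    obtain ⟨v, w, hvw, huniq⟩ := exists_leaf_of_isAcyclic H hac ((hadj a b).2 he)
    apply hdeg v
    rw [card_eq_one]
    refine ⟨s(v, w), ?_⟩
    ext e
    simp only [mem_filter, mem_singleton]
    constructor
    · rintro ⟨heT, hve⟩
      obtain ⟨x, rfl⟩ := Sym2.mem_iff_exists.1 hve
      rw [huniq x ((hadj v x).2 heT)]
    · rintro rfl
      exact ⟨(hadj v w).1 hvw, by simp⟩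
  · simp only [SimpleGraph.IsAcyclic, not_forall, not_not] at hac
    obtain ⟨a, p, hp⟩ := hac
    have hcard : #p.edges.toFinset = p.length := by
      rw [List.toFinset_card_of_nodup hp.edges_nodup, SimpleGraph.Walk.length_edges]
    refine ⟨p.edges.toFinset, ?_, ?_, ?_, ?_⟩
    · intro e he
      have h1 := p.edges_subset_edgeSet (List.mem_toFinset.1 he)
      induction e with | _ a b
      exact (hadj a b).1 h1
    · rw [← card_pos, hcard]
      have := hp.three_le_length
      omega
    · rw [hcard]
      simpa using SimpleGraph.girth_le_length (hp.mapLe hHG)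
    · intro v
      have h := (hp.isTrail.even_countP_edges_iff v).2 (by simp)
      rw [List.countP_eq_length_filter, ← List.toFinset_card_of_nodup (hp.edges_nodup.filter _),
        List.toFinset_filter] at h
      simpa only [decide_eq_true_eq] using h

/-- Reduces to the leafless case by deleting leaf edges: each deletion removes one edge and at least
one spanned vertex, so it preserves `hspan`. -/
lemma exists_cycle_of_card_span_le {V : Type*} [Fintype V] [DecidableEq V] (G : SimpleGraph V)
    [DecidableRel G.Adj] (T : Finset (Sym2 V)) (hT : T ⊆ G.edgeFinset) (hne : T.Nonempty)
    (hspan : #{v : V | ∃ e ∈ T, v ∈ e} ≤ #T) :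
    ∃ C ⊆ T, C.Nonempty ∧ G.girth ≤ #C ∧ ∀ v, Even #{e ∈ C | v ∈ e} := by
  induction T using Finset.strongInduction with
  | H T ih =>
    by_cases hdeg : ∀ v, #{e ∈ T | v ∈ e} ≠ 1
    · exact exists_cycle_of_no_leaf G T hT hne hdeg
    push Not at hdeg
    obtain ⟨v, hv⟩ := hdeg
    obtain ⟨f, hf⟩ := card_eq_one.1 hv
    have hfT : f ∈ T ∧ v ∈ f := by
      have : f ∈ ({e ∈ T | v ∈ e} : Finset _) := by simp [hf]
      simpa using this
    have huniq : ∀ e ∈ T, v ∈ e → e = f := by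
      intro e he hve
      have : e ∈ ({e ∈ T | v ∈ e} : Finset _) := by simp [he, hve]
      simpa [hf] using this
    have hsub : ({w : V | ∃ e ∈ T.erase f, w ∈ e} : Finset V) ⊆
        ({w : V | ∃ e ∈ T, w ∈ e} : Finset V).erase v := by
      intro w hw
      simp only [mem_filter, mem_univ, true_and, mem_erase] at hw ⊢
      obtain ⟨e, ⟨hef, heT⟩, hwe⟩ := hw
      refine ⟨?_, e, heT, hwe⟩
      rintro rfl
      exact hef (huniq e heT hwe)
    have hvmem : v ∈ ({w : V | ∃ e ∈ T, w ∈ e} : Finset V) := by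
      simpa using ⟨f, hfT⟩
    have h1 := card_le_card hsub
    rw [card_erase_of_mem hvmem] at h1
    have h2 := card_erase_of_mem hfT.1
    have hne' : (T.erase f).Nonempty := by
      -- Otherwise `T = {f}` is one edge, but the two ends of `f` are distinct.
      obtain ⟨w, rfl⟩ := Sym2.mem_iff_exists.1 hfT.2
      have hvw : v ≠ w := by
        have := hT hfT.1
        rw [SimpleGraph.mem_edgeFinset, SimpleGraph.mem_edgeSet] at this
        exact this.ne
      have h3 : ({v, w} : Finset V) ⊆ ({x : V | ∃ e ∈ T, x ∈ e} : Finset V) := by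
        intro x hx
        simp only [mem_insert, mem_singleton] at hx
        simpa using ⟨s(v, w), hfT.1, by simpa using hx⟩
      have h4 := card_le_card h3
      rw [card_pair hvw] at h4
      rw [← card_pos]
      omega
    obtain ⟨C, hC, hC'⟩ := ih (T.erase f) (erase_ssubset hfT.1)
      ((erase_subset _ _).trans hT) hne' (by omega)
    exact ⟨C, hC.trans (erase_subset _ _), hC'⟩

lemma card_symmDiff_add {α : Type*} [DecidableEq α] (A B : Finset α) :
    #(symmDiff A B) + 2 * #(A ∩ B) = #A + #B := by
  have h1 := card_sdiff_add_card_inter A B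
  have h2 := card_sdiff_add_card_inter B A
  have h3 : #(symmDiff A B) = #(A \ B) + #(B \ A) :=
    card_union_of_disjoint disjoint_sdiff_sdiff
  rw [inter_comm B A] at h2
  omega

/-- Let `k ≥ 6` and let `G` be a simple graph whose girth is strictly greater than
`⌊2k/3⌋`. Then for every `1 ≤ i ≤ k`, every collection of `i` distinct edges of `G`
spans at least `i` vertices. -/
theorem statement11 {V : Type*} [Fintype V] [DecidableEq V] (G : SimpleGraph V)
    [DecidableRel G.Adj] (k : ℕ) (hk : 6 ≤ k) (hg : ((2 * k / 3 : ℕ) : ℕ∞) < G.girth) :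
    ∀ i : ℕ, 1 ≤ i → i ≤ k → ∀ S ⊆ G.edgeFinset, S.card = i →
      i ≤ (Finset.univ.filter fun v : V => ∃ e ∈ S, v ∈ e).card := by
  intro i hi hik S hS hcard
  have hg' : 2 * k / 3 < G.girth := by exact_mod_cast hg
  by_contra! hlt
  have hSne : S.Nonempty := card_pos.1 (by omega)
  obtain ⟨C₁, hC₁, ⟨f, hf⟩, hg₁, heven₁⟩ :=
    exists_cycle_of_card_span_le G S hS hSne (by omega)
  have hfS := hC₁ hf
  have hpos : 0 < #{v : V | ∃ e ∈ S, v ∈ e} := by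
    obtain ⟨x, hx⟩ : ∃ x, x ∈ f := ⟨_, f.out_fst_mem⟩
    exact card_pos.2 ⟨x, by simpa using ⟨f, hfS, hx⟩⟩
  have hcard' := card_erase_of_mem hfS
  have hspan' : #{v : V | ∃ e ∈ S.erase f, v ∈ e} ≤ #{v : V | ∃ e ∈ S, v ∈ e} := by
    apply card_le_card
    intro x hx
    simp only [mem_filter, mem_univ, true_and] at hx ⊢
    obtain ⟨e, he, hxe⟩ := hx
    exact ⟨e, mem_of_mem_erase he, hxe⟩
  obtain ⟨C₂, hC₂, -, hg₂, heven₂⟩ :=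
    exists_cycle_of_card_span_le G (S.erase f) ((erase_subset _ _).trans hS)
      (card_pos.1 (by omega)) (by omega)
  have hC₂S : C₂ ⊆ S := hC₂.trans (erase_subset _ _)
  have hfC₂ : f ∉ C₂ := fun h => by simpa using hC₂ h
  have hunion : C₁ ∪ C₂ ⊆ S := union_subset hC₁ hC₂S
  have hD : symmDiff C₁ C₂ ⊆ S := fun e he => by
    rcases mem_symmDiff.1 he with h | h
    exacts [hC₁ h.1, hC₂S h.1]
  obtain ⟨C₃, hC₃, -, hg₃, -⟩ := exists_cycle_of_no_leaf G (symmDiff C₁ C₂) (hD.trans hS)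
    ⟨f, mem_symmDiff.2 (Or.inl ⟨hf, hfC₂⟩)⟩ (by
      intro v hv
      have h1 := card_symmDiff_add {e ∈ C₁ | v ∈ e} {e ∈ C₂ | v ∈ e}
      have h2 : symmDiff ({e ∈ C₁ | v ∈ e} : Finset _) {e ∈ C₂ | v ∈ e}
          = {e ∈ symmDiff C₁ C₂ | v ∈ e} := by
        ext e
        simp only [mem_symmDiff, mem_filter]
        tauto
      rw [h2, hv] at h1
      obtain ⟨m, hm⟩ := heven₁ v
      obtain ⟨n, hn⟩ := heven₂ v
      omega)
  have h1 := card_symmDiff_add C₁ C₂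
  have h2 := card_union_add_card_inter C₁ C₂
  have h3 := card_le_card hunion
  have h4 := card_le_card hC₃
  omega
end

section
/- Let k ≥ 8. Then for infinitely many values of n, m(n, 2, k) = Ω(n^α), where α = (k-3)/(k-5) if k ≡ 5 (mod 6); α = (k-2)/(k-4) if k ≡ 2 or 4 (mod 6); α = (k-1)/(k-3) if k ≡ 1 or 3 (mod 6); and α = k/(k-2) if k ≡ 0 (mod 6). Precisely: there exists a constant c > 0 such that for every N there exists n ≥ N with m(n, 2, k) ≥ c · n^α. -/
/-!
Let `M = k / 3 + 1`, so that `k < 3 * M`. The theorem follows from bipartite graphs of girth at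
least `2 * M` with `n ≤ 2 q ^ d` vertices and `n q / 2` edges, for every prime `q`, where
`1 + 1 / d` is the exponent in question.

*From girth to batch codes.* If at most `k` edges span fewer vertices than edges, the cycle space
of these edges over `ZMod 2` has dimension at least two. Three nonzero elements with sum zero cover
each edge at most twice, so one of them has fewer than `2 * M` edges
(`exists_small_even_subset`), which contradicts the girth.

*The graphs.* For a finite group `G` with two subgroups of order `q`, take as vertices the left
cosets and as edges the elements of `G`. Girth at least `2 * M` means that no nonempty
alternating word of length below `2 * M` in the two subgroups is trivial. The group `G` consists of
the matrices in `SL₂(F_q[X])` that are upper unitriangular modulo `X`, taken modulo `X ^ u` in the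
upper right entry and modulo `X ^ r` in the others, with `r = ⌈M / 2⌉` and `u = ⌊M / 2⌋`. Hence
`|G| ≤ q ^ (2 r + u - 2)`. The subgroups are the images of `[1, a; 0, 1]` and `[1, 0; b X, 1]`.

*The girth bound.* The trace of an alternating word of length `2 n` has degree exactly `n`. If the
word is trivial in `G`, then having determinant one forces its trace to be `2` modulo
`X ^ (r + u)`, so `n ≥ r + u = M` (`LeadBound.not_congr_one`).

This construction replaces the graphs of Lazebnik, Ustimenko and Woldar and has the same girth
and density.
-/

open Finset

/-! ### Cycle space -/

/-- A bipartite multigraph (edge set `E`, end maps `p` and `l`) with fewer vertices than edges and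
fewer than `3 * M` edges contains a nonempty set of fewer than `2 * M` edges without vertices of
degree one. The boundary map over `ZMod 2` has rank at most the number of vertices minus one, so
its kernel contains three nonzero elements with sum zero. Each edge lies in at most two of their
supports, so one support has at most two thirds of the edges. -/
theorem exists_small_even_subset {E V₁ V₂ : Type*} [Fintype E] [DecidableEq E]
    [DecidableEq V₁] [DecidableEq V₂] (p : E → V₁) (l : E → V₂) (M : ℕ)
    (hE : Fintype.card E < 3 * M)
    (hV : (univ.image p).card + (univ.image l).card < Fintype.card E) :
    ∃ T : Finset E, T.Nonempty ∧ T.card < 2 * M ∧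
      (∀ e ∈ T, ∃ e' ∈ T, e' ≠ e ∧ p e' = p e) ∧
      (∀ e ∈ T, ∃ e' ∈ T, e' ≠ e ∧ l e' = l e) := by
  classical
  have hne : Nonempty E := by
    rw [← Fintype.card_pos_iff]; omega
  obtain ⟨e₀⟩ := hne
  -- one vertex is dropped from the target: its boundary value is determined by the others
  let D : Finset V₁ := (univ.image p).erase (p e₀)
  let L : Finset V₂ := univ.image l
  let f : (E → ZMod 2) → (D → ZMod 2) × (L → ZMod 2) := fun x =>
    (fun v => ∑ e with p e = v, x e, fun v => ∑ e with l e = v, x e)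
  have hp0 : p e₀ ∈ univ.image p := mem_image_of_mem _ (mem_univ _)
  have hDpos : 0 < (univ.image p).card := card_pos.2 ⟨_, hp0⟩
  have hcard : Fintype.card ((D → ZMod 2) × (L → ZMod 2)) * 2
      < Fintype.card (E → ZMod 2) := by
    simp only [Fintype.card_prod, Fintype.card_fun, ZMod.card, Fintype.card_coe]
    rw [← pow_add, ← pow_succ]
    apply Nat.pow_lt_pow_right (by norm_num)
    have : D.card = (univ.image p).card - 1 := card_erase_of_mem hp0
    have : L.card = (univ.image l).card := rfl
    omega
  obtain ⟨b, hb⟩ := Fintype.exists_lt_card_fiber_of_mul_lt_card f hcard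
  obtain ⟨x₁, x₂, x₃, h₁, h₂, h₃, h12, h13, h23⟩ := two_lt_card_iff.1 hb
  simp only [mem_filter, mem_univ, true_and] at h₁ h₂ h₃
  -- a difference of two elements of one fibre has zero boundary, hence no vertex of degree one
  have key : ∀ x y : E → ZMod 2, f x = f y → x ≠ y →
      let T : Finset E := univ.filter fun e => x e ≠ y e
      T.Nonempty ∧ (∀ e ∈ T, ∃ e' ∈ T, e' ≠ e ∧ p e' = p e) ∧
      (∀ e ∈ T, ∃ e' ∈ T, e' ≠ e ∧ l e' = l e) := by
    intro x y hxy hne T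
    have hl : ∀ v, ∑ e with l e = v, (x e - y e) = 0 := by
      intro v
      by_cases hv : v ∈ univ.image l
      · have := congrFun (congrArg Prod.snd hxy) ⟨v, hv⟩
        rw [sum_sub_distrib, sub_eq_zero]
        exact this
      · apply sum_eq_zero
        intro e he
        exact absurd (mem_image.2 ⟨e, mem_univ _, (mem_filter.1 he).2⟩) hv
    -- both colour classes compute the total sum, which settles the dropped vertex
    have htot : ∑ e, (x e - y e) = 0 := by
      rw [← sum_fiberwise_of_maps_to (t := univ.image l) (g := l)
        (fun e _ => mem_image_of_mem _ (mem_univ _))]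
      exact sum_eq_zero fun v _ => hl v
    have hp' : ∀ v, v ≠ p e₀ → ∑ e with p e = v, (x e - y e) = 0 := by
      intro v hv0
      by_cases hv : v ∈ univ.image p
      · have := congrFun (congrArg Prod.fst hxy) ⟨v, mem_erase.2 ⟨hv0, hv⟩⟩
        rw [sum_sub_distrib, sub_eq_zero]
        exact this
      · apply sum_eq_zero
        intro e he
        exact absurd (mem_image.2 ⟨e, mem_univ _, (mem_filter.1 he).2⟩) hv
    have hp : ∀ v, ∑ e with p e = v, (x e - y e) = 0 := by
      intro v
      by_cases hv0 : v = p e₀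
      · rw [← sum_fiberwise_of_maps_to (t := univ.image p) (g := p)
          (fun e _ => mem_image_of_mem _ (mem_univ _)),
          sum_eq_single_of_mem (p e₀) hp0 (fun v _ hv => hp' v hv)] at htot
        rw [hv0]; exact htot
      · exact hp' v hv0
    refine ⟨?_, ?_, ?_⟩
    · obtain ⟨e, he⟩ := Function.ne_iff.1 hne
      exact ⟨e, by simp [T, he]⟩
    · intro e he
      by_contra! hcon
      have := hp (p e)
      rw [sum_eq_single_of_mem e (by simp)] at this
      · exact (mem_filter.1 he).2 (sub_eq_zero.1 this)
      · intro e' he' hee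
        by_contra hz
        exact hcon e' (mem_filter.2 ⟨mem_univ _, fun h => hz (sub_eq_zero.2 h)⟩) hee
          (mem_filter.1 he').2
    · intro e he
      by_contra! hcon
      have := hl (l e)
      rw [sum_eq_single_of_mem e (by simp)] at this
      · exact (mem_filter.1 he).2 (sub_eq_zero.1 this)
      · intro e' he' hee
        by_contra hz
        exact hcon e' (mem_filter.2 ⟨mem_univ _, fun h => hz (sub_eq_zero.2 h)⟩) hee
          (mem_filter.1 he').2
  have hsum : (univ.filter fun e => x₁ e ≠ x₂ e).card + (univ.filter fun e => x₁ e ≠ x₃ e).card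
      + (univ.filter fun e => x₂ e ≠ x₃ e).card ≤ 2 * Fintype.card E := by
    rw [card_filter, card_filter, card_filter, ← sum_add_distrib, ← sum_add_distrib,
      mul_comm, Fintype.card, ← smul_eq_mul, ← sum_const]
    apply sum_le_sum
    intro e _
    have : ∀ a b c : ZMod 2, ((if a ≠ b then 1 else 0) + (if a ≠ c then 1 else 0)
      + (if b ≠ c then 1 else 0) : ℕ) ≤ 2 := by decide
    exact this _ _ _
  rcases (by omega : (univ.filter fun e => x₁ e ≠ x₂ e).card < 2 * M ∨
      (univ.filter fun e => x₁ e ≠ x₃ e).card < 2 * M ∨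
      (univ.filter fun e => x₂ e ≠ x₃ e).card < 2 * M) with h | h | h
  · obtain ⟨a, b, c⟩ := key _ _ (h₁.trans h₂.symm) h12
    exact ⟨_, a, h, b, c⟩
  · obtain ⟨a, b, c⟩ := key _ _ (h₁.trans h₃.symm) h13
    exact ⟨_, a, h, b, c⟩
  · obtain ⟨a, b, c⟩ := key _ _ (h₂.trans h₃.symm) h23
    exact ⟨_, a, h, b, c⟩

/-! ### Alternating words -/

/-- A list of nontrivial elements taken alternately from `H c`, `H (!c)`, `H c`, … -/
def AltWord {G : Type*} [Group G] (H : Bool → Subgroup G) : Bool → List G → Prop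
  | _, [] => True
  | c, g :: w => g ∈ H c ∧ g ≠ 1 ∧ AltWord H (!c) w

section Words
variable {G : Type*} [Group G] {H : Bool → Subgroup G}

theorem AltWord.concat : ∀ {c : Bool} {w : List G} {a : G}, AltWord H c w →
    a ∈ H (c ^^ w.length.bodd) → a ≠ 1 → AltWord H c (w ++ [a])
  | c, [], a, _, ha, h1 => ⟨by simpa using ha, h1, trivial⟩
  | c, g :: w, a, ⟨hg, hg1, hw⟩, ha, h1 => by
    refine ⟨hg, hg1, AltWord.concat hw ?_ h1⟩
    simpa using ha

/-- Multiplying an alternating word on the right by an element of the subgroup of its last letter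
changes or deletes that last letter. The parity expression in the hypothesis on `a` names the
subgroup containing the last letter. -/
theorem AltWord.mul_last : ∀ {c : Bool} {w : List G} {a : G}, AltWord H c w → w ≠ [] →
    a ∈ H (c ^^ !w.length.bodd) →
    ∃ w', AltWord H c w' ∧ w'.prod = w.prod * a ∧
      (w'.length = w.length ∨ w'.length + 1 = w.length)
  | c, [], a, _, h, _ => absurd rfl h
  | c, [g], a, ⟨hg, hg1, _⟩, _, ha => by
    by_cases h : g * a = 1
    · exact ⟨[], trivial, by simp [h], by simp⟩
    · exact ⟨[g * a], ⟨(H c).mul_mem hg (by simpa using ha), h, trivial⟩, by simp, by simp⟩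
  | c, g :: g' :: w, a, ⟨hg, hg1, hw⟩, _, ha => by
    obtain ⟨w', h1, h2, h3⟩ := AltWord.mul_last hw (by simp) (a := a) (by simpa using ha)
    refine ⟨g :: w', ⟨hg, hg1, h1⟩, ?_, ?_⟩
    · rw [List.prod_cons, h2, List.prod_cons (a := g), mul_assoc]
    · simp only [List.length_cons] at h3 ⊢; omega

/-- If no alternating word of even length below `2 * M` starting in `H true` is trivial, then no
nonempty alternating word of length below `2 * M` is trivial. An even word starting in `H false` is
rotated; in an odd word the first letter is conjugated onto the last one, which gives a shorter
word. -/
theorem AltWord.prod_ne_one {M : ℕ}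
    (hev : ∀ (n : ℕ) (w : List G), AltWord H true w → w.length = 2 * n → 0 < n → n < M →
      w.prod ≠ 1) :
    ∀ (n : ℕ) (c : Bool) (w : List G), AltWord H c w → w.length = n → 0 < n → n < 2 * M →
      w.prod ≠ 1 := by
  have heven : ∀ (n : ℕ) (c : Bool) (w : List G), AltWord H c w → w.length = 2 * n → 0 < n →
      n < M → w.prod ≠ 1 := by
    intro n c w hw hlen hn hM h1
    cases c with
    | true => exact hev n w hw hlen hn hM h1
    | false =>
      match w, hw with
      | [], _ => simp at hlen; omega
      | a :: w, ⟨ha, ha1, hw⟩ =>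
        have hodd : w.length.bodd = true := by
          have := congrArg Nat.bodd hlen
          simpa using this
        refine hev n (w ++ [a]) (hw.concat (by simpa [hodd] using ha) ha1)
          (by simpa using hlen) hn hM ?_
        rw [List.prod_append, List.prod_singleton]
        rw [List.prod_cons] at h1
        exact mul_eq_one_iff_eq_inv.2 (eq_inv_of_mul_eq_one_right h1)
  intro n
  induction n using Nat.strong_induction_on with
  | _ n ih =>
    intro c w hw hlen hn hM h1
    rcases Nat.even_or_odd' n with ⟨j, rfl | rfl⟩
    · exact heven j c w hw hlen (by omega) (by omega) h1
    match w, hw with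
    | [], _ => simp at hlen
    | [a], ⟨_, ha1, _⟩ => exact ha1 (by simpa using h1)
    | a :: b :: w, ⟨ha, ha1, hw⟩ =>
      have hb : (b :: w).length.bodd = false := by
        have := congrArg Nat.bodd hlen
        simpa using this
      obtain ⟨w', h1', h2, h3⟩ := hw.mul_last (by simp) (a := a) (by
        rw [hb]; simpa using ha)
      have hw1 : w'.prod = 1 := by
        rw [List.prod_cons] at h1
        rw [h2]
        exact mul_eq_one_iff_eq_inv.2 (eq_inv_of_mul_eq_one_right h1)
      simp only [List.length_cons] at h3 hlen
      rcases h3 with h3 | h3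
      · exact heven j _ w' h1' (by omega) (by omega) (by omega) hw1
      · exact ih (2 * j - 1) (by omega) _ w' h1' (by omega) (by omega) (by omega) hw1

/-- The girth bound in the form needed later. Regard the elements of `G` as edges joining their left
cosets of `H true` and `H false`. A nonempty set of fewer than `2 * M` edges has a vertex of
degree one, since otherwise a walk in it that never turns back returns to an edge within `2 * M - 1`
steps and spells a trivial alternating word. -/
theorem no_small_closed_subset {M : ℕ}
    (hred : ∀ (n : ℕ) (c : Bool) (w : List G), AltWord H c w → w.length = n → 0 < n →
      n < 2 * M → w.prod ≠ 1)
    (T : Finset G) (hT : T.Nonempty) (hcard : T.card < 2 * M)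
    (hnext : ∀ c, ∀ g ∈ T, ∃ g' ∈ T, g' ≠ g ∧ g⁻¹ * g' ∈ H c) : False := by
  obtain ⟨g₀, hg₀⟩ := hT
  choose! f hfT hfne hfH using hnext
  let s : ℕ → G := fun i => Nat.rec g₀ (fun j g => f j.bodd g) i
  have hs : ∀ i, s (i + 1) = f i.bodd (s i) := fun i => rfl
  have hsT : ∀ i, s i ∈ T := by
    intro i
    induction i with
    | zero => exact hg₀
    | succ i ih => rw [hs]; exact hfT _ _ ih
  have hword : ∀ n i, ∃ w, AltWord H i.bodd w ∧ w.length = n ∧ w.prod = (s i)⁻¹ * s (i + n) := by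
    intro n
    induction n with
    | zero => intro i; exact ⟨[], trivial, rfl, by simp⟩
    | succ n ih =>
      intro i
      obtain ⟨w, h1, h2, h3⟩ := ih (i + 1)
      refine ⟨((s i)⁻¹ * s (i + 1)) :: w, ⟨?_, ?_, ?_⟩, by simp [h2], ?_⟩
      · rw [hs]; exact hfH _ _ (hsT i)
      · intro h
        exact hfne i.bodd _ (hsT i) (by rw [← hs]; exact (inv_mul_eq_one.1 h).symm)
      · simpa using h1
      · rw [List.prod_cons, h3, show i + 1 + n = i + (n + 1) by ring]; group
  obtain ⟨i, hi, j, hj, hij, heq⟩ := exists_ne_map_eq_of_card_lt_of_maps_to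
    (s := Finset.range (T.card + 1)) (t := T) (by simp) (f := s) (fun i _ => hsT i)
  rw [Finset.mem_range] at hi hj
  wlog hlt : i < j generalizing i j
  · exact this j hj i hi hij.symm heq.symm (by omega)
  obtain ⟨w, h1, h2, h3⟩ := hword (j - i) i
  refine hred (j - i) _ w h1 h2 (by omega) (by omega) ?_
  rw [h3, show i + (j - i) = j by omega, heq]; group
end Words

/-! ### A finite quotient of a subgroup of `SL₂(F[X])` -/

section Loop
open Polynomial
variable (F : Type*) [Field F]

/-- The matrices in `SL₂(F[X])` that are upper unitriangular modulo `X`. -/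
def loopUnipotent : Subgroup (Matrix.SpecialLinearGroup (Fin 2) F[X]) where
  carrier := {g | X ∣ g 0 0 - 1 ∧ X ∣ g 1 0 ∧ X ∣ g 1 1 - 1}
  one_mem' := by simp
  mul_mem' := by
    rintro g h ⟨⟨a, ha⟩, ⟨b, hb⟩, ⟨c, hc⟩⟩ ⟨⟨a', ha'⟩, ⟨b', hb'⟩, ⟨c', hc'⟩⟩
    simp only [Set.mem_ofPred_eq, Matrix.SpecialLinearGroup.coe_mul, Matrix.mul_apply,
      Fin.sum_univ_two]
    rw [sub_eq_iff_eq_add] at ha hc ha' hc'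
    rw [ha, hb, hc, ha', hb', hc']
    exact ⟨⟨a * X * a' + a + a' + g 0 1 * b', by ring⟩,
      ⟨b * (X * a' + 1) + (X * c + 1) * b', by ring⟩,
      ⟨b * h 0 1 + c * X * c' + c + c', by ring⟩⟩
  inv_mem' := by
    rintro g ⟨ha, hb, hc⟩
    simp only [Set.mem_ofPred_eq, Matrix.SpecialLinearGroup.coe_inv, Matrix.adjugate_fin_two]
    simpa using ⟨hc, hb, ha⟩

variable {F}

theorem loopUnipotent_det (g : loopUnipotent F) :
    g.1 0 0 * g.1 1 1 - g.1 0 1 * g.1 1 0 = 1 := by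
  have := g.1.det_coe
  rwa [Matrix.det_fin_two] at this

theorem mul_entry (g h : loopUnipotent F) (i j : Fin 2) :
    (g * h).1 i j = g.1 i 0 * h.1 0 j + g.1 i 1 * h.1 1 j := by
  simp [Matrix.mul_apply, Fin.sum_univ_two]

/-- Congruence of matrices modulo `X ^ r` in the entries `(0,0)`, `(1,0)`, `(1,1)` and modulo `X ^ u`
in the entry `(0,1)`. -/
def CongrRel (r u : ℕ) (g h : loopUnipotent F) : Prop :=
  X ^ r ∣ g.1 0 0 - h.1 0 0 ∧ X ^ u ∣ g.1 0 1 - h.1 0 1 ∧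
    X ^ r ∣ g.1 1 0 - h.1 1 0 ∧ X ^ r ∣ g.1 1 1 - h.1 1 1

theorem CongrRel.mul_left {r u : ℕ} (hur : u ≤ r) (hru : r ≤ u + 1) {g h : loopUnipotent F}
    (k : loopUnipotent F) (hgh : CongrRel r u g h) : CongrRel r u (k * g) (k * h) := by
  obtain ⟨h1, h2, h3, h4⟩ := hgh
  have hk : X ∣ k.1 1 0 := k.2.2.1
  have h2' : X ^ r ∣ k.1 1 0 * (g.1 0 1 - h.1 0 1) :=
    (pow_dvd_pow X hru).trans (by rw [pow_succ']; exact mul_dvd_mul hk h2)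
  have h4' : X ^ u ∣ g.1 1 1 - h.1 1 1 := (pow_dvd_pow X hur).trans h4
  simp only [CongrRel, mul_entry]
  refine ⟨?_, ?_, ?_, ?_⟩
  · convert dvd_add (h1.mul_left (k.1 0 0)) (h3.mul_left (k.1 0 1)) using 1; ring
  · convert dvd_add (h2.mul_left (k.1 0 0)) (h4'.mul_left (k.1 0 1)) using 1; ring
  · convert dvd_add (h1.mul_left (k.1 1 0)) (h3.mul_left (k.1 1 1)) using 1; ring
  · convert dvd_add h2' (h4.mul_left (k.1 1 1)) using 1; ring

theorem CongrRel.mul_right {r u : ℕ} (hur : u ≤ r) (hru : r ≤ u + 1) {g h : loopUnipotent F}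
    (k : loopUnipotent F) (hgh : CongrRel r u g h) : CongrRel r u (g * k) (h * k) := by
  obtain ⟨h1, h2, h3, h4⟩ := hgh
  have hk : X ∣ k.1 1 0 := k.2.2.1
  have h2' : X ^ r ∣ (g.1 0 1 - h.1 0 1) * k.1 1 0 :=
    (pow_dvd_pow X hru).trans (by rw [pow_succ]; exact mul_dvd_mul h2 hk)
  have h1' : X ^ u ∣ g.1 0 0 - h.1 0 0 := (pow_dvd_pow X hur).trans h1
  simp only [CongrRel, mul_entry]
  refine ⟨?_, ?_, ?_, ?_⟩
  · convert dvd_add (h1.mul_right (k.1 0 0)) h2' using 1; ring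
  · convert dvd_add (h1'.mul_right (k.1 0 1)) (h2.mul_right (k.1 1 1)) using 1; ring
  · convert dvd_add (h3.mul_right (k.1 0 0)) (h4.mul_right (k.1 1 0)) using 1; ring
  · convert dvd_add (h3.mul_right (k.1 0 1)) (h4.mul_right (k.1 1 1)) using 1; ring

variable (F) in
/-- `CongrRel` as a multiplicative congruence; compatibility with products needs `u ≤ r ≤ u + 1`. -/
def loopCon (r u : ℕ) (hur : u ≤ r) (hru : r ≤ u + 1) : Con (loopUnipotent F) where
  r := CongrRel r u
  iseqv :=
    ⟨fun g => by simp [CongrRel],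
     fun {g h} hgh => by
      obtain ⟨h1, h2, h3, h4⟩ := hgh
      exact ⟨(dvd_sub_comm).1 h1, (dvd_sub_comm).1 h2, (dvd_sub_comm).1 h3, (dvd_sub_comm).1 h4⟩,
     fun {g h k} hgh hhk => by
      obtain ⟨h1, h2, h3, h4⟩ := hgh
      obtain ⟨h1', h2', h3', h4'⟩ := hhk
      exact ⟨by simpa using dvd_add h1 h1', by simpa using dvd_add h2 h2',
        by simpa using dvd_add h3 h3', by simpa using dvd_add h4 h4'⟩⟩
  mul' := fun {g h g' h'} hgh hgh' => by
    obtain ⟨h1, h2, h3, h4⟩ := hgh.mul_right hur hru g'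
    obtain ⟨h1', h2', h3', h4'⟩ := hgh'.mul_left hur hru h
    exact ⟨by simpa using dvd_add h1 h1', by simpa using dvd_add h2 h2',
        by simpa using dvd_add h3 h3', by simpa using dvd_add h4 h4'⟩

variable (F) in
/-- The finite group whose elements are the edges of the graph. -/
abbrev loopQuot (r u : ℕ) (hur : u ≤ r) (hru : r ≤ u + 1) := (loopCon F r u hur hru).Quotient

variable {r u : ℕ} {hur : u ≤ r} {hru : r ≤ u + 1}

theorem X_pow_dvd_of_coeff {a b : F[X]} {s : ℕ} (h0 : X ∣ a - b)
    (h : ∀ i : Fin (s - 1), a.coeff (i + 1) = b.coeff (i + 1)) : X ^ s ∣ a - b := by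
  rw [X_pow_dvd_iff]
  intro d hd
  rw [X_dvd_iff] at h0
  rcases d with _ | d
  · exact h0
  · rw [coeff_sub, sub_eq_zero]; exact h ⟨d, by omega⟩

/-- The coefficients that determine `g` modulo `CongrRel r u`. The constant coefficients of the
entries `(0,0)` and `(1,0)` are fixed by membership in `loopUnipotent`, and the entry `(1,1)` is
recovered from the determinant. -/
def coords (r u : ℕ) (g : loopUnipotent F) :
    (Fin (r - 1) → F) × (Fin u → F) × (Fin (r - 1) → F) :=
  (fun i => (g.1 0 0).coeff (i + 1), fun i => (g.1 0 1).coeff i,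
    fun i => (g.1 1 0).coeff (i + 1))

theorem congrRel_of_coords (hru : r ≤ u + 1) {g h : loopUnipotent F}
    (hgh : coords r u g = coords r u h) : CongrRel r u g h := by
  simp only [coords, Prod.mk.injEq] at hgh
  obtain ⟨e1, e2, e3⟩ := hgh
  have h1 : X ^ r ∣ g.1 0 0 - h.1 0 0 :=
    X_pow_dvd_of_coeff (by simpa using dvd_sub g.2.1 h.2.1) (congrFun e1)
  have h3 : X ^ r ∣ g.1 1 0 - h.1 1 0 :=
    X_pow_dvd_of_coeff (dvd_sub g.2.2.1 h.2.2.1) (congrFun e3)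
  have h2 : X ^ u ∣ g.1 0 1 - h.1 0 1 := by
    rw [X_pow_dvd_iff]
    intro d hd
    rw [coeff_sub, sub_eq_zero]
    exact congrFun e2 ⟨d, hd⟩
  refine ⟨h1, h2, h3, ?_⟩
  have h2' : X ^ r ∣ (g.1 0 1 - h.1 0 1) * h.1 1 0 :=
    (pow_dvd_pow X hru).trans (by rw [pow_succ]; exact mul_dvd_mul h2 h.2.2.1)
  have hmul : X ^ r ∣ g.1 0 0 * (g.1 1 1 - h.1 1 1) := by
    have : g.1 0 0 * (g.1 1 1 - h.1 1 1) = (g.1 0 1 - h.1 0 1) * h.1 1 0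
        + g.1 0 1 * (g.1 1 0 - h.1 1 0) - (g.1 0 0 - h.1 0 0) * h.1 1 1 := by
      linear_combination loopUnipotent_det g - loopUnipotent_det h
    rw [this]
    exact dvd_sub (dvd_add h2' (h3.mul_left _)) (h1.mul_right _)
  -- the entry `(0,0)` is `1` modulo `X`, hence prime to `X`
  refine IsCoprime.dvd_of_dvd_mul_left (IsCoprime.pow_left ?_) hmul
  obtain ⟨c, hc⟩ := g.2.1
  exact ⟨-c, 1, by linear_combination hc⟩

theorem loopQuot_coords_injective :
    Function.Injective fun x : loopQuot F r u hur hru => coords r u x.out := by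
  intro x y hxy
  have := congrRel_of_coords hru hxy
  rw [← Quotient.out_eq x, ← Quotient.out_eq y]
  exact Quotient.sound this

instance [Finite F] : Finite (loopQuot F r u hur hru) :=
  Finite.of_injective _ loopQuot_coords_injective

theorem card_loopQuot_le [Finite F] :
    Nat.card (loopQuot F r u hur hru) ≤ Nat.card F ^ (2 * (r - 1) + u) := by
  refine (Nat.card_le_card_of_injective _ loopQuot_coords_injective).trans_eq ?_
  have := Fintype.ofFinite F
  simp only [Nat.card_eq_fintype_card, Fintype.card_prod, Fintype.card_fun, Fintype.card_fin]
  ring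

variable (F) in
/-- The two root subgroups: `true` gives `[1, a; 0, 1]` and `false` gives `[1, 0; a X, 1]`. -/
noncomputable def rootHom (c : Bool) : Multiplicative F →* loopUnipotent F where
  toFun a := ⟨⟨if c then !![1, C a.toAdd; 0, 1] else !![1, 0; C a.toAdd * X, 1], by
    cases c <;> simp [Matrix.det_fin_two]⟩, by
    change X ∣ _ ∧ X ∣ _ ∧ X ∣ _
    cases c <;> simp⟩
  map_one' := by
    ext i j; cases c <;> fin_cases i <;> fin_cases j <;> simp
  map_mul' a b := by
    ext1; ext1 i j
    rw [mul_entry]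
    cases c <;> fin_cases i <;> fin_cases j <;> simp [add_mul, add_comm]

variable (F) in
/-- The root subgroups in the finite quotient `loopQuot`. -/
noncomputable def rootHomQuot (r u : ℕ) (hur : u ≤ r) (hru : r ≤ u + 1) (c : Bool) :
    Multiplicative F →* loopQuot F r u hur hru :=
  (loopCon F r u hur hru).mk'.comp (rootHom F c)

theorem rootHomQuot_injective (hu : 1 ≤ u) (hr : 2 ≤ r) (c : Bool) :
    Function.Injective (rootHomQuot F r u hur hru c) := by
  rw [injective_iff_map_eq_one]
  intro a ha
  have ha : CongrRel r u (rootHom F c a) 1 := (Con.eq _).1 ha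
  obtain ⟨h1, h2, h3, h4⟩ := ha
  cases c
  · have := X_pow_dvd_iff.1 h3 1 hr
    simpa [rootHom] using this
  · have := X_pow_dvd_iff.1 h2 0 hu
    simpa [rootHom] using this

/-- Degree pattern of a product of `n` blocks `[1, a; 0, 1] * [1, 0; b X, 1]` with `a, b ≠ 0`: the
entry `(0,0)` has degree exactly `n`, the entry `(1,0)` degree at most `n`, and for `n ≥ 1` the
second column has degree below `n`. The condition `1 ≤ i` in the last clause admits the identity
matrix at `n = 0`. -/
def LeadBound (n : ℕ) (g : loopUnipotent F) : Prop :=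
  (g.1 0 0).coeff n ≠ 0 ∧ (∀ i, n < i → (g.1 0 0).coeff i = 0) ∧
  (∀ i, n ≤ i → (g.1 0 1).coeff i = 0) ∧ (∀ i, n < i → (g.1 1 0).coeff i = 0) ∧
  (∀ i, n ≤ i → 1 ≤ i → (g.1 1 1).coeff i = 0)

theorem LeadBound.step {n : ℕ} {g : loopUnipotent F} (hg : LeadBound n g)
    {a b : Multiplicative F} (ha : a ≠ 1) (hb : b ≠ 1) :
    LeadBound (n + 1) (rootHom F true a * (rootHom F false b * g)) := by
  obtain ⟨h1, h2, h3, h4, h5⟩ := hg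
  have ha : a.toAdd ≠ 0 := ha
  have hb : b.toAdd ≠ 0 := hb
  simp only [LeadBound, mul_entry]
  simp only [rootHom, MonoidHom.coe_mk, OneHom.coe_mk]
  refine ⟨?_, ?_, ?_, ?_, ?_⟩
  · simp [mul_assoc, h2 (n+1), h4 (n+1), ha, hb, h1]
  · rintro (_ | i) hi
    · omega
    · simp [mul_assoc, h2 (i+1) (by omega), h4 (i+1) (by omega), h2 i (by omega)]
  · rintro (_ | i) hi
    · omega
    · simp [mul_assoc, h3 (i+1) (by omega), h5 (i+1) (by omega), h3 i (by omega)]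
  · rintro (_ | i) hi
    · omega
    · simp [mul_assoc, h2 i (by omega), h4 (i+1) (by omega)]
  · rintro (_ | i) hi _
    · omega
    · simp [mul_assoc, h3 i (by omega), h5 (i+1) (by omega)]

/-- The trace argument: for `g = 1 + N` of determinant one, `tr g - 2 = -det N`, which is divisible
by `X ^ (r + u)` when `g` is congruent to `1`, whereas `LeadBound` makes `tr g` have degree exactly
`n < r + u`. -/
theorem LeadBound.not_congr_one (hur : u ≤ r) {n : ℕ} {g : loopUnipotent F}
    (hg : LeadBound n g) (hn : 0 < n) (hnr : n < r + u) : ¬ CongrRel r u g 1 := by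
  rintro ⟨h1, h2, h3, h4⟩
  have e00 : ((1 : loopUnipotent F).1 0 0 : F[X]) = 1 := rfl
  have e01 : ((1 : loopUnipotent F).1 0 1 : F[X]) = 0 := rfl
  have e10 : ((1 : loopUnipotent F).1 1 0 : F[X]) = 0 := rfl
  have e11 : ((1 : loopUnipotent F).1 1 1 : F[X]) = 1 := rfl
  rw [e00] at h1; rw [e01, sub_zero] at h2; rw [e10, sub_zero] at h3; rw [e11] at h4
  have htr : X ^ (r + u) ∣ g.1 0 0 + g.1 1 1 - 2 := by
    have : g.1 0 0 + g.1 1 1 - 2 = g.1 1 0 * g.1 0 1 - (g.1 0 0 - 1) * (g.1 1 1 - 1) := by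
      linear_combination loopUnipotent_det g
    rw [this, pow_add]
    exact dvd_sub (mul_dvd_mul h3 h2) (mul_dvd_mul h1 ((pow_dvd_pow X hur).trans h4))
  have := X_pow_dvd_iff.1 htr n hnr
  have h2n : (2 : F[X]).coeff n = 0 := by
    rw [show (2 : F[X]) = C 2 from (map_ofNat C 2).symm, coeff_C, if_neg (by omega)]
  rw [coeff_sub, coeff_add, h2n, hg.2.2.2.2 n le_rfl hn] at this
  exact hg.1 (by simpa using this)

/-- An alternating word of length `2 * n` in the quotient lifts to a matrix with the degree pattern
`LeadBound n`. -/
theorem exists_lift_leadBound {F : Type*} [Field F] {r u : ℕ} {hur : u ≤ r} {hru : r ≤ u + 1} :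
    ∀ (n : ℕ) (w : List (loopQuot F r u hur hru)),
      AltWord (fun c => (rootHomQuot F r u hur hru c).range) true w → w.length = 2 * n →
      ∃ g : loopUnipotent F, (g : loopQuot F r u hur hru) = w.prod ∧ LeadBound n g
  | 0, w, _, hlen => by
    obtain rfl : w = [] := List.length_eq_zero_iff.1 (by simpa using hlen)
    refine ⟨1, rfl, ?_⟩
    refine ⟨by simp, ?_, by simp, by simp, ?_⟩
    · intro i hi; simp [coeff_one]; omega
    · intro i _ hi; simp [coeff_one]; omega
  | n + 1, [], _, hlen => by simp at hlen
  | n + 1, [x], _, hlen => by simp at hlen; omega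
  | n + 1, x :: y :: w, ⟨⟨a, hxa⟩, hx1, ⟨⟨b, hyb⟩, hy1, hw⟩⟩, hlen => by
    obtain ⟨g, hg, hlead⟩ := exists_lift_leadBound n w hw (by simpa [mul_add] using hlen)
    refine ⟨rootHom F true a * (rootHom F false b * g), ?_, hlead.step ?_ ?_⟩
    · rw [List.prod_cons, List.prod_cons, ← hg, ← hxa, ← hyb]; rfl
    · rintro rfl; exact hx1 (by rw [← hxa, map_one])
    · rintro rfl; exact hy1 (by rw [← hyb, map_one])

end Loop

/-! ### The coset graph and the lower bound -/

theorem card_le_m {n r k : ℕ} {S : Finset (Finset (Fin n))} (hS : IsBatchCode n r k S) :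
    S.card ≤ m n r k := by
  refine le_csSup ⟨Fintype.card (Finset (Fin n)), ?_⟩ ⟨S, hS, rfl⟩
  rintro _ ⟨T, _, rfl⟩
  exact card_le_univ T

/-- The coset graph of `G` with respect to two subgroups of order `q`. Its vertices are the left
cosets, so there are `2 |G| / q` of them, and its edges are the elements of `G`. The hypothesis
`hred` says that it has girth at least `2 * M`. -/
theorem exists_card_le_m {G : Type*} [Group G] [Finite G] (H : Bool → Subgroup G) (q M k : ℕ)
    (hH : ∀ c, Nat.card (H c) = q) (hM : 2 ≤ M) (hk : k < 3 * M)
    (hred : ∀ (n : ℕ) (c : Bool) (w : List G), AltWord H c w → w.length = n → 0 < n →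
      n < 2 * M → w.prod ≠ 1) :
    ∃ n : ℕ, n * q = 2 * Nat.card G ∧ q ≤ n ∧ Nat.card G ≤ m n 2 k := by
  classical
  have := Fintype.ofFinite G
  let p : G → G ⧸ H true := fun g => g
  let l : G → G ⧸ H false := fun g => g
  have hinter : ∀ g, g ∈ H true → g ∈ H false → g = 1 := by
    intro g h1 h2
    by_contra hg
    exact hred 2 true [g, g⁻¹] ⟨h1, hg, (H false).inv_mem h2, inv_ne_one.2 hg, trivial⟩ rfl
      (by omega) (by omega) (by simp)
  have hinj : ∀ g h, p g = p h → l g = l h → g = h := by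
    intro g h h1 h2
    exact inv_mul_eq_one.1 (hinter _ (QuotientGroup.eq.1 h1) (QuotientGroup.eq.1 h2))
  let V := (G ⧸ H true) ⊕ (G ⧸ H false)
  let e : V ≃ Fin (Nat.card V) := Finite.equivFin V
  have hcV : Nat.card V = Nat.card (G ⧸ H true) + Nat.card (G ⧸ H false) := Nat.card_sum
  have hc : ∀ c, Nat.card (G ⧸ H c) * q = Nat.card G := fun c => by
    rw [← hH c]; exact (Subgroup.card_eq_card_quotient_mul_card_subgroup _).symm
  let edge : G → Finset (Fin (Nat.card V)) := fun g => {e (.inl (p g)), e (.inr (l g))}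
  have hedge : Function.Injective edge := by
    intro g h hgh
    have h1 : e (.inl (p g)) ∈ edge h := by rw [← hgh]; simp [edge]
    have h2 : e (.inr (l g)) ∈ edge h := by rw [← hgh]; simp [edge]
    simp only [edge, mem_insert, mem_singleton, e.injective.eq_iff,
      reduceCtorEq, or_false, false_or] at h1 h2
    exact hinj g h (Sum.inl_injective h1) (Sum.inr_injective h2)
  refine ⟨Nat.card V, ?_, ?_, ?_⟩
  · rw [hcV, add_mul, hc, hc]; ring
  · -- `H false` meets each coset of `H true` at most once
    have : Nat.card (H false) ≤ Nat.card (G ⧸ H true) := by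
      refine Nat.card_le_card_of_injective (fun g : H false => p g.1) ?_
      intro g h hgh
      refine Subtype.ext (hinj _ _ hgh (QuotientGroup.eq.2 ?_))
      exact (H false).mul_mem ((H false).inv_mem g.2) h.2
    rw [hH] at this
    omega
  · have hbatch : IsBatchCode (Nat.card V) 2 k (univ.image edge) := by
      refine ⟨?_, ?_⟩
      · intro x hx
        obtain ⟨g, _, rfl⟩ := mem_image.1 hx
        exact card_pair (by simp [e.injective.eq_iff])
      · intro i _ hik S hS hSi
        by_contra! hlt
        let S' : Finset G := univ.filter fun g => edge g ∈ S
        have hS' : S'.image edge = S := by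
          ext x
          simp only [S', mem_image, mem_filter, mem_univ, true_and]
          constructor
          · rintro ⟨g, hg, rfl⟩; exact hg
          · intro hx
            obtain ⟨g, _, rfl⟩ := mem_image.1 (hS hx)
            exact ⟨g, hx, rfl⟩
        have hcS' : S'.card = i := by
          rw [← hSi, ← hS', card_image_of_injective _ hedge]
        have hspan : ((S'.image p).disjSum (S'.image l)).card ≤ (S.sup id).card := by
          refine card_le_card_of_injOn e ?_ e.injective.injOn
          intro v hv
          rw [mem_coe, mem_sup]
          rcases mem_disjSum.1 hv with ⟨a, ha, rfl⟩ | ⟨a, ha, rfl⟩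
          · obtain ⟨g, hg, rfl⟩ := mem_image.1 ha
            exact ⟨edge g, (mem_filter.1 hg).2, by simp [edge]⟩
          · obtain ⟨g, hg, rfl⟩ := mem_image.1 ha
            exact ⟨edge g, (mem_filter.1 hg).2, by simp [edge]⟩
        rw [card_disjSum] at hspan
        have himg : ∀ {W : Type _} [DecidableEq W] (f : G → W),
            univ.image (fun g : S' => f g) = S'.image f := by
          intro W _ f
          ext x; simp
        obtain ⟨T, hT, hTM, hTp, hTl⟩ := exists_small_even_subset (fun g : S' => p g)
          (fun g : S' => l g) M (by rw [Fintype.card_coe]; omega)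
          (by rw [himg, himg, Fintype.card_coe]; omega)
        refine no_small_closed_subset hred (T.map (Function.Embedding.subtype _))
          (by simpa using hT) (by simpa using hTM) ?_
        intro c g₁ hg₁
        obtain ⟨g, hg, rfl⟩ := mem_map.1 hg₁
        cases c
        · obtain ⟨g', hg', hne, heq⟩ := hTl g hg
          exact ⟨g', mem_map_of_mem _ hg', fun h => hne (Subtype.ext h),
            QuotientGroup.eq.1 heq.symm⟩
        · obtain ⟨g', hg', hne, heq⟩ := hTp g hg
          exact ⟨g', mem_map_of_mem _ hg', fun h => hne (Subtype.ext h),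
            QuotientGroup.eq.1 heq.symm⟩
    have := card_le_m hbatch
    rwa [card_image_of_injective _ hedge, card_univ, ← Nat.card_eq_fintype_card] at this

/-- The coset graph of `loopQuot` over `ZMod q` has `n ≤ 2 q ^ d` vertices and `n q / 2` edges, where
`d = 2 r + u - 3`, and girth at least `2 (r + u)`. -/
theorem exists_m_lower_bound (k r u : ℕ) (hur : u ≤ r) (hru : r ≤ u + 1) (hu : 1 ≤ u) (hr : 2 ≤ r)
    (hk : k < 3 * (r + u)) (N : ℕ) :
    ∃ n : ℕ, N ≤ n ∧
      1 / 4 * (n : ℝ) ^ (1 + 1 / (2 * (r : ℝ) + u - 3)) ≤ (m n 2 k : ℝ) := by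
  obtain ⟨q, hqN, hq⟩ := Nat.exists_infinite_primes N
  have := Fact.mk hq
  obtain ⟨n, hn, hqn, hm⟩ := exists_card_le_m
    (fun c => (rootHomQuot (ZMod q) r u hur hru c).range) q (r + u) k
    (fun c => by
      rw [← Nat.card_congr (MonoidHom.ofInjective (rootHomQuot_injective hu hr c)).toEquiv]
      simp)
    (by omega) hk
    (AltWord.prod_ne_one (by
      intro n w hw hlen hn hM h1
      obtain ⟨g, hg, hlead⟩ := exists_lift_leadBound n w hw hlen
      rw [h1] at hg
      exact hlead.not_congr_one hur hn hM ((Con.eq _).1 hg)))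
  refine ⟨n, hqN.trans hqn, ?_⟩
  obtain ⟨d, hd⟩ : ∃ d, 2 * (r - 1) + u = d + 1 := ⟨2 * (r - 1) + u - 1, by omega⟩
  have hcard : Nat.card (loopQuot (ZMod q) r u hur hru) ≤ q ^ (d + 1) := by
    have := card_loopQuot_le (F := ZMod q) (hur := hur) (hru := hru)
    rwa [hd, Nat.card_zmod] at this
  have hdR : 2 * (r : ℝ) + u - 3 = d := by
    have : 2 * r + u = d + 3 := by omega
    have : 2 * (r : ℝ) + u = d + 3 := by exact_mod_cast this
    linarith
  have hd0 : 0 < d := by omega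
  have hnq : n ≤ 2 * q ^ d := by
    have : n * q ≤ 2 * q ^ d * q := by rw [hn, mul_assoc, ← pow_succ]; omega
    exact Nat.le_of_mul_le_mul_right this hq.pos
  have hn0 : (0 : ℝ) < n := by exact_mod_cast hq.pos.trans_le hqn
  have hroot : (n : ℝ) ^ (1 / (d : ℝ)) ≤ 2 * q := by
    have h1 : (n : ℝ) ≤ (2 * q) ^ d := by
      have : (n : ℝ) ≤ 2 * q ^ d := by exact_mod_cast hnq
      refine this.trans ?_
      rw [mul_pow]
      gcongr
      exact le_self_pow₀ (by norm_num) hd0.ne'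
    calc (n : ℝ) ^ (1 / (d : ℝ)) ≤ ((2 * q : ℝ) ^ d) ^ (1 / (d : ℝ)) := by gcongr
      _ = 2 * q := by rw [one_div, Real.pow_rpow_inv_natCast (by positivity) hd0.ne']
  rw [hdR, Real.rpow_add hn0, Real.rpow_one]
  have hnR : (n : ℝ) * q = 2 * Nat.card (loopQuot (ZMod q) r u hur hru) := by exact_mod_cast hn
  have hmR : (Nat.card (loopQuot (ZMod q) r u hur hru) : ℝ) ≤ m n 2 k := by exact_mod_cast hm
  have := mul_le_mul_of_nonneg_left hroot hn0.le
  linarith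

/-- For `k ≥ 8`, for infinitely many `n`, `m(n, 2, k) = Ω(n^α)` where `α` depends on
`k mod 6` as in the statement. -/
theorem statement12 (k : ℕ) (hk : 8 ≤ k) :
    ∃ c : ℝ, 0 < c ∧ ∀ N : ℕ, ∃ n : ℕ, N ≤ n ∧
      c * (n : ℝ) ^
          (if k % 6 = 5 then ((k : ℝ) - 3) / ((k : ℝ) - 5)
            else if k % 6 = 2 ∨ k % 6 = 4 then ((k : ℝ) - 2) / ((k : ℝ) - 4)
            else if k % 6 = 1 ∨ k % 6 = 3 then ((k : ℝ) - 1) / ((k : ℝ) - 3)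
            else (k : ℝ) / ((k : ℝ) - 2)) ≤ (m n 2 k : ℝ) := by
  refine ⟨1 / 4, by norm_num, fun N => ?_⟩
  -- `2 * M` is the least even number above `2 * k / 3`, and `r + u = M`
  obtain ⟨M, hM⟩ : ∃ M, M = k / 3 + 1 := ⟨_, rfl⟩
  obtain ⟨n, hN, hn⟩ := exists_m_lower_bound k ((M + 1) / 2) (M / 2) (by omega) (by omega)
    (by omega) (by omega) (by omega) N
  refine ⟨n, hN, ?_⟩
  convert hn using 3
  have hk6 := Nat.div_add_mod k 6
  have hlt : k % 6 < 6 := Nat.mod_lt _ (by norm_num)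
  generalize hj : k / 6 = j at hk6
  have hj1 : 1 ≤ j := by omega
  have hjR : (1 : ℝ) ≤ j := by exact_mod_cast hj1
  generalize hs : k % 6 = s at hk6 hlt
  have hkR : (k : ℝ) = 6 * j + s := by exact_mod_cast hk6.symm
  rw [hkR]
  have hfrac : ∀ d x y : ℝ, d ≠ 0 → y = 2 * d → x = 2 * d + 2 → x / y = 1 + 1 / d := by
    rintro d _ _ hd rfl rfl
    field_simp
  interval_cases s
  all_goals
    first
    | rw [show (M + 1) / 2 = j + 1 by omega, show M / 2 = j by omega]
    | rw [show (M + 1) / 2 = j + 1 by omega, show M / 2 = j + 1 by omega]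
    norm_num only [Nat.reduceEqDiff, if_true, if_false, or_false, false_or, true_or, or_true]
    refine hfrac _ _ _ ?_ ?_ ?_ <;> push_cast
    · intro h; linarith
    all_goals ring
end

section
/- For every integer k ≥ 4 and every n, m(n, 2, k) ≤ 100·k·n^(1 + 1/⌊k/4⌋); in particular m(n, 2, k) = O(n^(1 + 1/⌊k/4⌋)). -/
/-!
Write `t = ⌊k/4⌋`. The bound comes from breadth-first search in a subgraph of large minimum degree.

If a graph `F` on `n` vertices has more than `d * n` edges, then an inclusion-minimal vertex set `U`
spanning more than `d * |U|` edges induces a graph of minimum degree at least `d + 1`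
(`exists_min_degree`). Take a breadth-first search tree of that induced graph, rooted at some `v`
(`exists_bfs`). Suppose a vertex `x` of level less than `t` is on two edges `f₁, f₂` outside the
tree. The tree paths from the root to `x` and to the other ends of `f₁, f₂` cover a set `A` of at
most `1 + (t - 1) + t + t = 3 * t` vertices, and `A` carries `|A| - 1` tree edges together with
`f₁, f₂`: that is `|A| + 1 ≤ 3 * t + 1 ≤ k` edges on `|A|` vertices, which the batch code property
forbids. Hence `x` lies on at most one non-tree edge and, apart from the edge to its parent, all its
other edges lead to children (`children_card`), so each level is at least `d - 1` times as large as
the preceding one. Level `t` therefore has at least `(d - 1) ^ t` vertices, whence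
`(d - 1) ^ t ≤ n`. The choice `d = ⌊n ^ (1 / t)⌋ + 2` violates this inequality, so
`|F| ≤ d * n ≤ 3 * n ^ (1 + 1 / t)`.
-/

open Finset

/-- A breadth-first search tree, rooted at `v`, of the connected component `C` of `v` in the graph
with edge set `E`: `l` is the level (distance to the root) and `p` the parent function. The values
of `l` and `p` outside `C`, and of `p` at the root, carry no information. -/
structure IsBFS {V : Type*} [DecidableEq V] (E : Finset (Finset V)) (v : V) (C : Finset V)
    (l : V → ℕ) (p : V → V) : Prop where
  root_mem : v ∈ C
  root_level : l v = 0
  eq_root : ∀ x ∈ C, l x = 0 → x = v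
  parent_mem : ∀ x ∈ C, x ≠ v → p x ∈ C
  parent_level : ∀ x ∈ C, x ≠ v → l (p x) + 1 = l x
  parent_edge : ∀ x ∈ C, x ≠ v → {x, p x} ∈ E
  edge : ∀ e ∈ E, ∀ x ∈ e, x ∈ C → ∃ y ∈ C, e = {x, y} ∧ l y ≤ l x + 1

/-- The set `A` consists of the vertices on the tree path from `x` to the root. -/
lemma IsBFS.ancestors {V : Type*} [DecidableEq V] {E : Finset (Finset V)} {v : V} {C : Finset V}
    {l : V → ℕ} {p : V → V} (h : IsBFS E v C l p) (j : ℕ) :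
    ∀ x ∈ C, l x = j → ∃ A ⊆ C, v ∈ A ∧ x ∈ A ∧ (A.erase v).card ≤ j ∧
      ∀ y ∈ A, y ≠ v → p y ∈ A := by
  induction j with
  | zero =>
    intro x hx hl
    obtain rfl := h.eq_root x hx hl
    exact ⟨{x}, by simpa using hx, by simp, by simp, by simp, by simp⟩
  | succ j ih =>
    intro x hx hl
    have hxv : x ≠ v := by
      rintro rfl
      rw [h.root_level] at hl
      omega
    have h1 := h.parent_level x hx hxv
    obtain ⟨A, hAC, hvA, hpA, hcard, hcl⟩ := ih (p x) (h.parent_mem x hx hxv) (by omega)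
    refine ⟨insert x A, ?_, by simp [hvA], by simp, ?_, ?_⟩
    · intro y hy
      rcases Finset.mem_insert.1 hy with rfl | hy
      exacts [hx, hAC hy]
    · rw [Finset.erase_insert_of_ne hxv]
      exact (Finset.card_insert_le _ _).trans (by omega)
    · intro y hy hyv
      rcases Finset.mem_insert.1 hy with rfl | hy
      · exact Finset.mem_insert_of_mem hpA
      · exact Finset.mem_insert_of_mem (hcl y hy hyv)

lemma IsBFS.treeEdge_inj {V : Type*} [DecidableEq V] {E : Finset (Finset V)} {v : V} {C : Finset V}
    {l : V → ℕ} {p : V → V} (h : IsBFS E v C l p) {x y : V} (hx : x ∈ C) (hxv : x ≠ v)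
    (hy : y ∈ C) (hyv : y ≠ v) (hxy : ({x, p x} : Finset V) = {y, p y}) : x = y := by
  by_contra hne
  have h1 : x ∈ ({y, p y} : Finset V) := hxy ▸ (by simp)
  have h2 : y ∈ ({x, p x} : Finset V) := hxy ▸ (by simp)
  have h3 : x = p y := by
    simp only [Finset.mem_insert, Finset.mem_singleton] at h1
    tauto
  have h4 : y = p x := by
    simp only [Finset.mem_insert, Finset.mem_singleton] at h2
    rcases h2 with h2 | h2
    · exact absurd h2.symm hne
    · exact h2
  have h5 := h.parent_level x hx hxv
  have h6 := h.parent_level y hy hyv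
  rw [← h4] at h5
  rw [← h3] at h6
  omega

/-- The hypothesis `hs` is the batch code property for edge sets that exceed their vertex sets by
one: such a configuration needs more than `3 * t` vertices. -/
lemma IsBFS.nontree_unique {V : Type*} [DecidableEq V] {E : Finset (Finset V)} {v : V}
    {C : Finset V} {l : V → ℕ} {p : V → V} (h : IsBFS E v C l p) {t : ℕ}
    (hs : ∀ (A : Finset V) (S : Finset (Finset V)), S ⊆ E → (∀ e ∈ S, e ⊆ A) →
      S.card = A.card + 1 → 3 * t < A.card)
    {x : V} (hx : x ∈ C) (hxt : l x < t) {f g : Finset V} (hf : f ∈ E) (hg : g ∈ E)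
    (hxf : x ∈ f) (hxg : x ∈ g) (hf' : ∀ y ∈ C, y ≠ v → f ≠ {y, p y})
    (hg' : ∀ y ∈ C, y ≠ v → g ≠ {y, p y}) : f = g := by
  by_contra hne
  obtain ⟨y, hy, rfl, hyl⟩ := h.edge f hf x hxf hx
  obtain ⟨z, hz, rfl, hzl⟩ := h.edge g hg x hxg hx
  obtain ⟨A, hA, hvA, hxA, hcA, hclA⟩ := h.ancestors _ x hx rfl
  obtain ⟨B, hB, hvB, hyB, hcB, hclB⟩ := h.ancestors _ y hy rfl
  obtain ⟨D, hD, hvD, hzD, hcD, hclD⟩ := h.ancestors _ z hz rfl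
  set W := A ∪ B ∪ D with hW
  have hWC : W ⊆ C := Finset.union_subset (Finset.union_subset hA hB) hD
  have hvW : v ∈ W := by simp [hW, hvA]
  have hWcard : W.card = (W.erase v).card + 1 := (Finset.card_erase_add_one hvW).symm
  have hWle : (W.erase v).card ≤ l x + l y + l z := by
    rw [hW, Finset.erase_union_distrib, Finset.erase_union_distrib]
    refine (Finset.card_union_le _ _).trans ?_
    have := Finset.card_union_le (A.erase v) (B.erase v)
    omega
  have hWcl : ∀ w ∈ W, w ≠ v → p w ∈ W := by
    intro w hw hwv
    simp only [hW, Finset.mem_union] at hw ⊢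
    rcases hw with (hw | hw) | hw
    · exact Or.inl (Or.inl (hclA w hw hwv))
    · exact Or.inl (Or.inr (hclB w hw hwv))
    · exact Or.inr (hclD w hw hwv)
  -- `T` is the set of tree edges with both ends in `W`.
  set T := (W.erase v).image (fun w => ({w, p w} : Finset V)) with hT
  have hTcard : T.card = (W.erase v).card := by
    apply Finset.card_image_of_injOn
    intro a ha b hb hab
    simp only [Finset.coe_erase, Set.mem_sdiff, Finset.mem_coe, Set.mem_singleton_iff] at ha hb
    exact h.treeEdge_inj (hWC ha.1) ha.2 (hWC hb.1) hb.2 hab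
  have hnT : ∀ e : Finset V, (∀ y ∈ C, y ≠ v → e ≠ {y, p y}) → e ∉ T := by
    intro e he heT
    obtain ⟨w, hw, rfl⟩ := Finset.mem_image.1 heT
    rw [Finset.mem_erase] at hw
    exact he w (hWC hw.2) hw.1 rfl
  have hcard : (insert {x, y} (insert {x, z} T)).card = W.card + 1 := by
    rw [Finset.card_insert_of_notMem, Finset.card_insert_of_notMem (hnT _ hg'), hTcard, hWcard]
    rw [Finset.mem_insert]
    rintro (h1 | h1)
    · exact hne h1
    · exact hnT _ hf' h1
  have := hs W (insert {x, y} (insert {x, z} T)) ?_ ?_ hcard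
  · omega
  · intro e he
    rw [Finset.mem_insert, Finset.mem_insert] at he
    rcases he with rfl | rfl | he
    · exact hf
    · exact hg
    · obtain ⟨w, hw, rfl⟩ := Finset.mem_image.1 he
      rw [Finset.mem_erase] at hw
      exact h.parent_edge w (hWC hw.2) hw.1
  · intro e he
    rw [Finset.mem_insert, Finset.mem_insert] at he
    have hxW : x ∈ W := by simp [hW, hxA]
    have hyW : y ∈ W := by simp [hW, hyB]
    have hzW : z ∈ W := by simp [hW, hzD]
    rcases he with rfl | rfl | he
    · simp [Finset.insert_subset_iff, hxW, hyW]
    · simp [Finset.insert_subset_iff, hxW, hzW]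
    · obtain ⟨w, hw, rfl⟩ := Finset.mem_image.1 he
      rw [Finset.mem_erase] at hw
      simp [Finset.insert_subset_iff, hw.2, hWcl w hw.2 hw.1]

/-- At most two edges at a vertex of level less than `t` do not lead to a child: the edge to the
parent and one non-tree edge. -/
lemma IsBFS.children_card {V : Type*} [DecidableEq V] {E : Finset (Finset V)} {v : V}
    {C : Finset V} {l : V → ℕ} {p : V → V} (h : IsBFS E v C l p) {t : ℕ}
    (hs : ∀ (A : Finset V) (S : Finset (Finset V)), S ⊆ E → (∀ e ∈ S, e ⊆ A) →
      S.card = A.card + 1 → 3 * t < A.card)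
    {x : V} (hx : x ∈ C) (hxt : l x < t) :
    (E.filter (fun e => x ∈ e)).card ≤ (C.filter (fun y => y ≠ v ∧ p y = x)).card + 2 := by
  set N := E.filter (fun e => x ∈ e ∧ ∀ y ∈ C, y ≠ v → e ≠ {y, p y}) with hN
  have hNc : N.card ≤ 1 := by
    rw [Finset.card_le_one]
    intro f hf g hg
    rw [hN, Finset.mem_filter] at hf hg
    exact h.nontree_unique hs hx hxt hf.1 hg.1 hf.2.1 hg.2.1 hf.2.2 hg.2.2
  have hsub : E.filter (fun e => x ∈ e) ⊆
      insert {x, p x} (((C.filter (fun y => y ≠ v ∧ p y = x)).image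
        (fun y => ({y, p y} : Finset V))) ∪ N) := by
    intro e he
    rw [Finset.mem_filter] at he
    by_cases hc : ∀ y ∈ C, y ≠ v → e ≠ {y, p y}
    · exact Finset.mem_insert_of_mem
        (Finset.mem_union_right _ (Finset.mem_filter.2 ⟨he.1, he.2, hc⟩))
    · push Not at hc
      obtain ⟨y, hy, hyv, rfl⟩ := hc
      have h2 := he.2
      rw [Finset.mem_insert, Finset.mem_singleton] at h2
      rcases h2 with rfl | h2
      · exact Finset.mem_insert_self _ _
      · refine Finset.mem_insert_of_mem (Finset.mem_union_left _ (Finset.mem_image.2 ⟨y, ?_, rfl⟩))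
        exact Finset.mem_filter.2 ⟨hy, hyv, h2.symm⟩
  have h1 := Finset.card_le_card hsub
  have h2 := Finset.card_insert_le ({x, p x} : Finset V)
    (((C.filter (fun y => y ≠ v ∧ p y = x)).image (fun y => ({y, p y} : Finset V))) ∪ N)
  have h3 := Finset.card_union_le
    ((C.filter (fun y => y ≠ v ∧ p y = x)).image (fun y => ({y, p y} : Finset V))) N
  have h4 := Finset.card_image_le (s := C.filter (fun y => y ≠ v ∧ p y = x))
    (f := fun y => ({y, p y} : Finset V))
  omega

lemma IsBFS.level_card {V : Type*} [DecidableEq V] {E : Finset (Finset V)} {v : V}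
    {C : Finset V} {l : V → ℕ} {p : V → V} (h : IsBFS E v C l p) {t b : ℕ}
    (hs : ∀ (A : Finset V) (S : Finset (Finset V)), S ⊆ E → (∀ e ∈ S, e ⊆ A) →
      S.card = A.card + 1 → 3 * t < A.card)
    (hdeg : ∀ x ∈ C, b + 2 ≤ (E.filter (fun e => x ∈ e)).card) :
    ∀ j ≤ t, b ^ j ≤ (C.filter (fun x => l x = j)).card := by
  intro j
  induction j with
  | zero =>
    intro _
    rw [pow_zero, Nat.one_le_iff_ne_zero, ← Nat.pos_iff_ne_zero, Finset.card_pos]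
    exact ⟨v, Finset.mem_filter.2 ⟨h.root_mem, h.root_level⟩⟩
  | succ j ih =>
    intro hj
    have hmaps : ∀ y ∈ C.filter (fun x => l x = j + 1), p y ∈ C.filter (fun x => l x = j) := by
      intro y hy
      rw [Finset.mem_filter] at hy ⊢
      have hyv : y ≠ v := by
        rintro rfl
        have := h.root_level
        omega
      have := h.parent_level y hy.1 hyv
      exact ⟨h.parent_mem y hy.1 hyv, by omega⟩
    rw [Finset.card_eq_sum_card_fiberwise hmaps, pow_succ]
    refine (Nat.mul_le_mul_right b (ih (by omega))).trans ?_
    rw [← smul_eq_mul]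
    apply Finset.card_nsmul_le_sum
    intro x hx
    rw [Finset.mem_filter] at hx
    have h1 := h.children_card hs hx.1 (by omega)
    have h2 := hdeg x hx.1
    refine le_trans (by omega : b ≤ (C.filter (fun y => y ≠ v ∧ p y = x)).card) ?_
    apply Finset.card_le_card
    intro y hy
    simp only [Finset.mem_filter] at hy ⊢
    have := h.parent_level y hy.1 hy.2.1
    rw [hy.2.2] at this
    exact ⟨⟨hy.1, by omega⟩, hy.2.2⟩

/-- The tree is read off from distances to `v`: the parent of `x` is a neighbour closer to `v`. -/
lemma exists_bfs {V : Type*} [Fintype V] [DecidableEq V] (E : Finset (Finset V))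
    (hE : ∀ e ∈ E, e.card = 2) (v : V) :
    ∃ C l p, IsBFS E v C l p ∧ ∀ x ∈ C, x ≠ v → ∃ e ∈ E, x ∈ e := by
  classical
  let G : SimpleGraph V :=
    { Adj := fun x y => x ≠ y ∧ ({x, y} : Finset V) ∈ E
      symm := ⟨fun x y h => ⟨h.1.symm, by rw [Finset.pair_comm]; exact h.2⟩⟩
      loopless := ⟨fun x h => h.1 rfl⟩ }
  have hpar : ∀ x, ∃ y, G.Reachable v x → x ≠ v →
      G.Reachable v y ∧ G.dist v y + 1 = G.dist v x ∧ ({x, y} : Finset V) ∈ E := by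
    intro x
    by_cases hx : G.Reachable v x ∧ x ≠ v
    · obtain ⟨hr, hxv⟩ := hx
      obtain ⟨w, hw⟩ := hr.symm.exists_walk_length_eq_dist
      cases w with
      | nil => exact absurd rfl hxv
      | @cons _ y _ hadj w =>
        refine ⟨y, fun _ _ => ⟨w.reachable.symm, ?_, hadj.2⟩⟩
        have h1 : G.dist y v ≤ w.length := SimpleGraph.dist_le w
        obtain ⟨w', hw'⟩ := w.reachable.exists_walk_length_eq_dist
        have h2 := SimpleGraph.dist_le (SimpleGraph.Walk.cons hadj w')
        rw [SimpleGraph.Walk.length_cons] at hw h2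
        rw [SimpleGraph.dist_comm (u := v) (v := y), SimpleGraph.dist_comm (u := v) (v := x)]
        omega
    · exact ⟨x, fun h1 h2 => absurd ⟨h1, h2⟩ hx⟩
  choose p hp using hpar
  refine ⟨Finset.univ.filter (fun x => G.Reachable v x), G.dist v, p, ?_, ?_⟩
  · constructor
    · simp
    · simp
    · intro x hx hl
      simp only [Finset.mem_filter, Finset.mem_univ, true_and] at hx
      exact (hx.dist_eq_zero_iff.1 hl).symm
    · intro x hx hxv
      simp only [Finset.mem_filter, Finset.mem_univ, true_and] at hx ⊢
      exact (hp x hx hxv).1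
    · intro x hx hxv
      simp only [Finset.mem_filter, Finset.mem_univ, true_and] at hx
      exact (hp x hx hxv).2.1
    · intro x hx hxv
      simp only [Finset.mem_filter, Finset.mem_univ, true_and] at hx
      exact (hp x hx hxv).2.2
    · intro e he x hxe hx
      simp only [Finset.mem_filter, Finset.mem_univ, true_and] at hx
      obtain ⟨a, b, hab, rfl⟩ := Finset.card_eq_two.1 (hE e he)
      have key : ∀ y, G.Adj x y → G.Reachable v y ∧ G.dist v y ≤ G.dist v x + 1 := by
        intro y hxy
        obtain ⟨w, hw⟩ := hx.exists_walk_length_eq_dist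
        have h2 := SimpleGraph.dist_le (w.concat hxy)
        rw [SimpleGraph.Walk.length_concat] at h2
        exact ⟨hx.trans hxy.reachable, by omega⟩
      rw [Finset.mem_insert, Finset.mem_singleton] at hxe
      rcases hxe with rfl | rfl
      · have := key b ⟨hab, he⟩
        exact ⟨b, by simp [this.1], rfl, this.2⟩
      · have := key a ⟨hab.symm, by rw [Finset.pair_comm]; exact he⟩
        exact ⟨a, by simp [this.1], Finset.pair_comm _ _, this.2⟩
  · intro x hx hxv
    simp only [Finset.mem_filter, Finset.mem_univ, true_and] at hx
    exact ⟨_, (hp x hx hxv).2.2, by simp⟩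

/-- An inclusion-minimal `U` spanning more than `d * |U|` edges works: a vertex of degree at most
`d` could be deleted from it. -/
lemma exists_min_degree {V : Type*} [Fintype V] [DecidableEq V] (F : Finset (Finset V)) (d : ℕ)
    (hF : ∀ e ∈ F, e.Nonempty) (h : d * Fintype.card V < F.card) :
    ∃ U : Finset V, U.Nonempty ∧
      ∀ x ∈ U, d + 1 ≤ ((F.filter (fun e => e ⊆ U)).filter (fun e => x ∈ e)).card := by
  let P : Finset V → Prop := fun U => d * U.card < (F.filter (fun e => e ⊆ U)).card
  have huniv : P Finset.univ := by simpa [P] using h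
  obtain ⟨U, -, hU⟩ := exists_minimal_le_of_wellFoundedLT P Finset.univ huniv
  have hPU : d * U.card < (F.filter (fun e => e ⊆ U)).card := hU.prop
  refine ⟨U, ?_, ?_⟩
  · have hpos : 0 < (F.filter (fun e => e ⊆ U)).card := by omega
    obtain ⟨e, he⟩ := Finset.card_pos.1 hpos
    rw [Finset.mem_filter] at he
    exact (hF e he.1).mono he.2
  · intro x hx
    by_contra hlt
    have hnot : ¬ P (U.erase x) := hU.not_prop_of_lt (Finset.erase_ssubset hx)
    apply hnot
    have h1 : (F.filter (fun e => e ⊆ U.erase x)) =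
        (F.filter (fun e => e ⊆ U)).filter (fun e => ¬ x ∈ e) := by
      ext e
      simp only [Finset.mem_filter, Finset.subset_erase]
      tauto
    have h2 := Finset.card_filter_add_card_filter_not (s := F.filter (fun e => e ⊆ U))
      (fun e => x ∈ e)
    have h3 := Finset.card_erase_add_one hx
    have h4 : d * U.card = d * (U.erase x).card + d := by rw [← h3]; ring
    change d * (U.erase x).card < (F.filter (fun e => e ⊆ U.erase x)).card
    rw [h1]
    omega

lemma IsBatchCode.card_le_s13 {n k t b : ℕ} {F : Finset (Finset (Fin n))} (hF : IsBatchCode n 2 k F)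
    (ht : 3 * t + 1 ≤ k) (hb : n < b ^ t) : F.card ≤ (b + 1) * n := by
  by_contra! hlt
  obtain ⟨U, ⟨v, hv⟩, hU⟩ := exists_min_degree F (b + 1)
    (fun e he => Finset.card_pos.1 (by rw [hF.1 e he]; omega)) (by simpa using hlt)
  set E := F.filter (fun e => e ⊆ U) with hE
  obtain ⟨C, l, p, hB, hC⟩ := exists_bfs E (fun e he => hF.1 e (Finset.mem_filter.1 he).1) v
  have hCU : ∀ x ∈ C, x ∈ U := by
    intro x hx
    by_cases hxv : x = v
    · exact hxv ▸ hv
    · obtain ⟨e, he, hxe⟩ := hC x hx hxv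
      exact (Finset.mem_filter.1 he).2 hxe
  have h1 := hB.level_card (t := t) (b := b) ?_ (fun x hx => hU x (hCU x hx)) t le_rfl
  · have h2 := Finset.card_le_univ (C.filter (fun x => l x = t))
    rw [Fintype.card_fin] at h2
    omega
  · intro A S hS hSA hcard
    by_contra hle
    have h3 := hF.2 S.card (by omega) (by omega) S (hS.trans (Finset.filter_subset _ _)) rfl
    have h4 : S.sup id ⊆ A := Finset.sup_le (fun e he => hSA e he)
    have h5 := Finset.card_le_card h4
    omega

/-- For every `k ≥ 4` and every `n`, `m(n, 2, k) ≤ 100·k·n^(1 + 1/⌊k/4⌋)`. -/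
theorem statement13 (k : ℕ) (hk : 4 ≤ k) :
    ∀ n : ℕ, (m n 2 k : ℝ) ≤ 100 * (k : ℝ) * (n : ℝ) ^ ((1 : ℝ) + 1 / ((k / 4 : ℕ) : ℝ)) := by
  intro n
  set t := k / 4 with ht
  have ht1 : 1 ≤ t := by omega
  have htR : (t : ℝ) ≠ 0 := by positivity
  set r : ℝ := (n : ℝ) ^ (1 / (t : ℝ)) with hr
  have hr0 : 0 ≤ r := by positivity
  -- `b` is the least integer exceeding the `t`-th root of `n`.
  set b := ⌊r⌋₊ + 1 with hb
  have hrb : r < (b : ℝ) := by rw [hb]; exact_mod_cast Nat.lt_floor_add_one r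
  have hbr : (b : ℝ) ≤ r + 1 := by
    rw [hb]
    push_cast
    linarith [Nat.floor_le hr0]
  have hnb : n < b ^ t := by
    have h1 : r ^ t = n := by
      rw [hr, one_div]
      exact Real.rpow_inv_natCast_pow (Nat.cast_nonneg n) (by omega)
    have h2 : r ^ t < (b : ℝ) ^ t := pow_lt_pow_left₀ hrb hr0 (by omega)
    rw [h1] at h2
    exact_mod_cast h2
  have hm : m n 2 k ≤ (b + 1) * n := by
    apply csSup_le'
    rintro c ⟨F, hF, rfl⟩
    exact hF.card_le_s13 (by omega) hnb
  have hmR : (m n 2 k : ℝ) ≤ ((b : ℝ) + 1) * n := by exact_mod_cast hm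
  rcases Nat.eq_zero_or_pos n with hn | hn
  · rw [hn] at hmR ⊢
    rw [Nat.cast_zero, mul_zero] at hmR
    exact hmR.trans (by positivity)
  · have hn1 : (1 : ℝ) ≤ n := by exact_mod_cast hn
    have hr1 : 1 ≤ r := Real.one_le_rpow hn1 (by positivity)
    have hpow : (n : ℝ) ^ ((1 : ℝ) + 1 / (t : ℝ)) = n * r := by
      rw [Real.rpow_add (by linarith), Real.rpow_one]
    have hkR : (4 : ℝ) ≤ k := by exact_mod_cast hk
    rw [hpow]
    calc (m n 2 k : ℝ) ≤ ((b : ℝ) + 1) * n := hmR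
      _ ≤ (3 * r) * n := by gcongr; linarith
      _ = 3 * (n * r) := by ring
      _ ≤ 100 * (k : ℝ) * (n * r) := by gcongr; linarith
end

section
/- For every integer k ≥ 6, m(n, 2, k) = O(n^(3/2)); that is, there exist a constant C > 0 and n₀ such that for all n ≥ n₀, m(n, 2, k) ≤ C · n^(3/2). -/
/-!
The complete bipartite graph `K(2,3)` has six edges on only five vertices, so a batch code
with `r = 2` and `k ≥ 6` contains no copy of it: two distinct vertices have at most two common
neighbours (`card_common_nbrs_le`). Counting paths `a - v - b` by their midpoint and by their
endpoints gives `∑ d(v)² = ∑ₐ ∑_b codeg(a, b) ≤ 3 n²`, and Cauchy–Schwarz then yields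
`|F|² ≤ (∑ d(v))² ≤ n ∑ d(v)² ≤ 3 n³`, so that `|F| ≤ 2 n^(3/2)`.
Thus `K(2,3)` serves for all `k ≥ 6` at once, with a constant independent of `k`.
-/

open Finset

/-- The neighbourhood of `v` in the graph with edge set `F`. When every edge has two elements,
`v` is not its own neighbour, since `{v, v}` is a singleton. -/
def nbrs {n : ℕ} (F : Finset (Finset (Fin n))) (v : Fin n) : Finset (Fin n) :=
  univ.filter fun w => {v, w} ∈ F

lemma mem_nbrs {n : ℕ} {F : Finset (Finset (Fin n))} {v w : Fin n} :
    w ∈ nbrs F v ↔ {v, w} ∈ F := by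
  simp [nbrs]

lemma mem_nbrs_comm {n : ℕ} {F : Finset (Finset (Fin n))} {v w : Fin n} :
    w ∈ nbrs F v ↔ v ∈ nbrs F w := by
  rw [mem_nbrs, mem_nbrs, Finset.pair_comm]

lemma ne_of_mem_nbrs {n k : ℕ} {F : Finset (Finset (Fin n))} (hF : IsBatchCode n 2 k F)
    {v w : Fin n} (h : w ∈ nbrs F v) : v ≠ w := by
  rintro rfl
  have := hF.1 _ (mem_nbrs.1 h)
  simp at this

/-- Three common neighbours would give a `K(2,3)`: six edges spanning five vertices. -/
lemma card_common_nbrs_le {n k : ℕ} (hk : 6 ≤ k) {F : Finset (Finset (Fin n))}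
    (hF : IsBatchCode n 2 k F) {a b : Fin n} (hab : a ≠ b) :
    (nbrs F a ∩ nbrs F b).card ≤ 2 := by
  by_contra! h
  obtain ⟨T, hT, hT3⟩ := Finset.exists_subset_card_eq (show 3 ≤ _ from h)
  have ha : ∀ x ∈ T, x ∈ nbrs F a := fun x hx => (mem_inter.1 (hT hx)).1
  have hb : ∀ x ∈ T, x ∈ nbrs F b := fun x hx => (mem_inter.1 (hT hx)).2
  have hna : ∀ x ∈ T, a ≠ x := fun x hx => ne_of_mem_nbrs hF (ha x hx)
  have hnb : ∀ x ∈ T, b ≠ x := fun x hx => ne_of_mem_nbrs hF (hb x hx)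
  let f : Fin n × Fin n → Finset (Fin n) := fun p => {p.1, p.2}
  let S : Finset (Finset (Fin n)) := (({a, b} : Finset (Fin n)) ×ˢ T).image f
  have hcard : S.card = 6 := by
    rw [Finset.card_image_of_injOn, card_product, card_pair hab, hT3]
    rintro ⟨p, x⟩ hp ⟨q, y⟩ hq hpq
    simp only [coe_product, Set.mem_prod, mem_coe, mem_insert, mem_singleton] at hp hq
    have hpy : p ≠ y := by
      rcases hp.1 with rfl | rfl
      · exact hna y hq.2
      · exact hnb y hq.2
    have hpx : p ≠ x := by
      rcases hp.1 with rfl | rfl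
      · exact hna x hp.2
      · exact hnb x hp.2
    have hpq : ({p, x} : Finset (Fin n)) = {q, y} := hpq
    have h1 : p ∈ ({q, y} : Finset (Fin n)) := hpq ▸ mem_insert_self _ _
    have h2 : x ∈ ({q, y} : Finset (Fin n)) := hpq ▸ (by simp)
    simp only [mem_insert, mem_singleton] at h1 h2
    have e1 : p = q := h1.resolve_right hpy
    subst e1
    rw [h2.resolve_left hpx.symm]
  have hSF : S ⊆ F := by
    intro e he
    obtain ⟨⟨p, x⟩, hp, rfl⟩ := mem_image.1 he
    simp only [mem_product, mem_insert, mem_singleton] at hp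
    rcases hp.1 with rfl | rfl
    · exact mem_nbrs.1 (ha x hp.2)
    · exact mem_nbrs.1 (hb x hp.2)
  have hsup : S.sup id ⊆ {a, b} ∪ T := by
    refine Finset.sup_le (α := Finset (Fin n)) fun e he => ?_
    obtain ⟨⟨p, x⟩, hp, rfl⟩ := mem_image.1 he
    simp only [mem_product] at hp
    intro z hz
    simp only [f, id, mem_insert, mem_singleton] at hz
    rcases hz with rfl | rfl
    · exact mem_union_left _ hp.1
    · exact mem_union_right _ hp.2
  have h6 := hF.2 6 (by norm_num) hk S hSF hcard
  have h5 := (card_le_card hsup).trans (card_union_le _ _)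
  rw [card_pair hab, hT3] at h5
  omega

lemma card_le_sum_nbrs {n k : ℕ} {F : Finset (Finset (Fin n))} (hF : IsBatchCode n 2 k F) :
    F.card ≤ ∑ v, (nbrs F v).card := by
  rw [← Finset.card_sigma]
  refine (card_le_card fun e he => ?_).trans
    (card_image_le (f := fun p : (_ : Fin n) × Fin n => ({p.1, p.2} : Finset (Fin n))))
  obtain ⟨x, y, -, rfl⟩ := card_eq_two.1 (hF.1 e he)
  exact mem_image.2 ⟨⟨x, y⟩, by simpa [mem_nbrs] using he, rfl⟩

/-- Double counting of the triples `(v, a, b)` with `a` and `b` adjacent to `v`. -/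
lemma sum_sq_nbrs {n : ℕ} (F : Finset (Finset (Fin n))) :
    ∑ v, (nbrs F v).card ^ 2 = ∑ a, ∑ b, (nbrs F a ∩ nbrs F b).card := by
  have h1 : ∀ v, (nbrs F v).card ^ 2 =
      ∑ a, ∑ b, if a ∈ nbrs F v ∧ b ∈ nbrs F v then 1 else 0 := by
    intro v
    rw [sq, ← card_product, ← Fintype.sum_prod_type', ← card_filter]
    congr 1
    ext ⟨a, b⟩
    simp
  have h2 : ∀ a b, (nbrs F a ∩ nbrs F b).card =
      ∑ v, if a ∈ nbrs F v ∧ b ∈ nbrs F v then 1 else 0 := by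
    intro a b
    rw [← card_filter]
    congr 1
    ext v
    simp [mem_nbrs_comm (v := v)]
  simp_rw [h1, h2]
  rw [sum_comm]
  exact sum_congr rfl fun a _ => sum_comm

lemma sum_sq_nbrs_le {n k : ℕ} (hk : 6 ≤ k) {F : Finset (Finset (Fin n))}
    (hF : IsBatchCode n 2 k F) : ∑ v, (nbrs F v).card ^ 2 ≤ 3 * n ^ 2 := by
  rw [sum_sq_nbrs]
  have h : ∀ a b, (nbrs F a ∩ nbrs F b).card ≤ (if a = b then n else 0) + 2 := by
    intro a b
    split_ifs with hab
    · have := card_le_univ (nbrs F a ∩ nbrs F b)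
      rw [Fintype.card_fin] at this
      omega
    · simpa using card_common_nbrs_le hk hF hab
  calc ∑ a, ∑ b, (nbrs F a ∩ nbrs F b).card
      ≤ ∑ a : Fin n, ∑ b : Fin n, ((if a = b then n else 0) + 2) :=
        sum_le_sum fun a _ => sum_le_sum fun b _ => h a b
    _ = 3 * n ^ 2 := by
        simp [sum_add_distrib]
        ring

lemma sq_card_le {n k : ℕ} (hk : 6 ≤ k) {F : Finset (Finset (Fin n))}
    (hF : IsBatchCode n 2 k F) : F.card ^ 2 ≤ 3 * n ^ 3 := by
  calc F.card ^ 2 ≤ (∑ v, (nbrs F v).card) ^ 2 := Nat.pow_le_pow_left (card_le_sum_nbrs hF) 2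
    _ ≤ n * ∑ v, (nbrs F v).card ^ 2 := by
        simpa using sq_sum_le_card_mul_sum_sq (s := univ) (f := fun v => (nbrs F v).card)
    _ ≤ n * (3 * n ^ 2) := Nat.mul_le_mul_left _ (sum_sq_nbrs_le hk hF)
    _ = 3 * n ^ 3 := by ring

/-- For every `k ≥ 6`, `m(n, 2, k) = O(n^(3/2))`. -/
theorem statement14 (k : ℕ) (hk : 6 ≤ k) :
    ∃ C : ℝ, 0 < C ∧ ∃ n₀ : ℕ, ∀ n : ℕ, n₀ ≤ n →
      (m n 2 k : ℝ) ≤ C * (n : ℝ) ^ ((3 : ℝ) / 2) := by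
  refine ⟨2, by norm_num, 0, fun n _ => ?_⟩
  -- The supremum defining `m` is attained: the set is bounded and contains `0` (no edges).
  obtain ⟨F, hF, hm⟩ : m n 2 k ∈
      {c : ℕ | ∃ F : Finset (Finset (Fin n)), IsBatchCode n 2 k F ∧ F.card = c} := by
    refine Nat.sSup_mem ⟨0, ∅, ⟨by simp, ?_⟩, rfl⟩ ⟨Fintype.card (Finset (Fin n)), ?_⟩
    · intro i hi _ S hS hc
      rw [subset_empty.1 hS, card_empty] at hc
      omega
    · rintro c ⟨F, -, rfl⟩
      exact card_le_univ F
  rw [← hm]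
  have h : ((F.card : ℝ)) ^ 2 ≤ 3 * (n : ℝ) ^ 3 := by exact_mod_cast sq_card_le hk hF
  have hpow : ((n : ℝ) ^ ((3 : ℝ) / 2)) ^ 2 = (n : ℝ) ^ 3 := by
    rw [← Real.rpow_natCast, ← Real.rpow_mul (Nat.cast_nonneg n), ← Real.rpow_natCast]
    norm_num
  refine le_of_abs_le (abs_le_of_sq_le_sq ?_ (by positivity))
  rw [mul_pow, hpow]
  have : (0 : ℝ) ≤ (n : ℝ) ^ 3 := by positivity
  linarith
end

section
/- For every integer k with 6 ≤ k ≤ 8, every simple graph G with girth at least 6 has the property that every collection of i distinct edges of G spans at least i vertices, for all 1 ≤ i ≤ k. -/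
open Finset

/-!
A collection of fewer than nine edges in a graph of girth at least `6` cannot have more edges than
vertices. The proof is by induction on the collection `S`. If some vertex lies on exactly one edge
of `S`, deleting that edge also deletes the vertex, and the induction hypothesis applies. Otherwise
every spanned vertex has degree at least `2` in `S`. If all these degrees equal `2`, double counting
incidences gives `|S| ≤ |spanned vertices|`. Otherwise some `v` has three neighbours `u₁, u₂, u₃`;
each `uᵢ` has a further neighbour `wᵢ`, and `w₁` has a further neighbour `x`. The absence of cycles
of length `3`, `4` and `5` makes these eight vertices distinct
(`eight_le_card_spanned`), so at least `8 ≥ |S|` vertices are spanned.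
-/

section Girth

variable {V : Type*} {G : SimpleGraph V}

lemma no_triangle (hg : 6 ≤ G.girth) {a b c : V}
    (hab : G.Adj a b) (hbc : G.Adj b c) (hca : G.Adj c a) : False := by
  have hc : (SimpleGraph.Walk.cons hab (.cons hbc (.cons hca .nil))).IsCycle := by
    have := hab.ne; have := hbc.ne; have := hca.ne
    simp [SimpleGraph.Walk.isCycle_def, SimpleGraph.Walk.isTrail_def]
    grind
  have := hc.girth_le_length
  simp at this
  omega

lemma no_four_cycle (hg : 6 ≤ G.girth) {a b c d : V}
    (hab : G.Adj a b) (hbc : G.Adj b c) (hcd : G.Adj c d) (hda : G.Adj d a)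
    (hac : a ≠ c) (hbd : b ≠ d) : False := by
  have hc : (SimpleGraph.Walk.cons hab (.cons hbc (.cons hcd (.cons hda .nil)))).IsCycle := by
    have := hab.ne; have := hbc.ne; have := hcd.ne; have := hda.ne
    simp [SimpleGraph.Walk.isCycle_def, SimpleGraph.Walk.isTrail_def]
    grind
  have := hc.girth_le_length
  simp at this
  omega

lemma no_five_cycle (hg : 6 ≤ G.girth) {a b c d e : V}
    (hab : G.Adj a b) (hbc : G.Adj b c) (hcd : G.Adj c d) (hde : G.Adj d e) (hea : G.Adj e a)
    (hac : a ≠ c) (had : a ≠ d) (hbd : b ≠ d) (hbe : b ≠ e) (hce : c ≠ e) : False := by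
  have hc : (SimpleGraph.Walk.cons hab
      (.cons hbc (.cons hcd (.cons hde (.cons hea .nil))))).IsCycle := by
    have := hab.ne; have := hbc.ne; have := hcd.ne; have := hde.ne; have := hea.ne
    simp [SimpleGraph.Walk.isCycle_def, SimpleGraph.Walk.isTrail_def]
    grind
  have := hc.girth_le_length
  simp at this
  omega

end Girth

/-- A vertex of degree at least `2` in `S` has a neighbour other than any prescribed vertex. -/
lemma exists_other_neighbor {V : Type*} [DecidableEq V]
    {S : Finset (Sym2 V)} {v : V} (h : 2 ≤ (S.filter (v ∈ ·)).card) (u : V) : ∃ w, w ≠ u ∧ s(v, w) ∈ S := by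
  obtain ⟨e, he, hne⟩ := Finset.exists_mem_ne (s := S.filter (v ∈ ·)) (by omega) s(v, u)
  obtain ⟨heS, w, rfl⟩ := Finset.mem_filter.1 he
  exact ⟨w, fun hw => hne (by rw [hw]), heS⟩

section Spanned

variable {V : Type*} [Fintype V] [DecidableEq V]

/-- The set of vertices spanned by a collection `S` of edges: all endpoints of its members. -/
def spanned (S : Finset (Sym2 V)) : Finset V :=
  Finset.univ.filter fun v : V => ∃ e ∈ S, v ∈ e

lemma mem_spanned {S : Finset (Sym2 V)} {v : V} : v ∈ spanned S ↔ ∃ e ∈ S, v ∈ e := by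
  simp [spanned]

/-- Double counting of incidences: the degrees in `S` sum to `2 |S|`. -/
lemma two_mul_card_eq_sum {S : Finset (Sym2 V)} (hS : ∀ e ∈ S, ¬ e.IsDiag) :
    2 * S.card = ∑ v ∈ spanned S, (S.filter (v ∈ ·)).card := by
  have h := Finset.sum_card_bipartiteAbove_eq_sum_card_bipartiteBelow
    (s := spanned S) (t := S) (fun (v : V) (e : Sym2 V) => v ∈ e)
  simp only [Finset.bipartiteAbove, Finset.bipartiteBelow] at h
  rw [h, Finset.sum_const_nat (m := 2), mul_comm]
  intro e he
  rw [← Sym2.card_toFinset_of_not_isDiag e (hS e he)]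
  congr 1
  ext v
  simp only [Finset.mem_filter, mem_spanned, Sym2.mem_toFinset]
  exact ⟨fun h => h.2, fun h => ⟨⟨e, he, h⟩, h⟩⟩

/-- Breadth-first exploration from a vertex of degree at least `3`: when all degrees in `S` are at
least `2` and there is no cycle of length below `6`, eight distinct vertices are met. -/
lemma eight_le_card_spanned {G : SimpleGraph V} (hg : 6 ≤ G.girth) {S : Finset (Sym2 V)}
    (hS : ∀ a b, s(a, b) ∈ S → G.Adj a b)
    (hdeg : ∀ v ∈ spanned S, 2 ≤ (S.filter (v ∈ ·)).card)
    {v : V} (hv : 2 < (S.filter (v ∈ ·)).card) : 8 ≤ (spanned S).card := by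
  have memL : ∀ {a b}, s(a, b) ∈ S → a ∈ spanned S := fun {a b} h =>
    mem_spanned.2 ⟨_, h, Sym2.mem_mk_left a b⟩
  have memR : ∀ {a b}, s(a, b) ∈ S → b ∈ spanned S := fun {a b} h =>
    mem_spanned.2 ⟨_, h, Sym2.mem_mk_right a b⟩
  obtain ⟨e₁, h₁, e₂, h₂, e₃, h₃, h₁₂, h₁₃, h₂₃⟩ := Finset.two_lt_card.1 hv
  obtain ⟨k₁, u₁, rfl⟩ := Finset.mem_filter.1 h₁
  obtain ⟨k₂, u₂, rfl⟩ := Finset.mem_filter.1 h₂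
  obtain ⟨k₃, u₃, rfl⟩ := Finset.mem_filter.1 h₃
  have n₁₂ : u₁ ≠ u₂ := fun h => h₁₂ (by rw [h])
  have n₁₃ : u₁ ≠ u₃ := fun h => h₁₃ (by rw [h])
  have n₂₃ : u₂ ≠ u₃ := fun h => h₂₃ (by rw [h])
  obtain ⟨w₁, v₁, l₁⟩ := exists_other_neighbor (hdeg u₁ (memR k₁)) v
  obtain ⟨w₂, v₂, l₂⟩ := exists_other_neighbor (hdeg u₂ (memR k₂)) v
  obtain ⟨w₃, v₃, l₃⟩ := exists_other_neighbor (hdeg u₃ (memR k₃)) v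
  obtain ⟨x, hx, lx⟩ := exists_other_neighbor (hdeg w₁ (memR l₁)) u₁
  -- A neighbour of `v` and a vertex at the second level never coincide (no triangle).
  have uw : ∀ {u u' w}, s(v, u) ∈ S → s(v, u') ∈ S → s(u, w) ∈ S → w ≠ u' := by
    rintro u u' w hu hu' hw rfl
    exact no_triangle hg (hS _ _ hu) (hS _ _ hw) (hS _ _ hu').symm
  -- Vertices at the second level with different parents differ (no four-cycle).
  have ww : ∀ {u u' w w'}, s(v, u) ∈ S → s(v, u') ∈ S → s(u, w) ∈ S → s(u', w') ∈ S →
      u ≠ u' → w ≠ v → w ≠ w' := by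
    rintro u u' w w' hu hu' hw hw' hne hwv rfl
    exact no_four_cycle hg (hS _ _ hu) (hS _ _ hw) (hS _ _ hw').symm (hS _ _ hu').symm hwv.symm hne
  have xv : x ≠ v := by
    rintro rfl
    exact no_triangle hg (hS _ _ k₁) (hS _ _ l₁) (hS _ _ lx)
  have xu : ∀ {u'}, s(v, u') ∈ S → u₁ ≠ u' → x ≠ u' := by
    rintro u' hu' hne rfl
    exact no_four_cycle hg (hS _ _ k₁) (hS _ _ l₁) (hS _ _ lx) (hS _ _ hu').symm v₁.symm hne
  have xw : ∀ {u' w'}, s(v, u') ∈ S → s(u', w') ∈ S → u₁ ≠ u' → w' ≠ v → x ≠ w' := by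
    rintro u' w' hu' hw' hne hwv rfl
    exact no_five_cycle hg (hS _ _ k₁) (hS _ _ l₁) (hS _ _ lx) (hS _ _ hw').symm
      (hS _ _ hu').symm v₁.symm hwv.symm hx.symm hne (uw k₁ hu' l₁)
  have vu₁ := (hS _ _ k₁).ne
  have vu₂ := (hS _ _ k₂).ne
  have vu₃ := (hS _ _ k₃).ne
  have wx := (hS _ _ lx).ne
  have hcard : ({v, u₁, u₂, u₃, w₁, w₂, w₃, x} : Finset V).card = 8 := by
    have := uw k₁ k₁ l₁; have := uw k₁ k₂ l₁; have := uw k₁ k₃ l₁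
    have := uw k₂ k₁ l₂; have := uw k₂ k₂ l₂; have := uw k₂ k₃ l₂
    have := uw k₃ k₁ l₃; have := uw k₃ k₂ l₃; have := uw k₃ k₃ l₃
    have := ww k₁ k₂ l₁ l₂ n₁₂ v₁; have := ww k₁ k₃ l₁ l₃ n₁₃ v₁
    have := ww k₂ k₃ l₂ l₃ n₂₃ v₂
    have := xu k₂ n₁₂; have := xu k₃ n₁₃
    have := xw k₂ l₂ n₁₂ v₂; have := xw k₃ l₃ n₁₃ v₃
    clear uw ww xu xw hdeg hS memL memR
    repeat rw [Finset.card_insert_of_notMem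
      (by simp only [Finset.mem_insert, Finset.mem_singleton]; grind)]
    rw [Finset.card_singleton]
  rw [← hcard]
  apply Finset.card_le_card
  intro y hy
  simp only [Finset.mem_insert, Finset.mem_singleton] at hy
  rcases hy with rfl | rfl | rfl | rfl | rfl | rfl | rfl | rfl
  exacts [memL k₁, memR k₁, memR k₂, memR k₃, memR l₁, memR l₂, memR l₃, memR lx]

lemma card_le_card_spanned {G : SimpleGraph V} (hg : 6 ≤ G.girth) (S : Finset (Sym2 V)) :
    (∀ e ∈ S, e ∈ G.edgeSet) → S.card ≤ 8 → S.card ≤ (spanned S).card := by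
  induction S using Finset.strongInduction with
  | H S ih =>
    intro hS h8
    by_cases hdeg : ∀ v ∈ spanned S, 2 ≤ (S.filter (v ∈ ·)).card
    · by_cases h3 : ∃ v, 2 < (S.filter (v ∈ ·)).card
      · obtain ⟨v, hv⟩ := h3
        exact h8.trans (eight_le_card_spanned hg (fun a b h => hS _ h) hdeg hv)
      · push Not at h3
        have h := two_mul_card_eq_sum fun e he => G.not_isDiag_of_mem_edgeSet (hS e he)
        have h' := Finset.sum_le_card_nsmul (spanned S) _ 2 fun v _ => h3 v
        rw [smul_eq_mul] at h'
        omega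
    · push Not at hdeg
      obtain ⟨v, hv, hlt⟩ := hdeg
      obtain ⟨e, he, hve⟩ := mem_spanned.1 hv
      have hsub : spanned (S.erase e) ⊆ (spanned S).erase v := by
        intro y hy
        obtain ⟨f, hf, hyf⟩ := mem_spanned.1 hy
        obtain ⟨hfe, hfS⟩ := Finset.mem_erase.1 hf
        refine Finset.mem_erase.2 ⟨?_, mem_spanned.2 ⟨f, hfS, hyf⟩⟩
        -- `v` lies on no edge of `S` besides `e`, since its degree is below `2`.
        rintro rfl
        exact hfe (Finset.card_le_one.1 (Nat.le_of_lt_succ hlt) f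
          (Finset.mem_filter.2 ⟨hfS, hyf⟩) e (Finset.mem_filter.2 ⟨he, hve⟩))
      have h1 := Finset.card_le_card hsub
      have h2 := Finset.card_erase_add_one he
      have h3 := Finset.card_erase_add_one hv
      have h4 := ih (S.erase e) (Finset.erase_ssubset he)
        (fun f hf => hS f (Finset.mem_of_mem_erase hf)) (by omega)
      omega

end Spanned

/-- For every `6 ≤ k ≤ 8`, every simple graph of girth at least `6` has the property
that every collection of `i` distinct edges spans at least `i` vertices, for all
`1 ≤ i ≤ k`. -/
theorem statement15 {V : Type*} [Fintype V] [DecidableEq V] (G : SimpleGraph V)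
    [DecidableRel G.Adj] (k : ℕ) (hk₁ : 6 ≤ k) (hk₂ : k ≤ 8) (hg : (6 : ℕ∞) ≤ G.girth) :
    ∀ i : ℕ, 1 ≤ i → i ≤ k → ∀ S ⊆ G.edgeFinset, S.card = i →
      i ≤ (Finset.univ.filter fun v : V => ∃ e ∈ S, v ∈ e).card := by
  rintro i - hik S hS rfl
  exact card_le_card_spanned (by exact_mod_cast hg) S
    (fun e he => SimpleGraph.mem_edgeFinset.1 (hS he)) (hik.trans hk₂)
end
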